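/- arXiv:1501.00397 — 6 statements merged into one kernel-verified Lean document; each statement's English description precedes it below -/
import Mathlib

section
/- Let q be a prime power and n ≥ 3 an integer with not (n = 3 and q = 4). Then there exists a primitive element α of F_{q^n} with Tr_{q^n|q}(α) = 0. -/
/-- `α` is a primitive element of the finite field `E`: it generates the multiplicative
group `Eˣ`. -/
def IsPrimitiveElem {E : Type*} [Field E] (α : E) : Prop :=
  ∀ x : E, x ≠ 0 → ∃ k : ℕ, α ^ k = x


section FieldPart

set_option linter.unusedSectionVars false

open Finset

variable {F E : Type*} [Field F] [Fintype F] [Field E] [Fintype E] [Algebra F E]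

lemma pz_trace_ne (w : E) (hw : w ≠ 0) : ∃ y : E, Algebra.trace F E (w * y) ≠ 0 := by
  by_contra! h
  have htr := (traceForm_nondegenerate F E).1 w
  simp_rw [Algebra.traceForm_apply] at htr
  exact hw (htr h)

lemma pz_card_ker {V : Type*} [AddCommGroup V] [Module F V] [Fintype V] (f : E →ₗ[F] V)
    (hf : Function.Surjective f) :
    Fintype.card E = Fintype.card V * Nat.card {x : E // f x = 0} := by
  have h := f.toAddMonoidHom.ker.card_eq_card_quotient_mul_card_addSubgroup
  have e := QuotientAddGroup.quotientKerEquivOfSurjective f.toAddMonoidHom hf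
  rw [Nat.card_congr e.toEquiv] at h
  rw [← Nat.card_eq_fintype_card, ← Nat.card_eq_fintype_card, h]
  rfl

lemma pz_card_one : Fintype.card E =
    Fintype.card F * Nat.card {x : E // Algebra.trace F E x = 0} := by
  exact pz_card_ker (Algebra.trace F E) (Algebra.trace_surjective F E)

lemma pz_card_two (z : E) (hz : ∀ c : F, algebraMap F E c ≠ z) : Fintype.card E =
    Fintype.card F ^ 2 *
      Nat.card {x : E // Algebra.trace F E x = 0 ∧ Algebra.trace F E (z * x) = 0} := by
  let f : E →ₗ[F] (F × F) :=
    (Algebra.trace F E).prod ((Algebra.trace F E) ∘ₗ (LinearMap.mulLeft F z))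
  have hf : Function.Surjective f := by
    rw [← LinearMap.range_eq_top]
    by_contra hne
    obtain ⟨g, hg0, hg⟩ := Submodule.exists_le_ker_of_lt_top _ (lt_top_iff_ne_top.mpr hne)
    have key : ∀ a b : F, g (a, b) = a * g (1, 0) + b * g (0, 1) := by
      intro a b
      have : ((a, b) : F × F) = a • (1, 0) + b • (0, 1) := by simp
      rw [this, map_add, map_smul, map_smul]; simp
    have h2 : ∀ y : E, Algebra.trace F E
        ((algebraMap F E (g (1, 0)) + algebraMap F E (g (0, 1)) * z) * y) = 0 := by
      intro y
      have h3 : g (f y) = 0 := hg ⟨y, rfl⟩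
      have h4 : f y = (Algebra.trace F E y, Algebra.trace F E (z * y)) := rfl
      rw [h4, key] at h3
      rw [add_mul, mul_assoc, map_add, ← Algebra.smul_def, ← Algebra.smul_def, map_smul, map_smul,
        smul_eq_mul, smul_eq_mul]
      linear_combination h3
    have h5 : algebraMap F E (g (1, 0)) + algebraMap F E (g (0, 1)) * z = 0 := by
      by_contra h6
      obtain ⟨y, hy⟩ := pz_trace_ne (F := F) _ h6
      exact hy (h2 y)
    have h7 : g (0, 1) = 0 := by
      by_contra h8
      apply hz (-(g (1, 0)) / g (0, 1))
      have : algebraMap F E (g (0, 1)) ≠ 0 := by simpa using h8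
      rw [map_div₀, map_neg, div_eq_iff this]
      linear_combination -h5
    have h9 : g (1, 0) = 0 := by
      simpa [h7] using h5
    apply hg0
    ext <;> simp [h7, h9]
  have := pz_card_ker f hf
  rw [Fintype.card_prod] at this
  rw [this, sq]
  congr 1
  apply Nat.card_congr
  apply Equiv.subtypeEquivRight
  intro x
  have h4 : f x = (Algebra.trace F E x, Algebra.trace F E (z * x)) := rfl
  rw [h4, Prod.mk_eq_zero]

/-- indicator of trace zero -/
noncomputable def pzH (F : Type*) {E : Type*} [Field F] [Field E] [Algebra F E] (x : E) : ℂ :=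
  open Classical in if Algebra.trace F E x = 0 then 1 else 0

lemma pzH_star (x : E) : star (pzH F x) = pzH F x := by
  unfold pzH; split_ifs <;> simp

open Classical in
lemma pz_M (a : ℕ) (ha : Fintype.card E = Fintype.card F ^ 2 * a) (z : E) (hz : z ≠ 0) :
    ∑ y : E, (if y = 0 then 0 else pzH F (z * y) * pzH F y) =
      ((a : ℂ) - 1) + if (∃ c : F, algebraMap F E c = z) then
        ((Fintype.card F : ℂ) * a - a) else 0 := by
  have hq : 0 < Fintype.card F := Fintype.card_pos
  have h1 : ∑ y : E, (if y = 0 then 0 else pzH F (z * y) * pzH F y) =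
     (Nat.card {x : E // Algebra.trace F E x = 0 ∧ Algebra.trace F E (z * x) = 0} : ℂ) - 1 := by
    have : ∀ y : E, (if y = 0 then 0 else pzH F (z * y) * pzH F y) =
        (if (Algebra.trace F E y = 0 ∧ Algebra.trace F E (z * y) = 0) then (1 : ℂ) else 0)
          - if y = 0 then 1 else 0 := by
      intro y
      unfold pzH
      by_cases h0 : y = 0
      · simp [h0]
      · by_cases h1 : Algebra.trace F E y = 0 <;> by_cases h2 : Algebra.trace F E (z * y) = 0 <;>
          simp [h0, h1, h2]
    rw [Finset.sum_congr rfl (fun y _ => this y), Finset.sum_sub_distrib, Finset.sum_boole,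
      Nat.card_eq_fintype_card, Fintype.card_subtype]
    simp
  rw [h1]
  split_ifs with hc
  · obtain ⟨c, rfl⟩ := hc
    have hc0 : c ≠ 0 := by rintro rfl; simp at hz
    have e : Nat.card {x : E // Algebra.trace F E x = 0 ∧
        Algebra.trace F E (algebraMap F E c * x) = 0} =
        Nat.card {x : E // Algebra.trace F E x = 0} := by
      apply Nat.card_congr
      apply Equiv.subtypeEquivRight
      intro x
      rw [← Algebra.smul_def, map_smul, smul_eq_mul]
      constructor
      · exact fun h => h.1
      · exact fun h => ⟨h, by rw [h, mul_zero]⟩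
    rw [e]
    have h2 := pz_card_one (F := F) (E := E)
    rw [ha, sq, mul_assoc] at h2
    have h3 := Nat.eq_of_mul_eq_mul_left hq h2
    rw [← h3]; push_cast; ring
  · push Not at hc
    have h2 := pz_card_two z hc
    rw [ha] at h2
    have h3 := Nat.eq_of_mul_eq_mul_left (pow_pos hq 2) h2
    rw [← h3]; ring

lemma pz_charsum (a : ℕ) (ha : Fintype.card E = Fintype.card F ^ 2 * a) (χ : MulChar E ℂ)
    (hχ : χ ≠ 1) :
    ‖∑ x : E, pzH F x * χ x‖ ≤ ((Fintype.card F : ℝ) - 1) * √a := by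
  classical
  have hq : 1 < Fintype.card F := Fintype.one_lt_card
  have hq' : (1 : ℝ) < Fintype.card F := by exact_mod_cast hq
  set S := ∑ x : E, pzH F x * χ x with hS
  have h1 : S * star S = ∑ z : E, χ z *
      ∑ y : E, (if y = 0 then 0 else pzH F (z * y) * pzH F y) := by
    rw [hS, star_sum, Finset.mul_sum]
    simp_rw [Finset.mul_sum]
    rw [Finset.sum_comm (γ := E) (s := univ) (t := univ) (f := fun z y => χ z * _)]
    refine Finset.sum_congr rfl fun y _ => ?_
    by_cases hy : y = 0
    · simp [hy, MulChar.map_zero]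
    · rw [Finset.sum_mul]
      rw [← Equiv.sum_comp (Equiv.mulRight₀ y hy)]
      refine Finset.sum_congr rfl fun z _ => ?_
      have hmr : (Equiv.mulRight₀ y hy) z = z * y := rfl
      simp only [hmr, star_mul', pzH_star, hy, if_false, map_mul]
      have : χ y * star (χ y) = 1 := by
        rw [MulChar.star_apply', MulChar.inv_apply_eq_inv']
        exact mul_inv_cancel₀ (IsUnit.ne_zero (IsUnit.map χ (Ne.isUnit hy)))
      linear_combination (pzH F (z*y) * pzH F y * χ z) * this
  have h2 : S * star S = ((Fintype.card F : ℂ) * a - a) * ∑ c : F, χ (algebraMap F E c) := by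
    rw [h1]
    have : ∀ z : E, χ z * ∑ y : E, (if y = 0 then 0 else pzH F (z * y) * pzH F y) =
        χ z * ((a : ℂ) - 1) + ((Fintype.card F : ℂ) * a - a) *
          (if (∃ c : F, algebraMap F E c = z) then χ z else 0) := by
      intro z
      by_cases hz : z = 0
      · have : χ z = 0 := by rw [hz]; exact MulChar.map_zero χ
        simp [this]
      · rw [pz_M a ha z hz]; split_ifs <;> ring
    rw [Finset.sum_congr rfl (fun z _ => this z), Finset.sum_add_distrib, ← Finset.sum_mul,
      MulChar.sum_eq_zero_of_ne_one hχ, zero_mul, zero_add, ← Finset.mul_sum]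
    congr 1
    rw [← Finset.sum_filter]
    have : (univ.filter fun z : E => ∃ c : F, algebraMap F E c = z) =
        univ.image (algebraMap F E) := by ext; simp
    rw [this, Finset.sum_image (fun x _ y _ h => (algebraMap F E).injective h)]
  have h3 : ‖∑ c : F, χ (algebraMap F E c)‖ ≤ (Fintype.card F : ℝ) - 1 := by
    rw [← Finset.add_sum_erase univ _ (Finset.mem_univ (0 : F))]
    rw [map_zero, MulChar.map_zero, zero_add]
    refine (norm_sum_le_of_le (n := fun _ => (1 : ℝ)) _ ?_).trans ?_
    · intro c hc
      have hc : c ≠ 0 := by simpa using hc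
      have hu : IsUnit (algebraMap F E c) := by
        rw [isUnit_iff_ne_zero]; simpa using hc
      obtain ⟨u, hu⟩ := hu
      rw [← hu]
      exact (Complex.norm_eq_one_of_mem_rootsOfUnity (χ.apply_mem_rootsOfUnity u)).le
    · rw [Finset.sum_const, Finset.card_erase_of_mem (Finset.mem_univ _), Finset.card_univ]
      simp [Nat.cast_sub hq.le]
  have h4 : ‖S‖ ^ 2 ≤ (((Fintype.card F : ℝ) - 1) * √a) ^ 2 := by
    have : ‖S * star S‖ = ‖S‖ ^ 2 := by rw [norm_mul, norm_star, sq]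
    rw [← this, h2, norm_mul, mul_pow, Real.sq_sqrt (Nat.cast_nonneg a)]
    have h5 : ‖((Fintype.card F : ℂ) * a - a)‖ = ((Fintype.card F : ℝ) - 1) * a := by
      have : ((Fintype.card F : ℂ) * a - a) = (((((Fintype.card F : ℝ) - 1) * a : ℝ)) : ℂ) := by
        push_cast; ring
      rw [this, Complex.norm_real, Real.norm_of_nonneg]
      exact mul_nonneg (by linarith) (Nat.cast_nonneg a)
    rw [h5]
    calc _ ≤ ((Fintype.card F : ℝ) - 1) * a * ((Fintype.card F : ℝ) - 1) := by
          gcongr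
      _ = _ := by ring
  exact le_of_sq_le_sq h4 (by have := Real.sqrt_nonneg (a : ℝ); nlinarith)

lemma pz_sum_one (a : ℕ) (ha : Fintype.card E = Fintype.card F ^ 2 * a) :
    ∑ x : E, pzH F x * (1 : MulChar E ℂ) x = (Fintype.card F : ℂ) * a - 1 := by
  classical
  have := pz_M (F := F) a ha (1 : E) one_ne_zero
  rw [if_pos ⟨1, map_one _⟩] at this
  have e : ∀ y : E, pzH F y * (1 : MulChar E ℂ) y =
      (if y = 0 then 0 else pzH F (1 * y) * pzH F y) := by
    intro y
    by_cases hy : y = 0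
    · subst hy; simp [MulChar.map_zero]
    · rw [MulChar.one_apply (Ne.isUnit hy), if_neg hy, one_mul]
      unfold pzH; split_ifs <;> simp
  rw [Finset.sum_congr rfl (fun y _ => e y), this]; ring

end FieldPart

section SievePart

open Finset

set_option linter.unusedSectionVars false

variable {F E : Type*} [Field F] [Fintype F] [Field E] [Fintype E] [Algebra F E]

/-- the indicator of `ψ p x ≠ 1` -/
noncomputable def pzG {E : Type*} [Field E] (ψ : ℕ → MulChar E ℂ) (p : ℕ) (x : E) : ℂ :=
  open Classical in if ψ p x = 1 then 0 else 1

/-- the weighted sums of the sieve -/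
noncomputable def pzL (F : Type*) {E : Type*} [Field F] [Field E] [Fintype E] [Algebra F E]
    (ψ : ℕ → MulChar E ℂ) (χ : MulChar E ℂ) (K : Finset ℕ) : ℂ :=
  ∑ x : E, pzH F x * χ x * ∏ p ∈ K, pzG ψ p x

lemma pz_geom (ψ : ℕ → MulChar E ℂ) (p : ℕ) (hp : p.Prime) (hψ : orderOf (ψ p) = p)
    (χ : MulChar E ℂ) (x : E) :
    χ x * pzG ψ p x = χ x - (1 / p : ℂ) * ∑ t ∈ range p, (χ * ψ p ^ t) x := by
  have hp0 : (p : ℂ) ≠ 0 := by exact_mod_cast hp.ne_zero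
  by_cases hx : x = 0
  · subst hx; simp [MulChar.map_zero]
  · have hpow : ∀ t, (χ * ψ p ^ t) x = χ x * (ψ p x) ^ t := by
      intro t
      rw [MulChar.mul_apply]
      congr 1
      have hu : IsUnit x := Ne.isUnit hx
      obtain ⟨u, rfl⟩ := hu
      rw [MulChar.pow_apply_coe]
    simp_rw [hpow]
    rw [← Finset.mul_sum]
    unfold pzG
    split_ifs with h
    · simp [h]; field_simp; simp
    · have h1 : (ψ p x) ^ p = 1 := by
        obtain ⟨u, rfl⟩ := Ne.isUnit hx
        rw [← MulChar.pow_apply_coe]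
        have : ψ p ^ p = 1 := by
          have := pow_orderOf_eq_one (ψ p)
          rwa [hψ] at this
        rw [this, MulChar.one_apply_coe]
      have : ∑ t ∈ range p, (ψ p x) ^ t = 0 := by
        have := mul_geom_sum (ψ p x) p
        rw [h1, sub_self] at this
        exact (mul_eq_zero.mp this).resolve_left (sub_ne_zero.mpr h)
      simp [this]

lemma pz_step (ψ : ℕ → MulChar E ℂ) (p : ℕ) (hp : p.Prime) (hψ : orderOf (ψ p) = p)
    (χ : MulChar E ℂ) (K : Finset ℕ) (hpK : p ∉ K) :
    pzL F ψ χ (insert p K) = (1 - 1 / p : ℂ) * pzL F ψ χ K -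
      (1 / p : ℂ) * ∑ t ∈ Ico 1 p, pzL F ψ (χ * ψ p ^ t) K := by
  have h1 : pzL F ψ χ (insert p K) = pzL F ψ χ K -
      (1 / p : ℂ) * ∑ t ∈ range p, pzL F ψ (χ * ψ p ^ t) K := by
    unfold pzL
    rw [Finset.sum_comm, Finset.mul_sum, ← Finset.sum_sub_distrib]
    refine Finset.sum_congr rfl fun x _ => ?_
    rw [Finset.prod_insert hpK, ← Finset.sum_mul, ← Finset.mul_sum]
    linear_combination (pzH F x * ∏ p ∈ K, pzG ψ p x) * pz_geom ψ p hp hψ χ x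
  rw [h1, Finset.range_eq_Ico, Finset.sum_eq_sum_Ico_succ_bot hp.pos]
  simp only [pow_zero, mul_one, zero_add]
  ring

/-- the density -/
noncomputable def pzθ (K : Finset ℕ) : ℝ := ∏ p ∈ K, (1 - 1 / (p : ℝ))

lemma pz_norm_tail (p : ℕ) (hp : p.Prime) (f : ℕ → ℂ)
    (C : ℝ) (hf : ∀ t ∈ Ico 1 p, ‖f t‖ ≤ C) :
    ‖(1 / p : ℂ) * ∑ t ∈ Ico 1 p, f t‖ ≤ (1 - 1 / (p : ℝ)) * C := by
  have hp0 : (0 : ℝ) < p := by exact_mod_cast hp.pos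
  rw [norm_mul]
  have h1 : ‖(1 / p : ℂ)‖ = 1 / (p : ℝ) := by simp
  have h2 : ‖∑ t ∈ Ico 1 p, f t‖ ≤ ((p : ℝ) - 1) * C := by
    refine (norm_sum_le_of_le _ hf).trans ?_
    rw [Finset.sum_const, Nat.card_Ico, nsmul_eq_mul, Nat.cast_sub hp.one_lt.le, Nat.cast_one]
  rw [h1]
  calc 1 / (p : ℝ) * ‖∑ t ∈ Ico 1 p, f t‖ ≤ 1 / (p : ℝ) * (((p : ℝ) - 1) * C) := by gcongr
    _ = _ := by field_simp

lemma pz_theta_pos (K : Finset ℕ) (hK : ∀ p ∈ K, p.Prime) : 0 < pzθ K := by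
  unfold pzθ
  refine Finset.prod_pos fun p hp => ?_
  have : (1 : ℝ) < p := by exact_mod_cast (hK p hp).one_lt
  rw [sub_pos, div_lt_one (by linarith)]; exact this

lemma pz_ne_one (ψ χ : MulChar E ℂ) (p m t : ℕ) (hp : p.Prime) (hψ : orderOf ψ = p)
    (hm : Nat.Coprime m p) (hχm : χ ^ m = 1) (ht : t ∈ Ico 1 p) : χ * ψ ^ t ≠ 1 := by
  intro h
  have hψp : ψ ^ p = 1 := hψ ▸ pow_orderOf_eq_one ψ
  have h1 : χ ^ p = 1 := by
    have : (χ * ψ ^ t) ^ p = 1 := by rw [h, one_pow]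
    rwa [mul_pow, ← pow_mul, mul_comm t p, pow_mul, hψp, one_pow, mul_one] at this
  have h2 : χ = 1 := by
    have := orderOf_dvd_of_pow_eq_one h1
    have h3 := orderOf_dvd_of_pow_eq_one hχm
    have := Nat.dvd_gcd h3 this
    rw [hm] at this
    exact orderOf_eq_one_iff.mp (Nat.dvd_one.mp this)
  rw [h2, one_mul] at h
  have := orderOf_dvd_of_pow_eq_one h
  rw [hψ] at this
  rw [Finset.mem_Ico] at ht
  exact absurd (Nat.le_of_dvd (by omega) this) (by omega)

lemma pz_bound_ne (B : ℝ) (hB : ∀ χ : MulChar E ℂ, χ ≠ 1 → ‖∑ x : E, pzH F x * χ x‖ ≤ B)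
    (ψ : ℕ → MulChar E ℂ) (K : Finset ℕ) (hK : ∀ p ∈ K, p.Prime)
    (hψ : ∀ p ∈ K, orderOf (ψ p) = p) :
    ∀ (χ : MulChar E ℂ) (m : ℕ), χ ^ m = 1 → (∀ p ∈ K, Nat.Coprime m p) → χ ≠ 1 →
      ‖pzL F ψ χ K‖ ≤ B * pzθ K * 2 ^ K.card := by
  induction K using Finset.induction_on with
  | empty =>
    intro χ m _ _ hχ
    simpa [pzL, pzθ] using hB χ hχ
  | insert p K hpK ih =>
    intro χ m hm hcop hχ
    have hp := hK p (mem_insert_self _ _)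
    have hψp := hψ p (mem_insert_self _ _)
    have ih' := ih (fun r hr => hK r (mem_insert_of_mem hr)) (fun r hr => hψ r (mem_insert_of_mem hr))
    rw [pz_step ψ p hp hψp χ K hpK]
    have h1 := ih' χ m hm (fun r hr => hcop r (mem_insert_of_mem hr)) hχ
    have h2 : ∀ t ∈ Ico 1 p, ‖pzL F ψ (χ * ψ p ^ t) K‖ ≤ B * pzθ K * 2 ^ K.card := by
      intro t ht
      refine ih' _ (m * p) ?_ ?_ ?_
      · have hψp1 : ψ p ^ p = 1 := by have := pow_orderOf_eq_one (ψ p); rwa [hψp] at this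
        rw [mul_pow, pow_mul, hm, one_pow, one_mul, ← pow_mul,
          show t * (m * p) = p * (t * m) by ring, pow_mul, hψp1, one_pow]
      · intro r hr
        refine Nat.Coprime.mul_left (hcop r (mem_insert_of_mem hr)) ?_
        rw [Nat.coprime_primes hp (hK r (mem_insert_of_mem hr))]
        rintro rfl; exact hpK hr
      · exact pz_ne_one _ _ p m t hp hψp (hcop p (mem_insert_self _ _)) hm ht
    have h3 := pz_norm_tail p hp _ _ h2
    have hp1 : (1 : ℝ) < p := by exact_mod_cast hp.one_lt
    have hpp : 0 < 1 - 1 / (p : ℝ) := by rw [sub_pos, div_lt_one (by linarith)]; exact hp1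
    have h4 : ‖(1 - 1 / p : ℂ) * pzL F ψ χ K‖ ≤ (1 - 1 / (p : ℝ)) * (B * pzθ K * 2 ^ K.card) := by
      rw [norm_mul]
      have : ‖(1 - 1 / p : ℂ)‖ = 1 - 1 / (p : ℝ) := by
        have : (1 - 1 / p : ℂ) = ((1 - 1 / (p : ℝ) : ℝ) : ℂ) := by push_cast; rfl
        rw [this, Complex.norm_real, Real.norm_of_nonneg hpp.le]
      rw [this]; gcongr
    refine (norm_sub_le _ _).trans ((add_le_add h4 h3).trans (le_of_eq ?_))
    rw [Finset.card_insert_of_notMem hpK, pow_succ]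
    unfold pzθ; rw [Finset.prod_insert hpK]; ring

lemma pz_step_one (B : ℝ) (hB : ∀ χ : MulChar E ℂ, χ ≠ 1 → ‖∑ x : E, pzH F x * χ x‖ ≤ B)
    (ψ : ℕ → MulChar E ℂ) (K : Finset ℕ) (hK : ∀ p ∈ K, p.Prime)
    (hψ : ∀ p ∈ K, orderOf (ψ p) = p) (p : ℕ) (hp : p.Prime) (hψp : orderOf (ψ p) = p)
    (hpK : p ∉ K) :
    ‖pzL F ψ 1 (insert p K) - (1 - 1 / p : ℂ) * pzL F ψ 1 K‖ ≤
      (1 - 1 / (p : ℝ)) * (B * pzθ K * 2 ^ K.card) := by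
  rw [pz_step ψ p hp hψp 1 K hpK, sub_sub_cancel_left, norm_neg]
  refine pz_norm_tail p hp _ _ fun t ht => ?_
  refine pz_bound_ne B hB ψ K hK hψ _ p ?_ ?_ ?_
  · have hψp1 : ψ p ^ p = 1 := by have := pow_orderOf_eq_one (ψ p); rwa [hψp] at this
    rw [one_mul, ← pow_mul, mul_comm, pow_mul, hψp1, one_pow]
  · intro r hr
    rw [Nat.coprime_primes hp (hK r hr)]
    rintro rfl; exact hpK hr
  · exact pz_ne_one _ _ p 1 t hp hψp (Nat.coprime_one_left p) (one_pow _) ht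

lemma pz_bound_one (B k : ℝ)
    (hB : ∀ χ : MulChar E ℂ, χ ≠ 1 → ‖∑ x : E, pzH F x * χ x‖ ≤ B)
    (hk : ∑ x : E, pzH F x * (1 : MulChar E ℂ) x = (k : ℂ))
    (ψ : ℕ → MulChar E ℂ) (K : Finset ℕ) (hK : ∀ p ∈ K, p.Prime)
    (hψ : ∀ p ∈ K, orderOf (ψ p) = p) :
    ‖pzL F ψ 1 K - (pzθ K * k : ℝ)‖ ≤ B * pzθ K * (2 ^ K.card - 1) := by
  induction K using Finset.induction_on with
  | empty => simp [pzL, pzθ, hk]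
  | insert p K hpK ih =>
    have hp := hK p (mem_insert_self _ _)
    have hψp := hψ p (mem_insert_self _ _)
    have hK' := (fun r hr => hK r (mem_insert_of_mem hr))
    have hψ' := (fun r hr => hψ r (mem_insert_of_mem hr))
    have h1 := ih hK' hψ'
    have h2 := pz_step_one B hB ψ K hK' hψ' p hp hψp hpK
    have hp1 : (1 : ℝ) < p := by exact_mod_cast hp.one_lt
    have hpp : 0 < 1 - 1 / (p : ℝ) := by rw [sub_pos, div_lt_one (by linarith)]; exact hp1
    have h4 : ‖(1 - 1 / p : ℂ) * (pzL F ψ 1 K - (pzθ K * k : ℝ))‖ ≤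
        (1 - 1 / (p : ℝ)) * (B * pzθ K * (2 ^ K.card - 1)) := by
      rw [norm_mul]
      have : ‖(1 - 1 / p : ℂ)‖ = 1 - 1 / (p : ℝ) := by
        have : (1 - 1 / p : ℂ) = ((1 - 1 / (p : ℝ) : ℝ) : ℂ) := by push_cast; rfl
        rw [this, Complex.norm_real, Real.norm_of_nonneg hpp.le]
      rw [this]; gcongr
    have h5 : pzL F ψ 1 (insert p K) - (pzθ (insert p K) * k : ℝ) =
        (pzL F ψ 1 (insert p K) - (1 - 1 / p : ℂ) * pzL F ψ 1 K) +
        (1 - 1 / p : ℂ) * (pzL F ψ 1 K - (pzθ K * k : ℝ)) := by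
      unfold pzθ; rw [Finset.prod_insert hpK]; push_cast; ring
    rw [h5]
    refine (norm_add_le _ _).trans ((add_le_add h2 h4).trans (le_of_eq ?_))
    rw [Finset.card_insert_of_notMem hpK, pow_succ]
    unfold pzθ; rw [Finset.prod_insert hpK]; ring

open Classical in
/-- elements counted by the sieve -/
noncomputable def pzA (F : Type*) {E : Type*} [Field F] [Field E] [Fintype E] [Algebra F E]
    (ψ : ℕ → MulChar E ℂ) (K : Finset ℕ) : Finset E :=
  univ.filter fun x => x ≠ 0 ∧ Algebra.trace F E x = 0 ∧ ∀ p ∈ K, ψ p x ≠ 1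

lemma pzL_eq (ψ : ℕ → MulChar E ℂ) (K : Finset ℕ) :
    pzL F ψ 1 K = (((pzA F ψ K).card : ℝ) : ℂ) := by
  classical
  unfold pzL pzA
  rw [Complex.ofReal_natCast, Finset.card_filter, Nat.cast_sum]
  refine Finset.sum_congr rfl fun x _ => ?_
  by_cases hx : x = 0
  · simp [hx, MulChar.map_zero]
  · rw [MulChar.one_apply (Ne.isUnit hx)]
    unfold pzH pzG
    by_cases h1 : Algebra.trace F E x = 0
    · by_cases h2 : ∀ p ∈ K, ψ p x ≠ 1
      · rw [Finset.prod_congr rfl (fun p hp => if_neg (h2 p hp))]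
        simp [hx, h1]
        exact fun p hp => h2 p hp
      · have h3 : ¬ (x ≠ 0 ∧ Algebra.trace F E x = 0 ∧ ∀ p ∈ K, ψ p x ≠ 1) := by tauto
        rw [if_neg h3]
        push Not at h2
        obtain ⟨p, hp, h⟩ := h2
        have h4 : (∏ p ∈ K, if ψ p x = 1 then (0 : ℂ) else 1) = 0 :=
          Finset.prod_eq_zero hp (if_pos h)
        rw [h4]; simp
    · simp [h1]

lemma pz_sieve (B k : ℝ)
    (hB : ∀ χ : MulChar E ℂ, χ ≠ 1 → ‖∑ x : E, pzH F x * χ x‖ ≤ B)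
    (hk : ∑ x : E, pzH F x * (1 : MulChar E ℂ) x = (k : ℂ))
    (ψ : ℕ → MulChar E ℂ) (K S : Finset ℕ) (hKS : Disjoint K S)
    (hK : ∀ p ∈ K ∪ S, p.Prime)
    (hψ : ∀ p ∈ K ∪ S, orderOf (ψ p) = p)
    (hδ : ∑ p ∈ S, 1 / (p : ℝ) ≤ 1)
    (hcrit : B * ((1 - ∑ p ∈ S, 1 / (p : ℝ)) * (2 ^ K.card - 1) +
      2 ^ K.card * (S.card - ∑ p ∈ S, 1 / (p : ℝ))) < (1 - ∑ p ∈ S, 1 / (p : ℝ)) * k) :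
    ∃ x : E, x ≠ 0 ∧ Algebra.trace F E x = 0 ∧ ∀ p ∈ K ∪ S, ψ p x ≠ 1 := by
  classical
  have hK1 : ∀ p ∈ K, p.Prime := fun p hp => hK p (mem_union_left _ hp)
  have hψ1 : ∀ p ∈ K, orderOf (ψ p) = p := fun p hp => hψ p (mem_union_left _ hp)
  set σ := ∑ p ∈ S, 1 / (p : ℝ) with hσ
  set N : Finset ℕ → ℝ := fun T => ((pzA F ψ T).card : ℝ) with hN
  have hθ := pz_theta_pos K hK1
  have h1 : pzθ K * k - B * pzθ K * (2 ^ K.card - 1) ≤ N K := by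
    have := pz_bound_one B k hB hk ψ K hK1 hψ1
    rw [pzL_eq, ← Complex.ofReal_sub, Complex.norm_real, Real.norm_eq_abs] at this
    have := (abs_le.mp this).1
    simp only [hN]; linarith
  have h2 : ∀ p ∈ S, N K - N (insert p K) ≤
      N K * (1 / (p : ℝ)) + (1 - 1 / (p : ℝ)) * (B * pzθ K * 2 ^ K.card) := by
    intro p hp
    have hpK : p ∉ K := fun h => Finset.disjoint_left.mp hKS h hp
    have := pz_step_one B hB ψ K hK1 hψ1 p (hK p (mem_union_right _ hp))
      (hψ p (mem_union_right _ hp)) hpK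
    rw [pzL_eq, pzL_eq, show (1 - 1 / p : ℂ) = ((1 - 1 / (p : ℝ) : ℝ) : ℂ) by push_cast; rfl,
      ← Complex.ofReal_mul, ← Complex.ofReal_sub, Complex.norm_real, Real.norm_eq_abs] at this
    have := (abs_le.mp this).1
    simp only [hN]; linarith
  have h3 : N K - ∑ p ∈ S, (N K - N (insert p K)) ≤ N (K ∪ S) := by
    have hsub : pzA F ψ K ⊆ pzA F ψ (K ∪ S) ∪
        S.biUnion (fun p => pzA F ψ K \ pzA F ψ (insert p K)) := by
      intro x hx
      simp only [pzA, mem_filter, mem_univ, true_and, mem_union, mem_biUnion, mem_sdiff,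
        mem_insert] at hx ⊢
      by_cases h : ∀ p ∈ S, ψ p x ≠ 1
      · left
        refine ⟨hx.1, hx.2.1, ?_⟩
        rintro p (hp | hp)
        · exact hx.2.2 p hp
        · exact h p hp
      · right
        push Not at h
        obtain ⟨p, hp, h⟩ := h
        exact ⟨p, hp, hx, fun hh => hh.2.2 p (Or.inl rfl) h⟩
    have hc := (Finset.card_le_card hsub).trans ((Finset.card_union_le _ _).trans
      (Nat.add_le_add_left Finset.card_biUnion_le _))
    have hd : ∀ p ∈ S, ((pzA F ψ K \ pzA F ψ (insert p K)).card : ℝ) = N K - N (insert p K) := by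
      intro p _
      have : pzA F ψ (insert p K) ⊆ pzA F ψ K := by
        intro x hx
        simp only [pzA, mem_filter, mem_univ, true_and, mem_insert] at hx ⊢
        exact ⟨hx.1, hx.2.1, fun r hr => hx.2.2 r (Or.inr hr)⟩
      rw [Finset.card_sdiff_of_subset this, Nat.cast_sub (Finset.card_le_card this)]
    have hc' : N K ≤ N (K ∪ S) + ∑ p ∈ S, ((pzA F ψ K \ pzA F ψ (insert p K)).card : ℝ) := by
      simp only [hN]; exact_mod_cast hc
    rw [Finset.sum_congr rfl hd] at hc'
    linarith
  have h4 : ∑ p ∈ S, (N K - N (insert p K)) ≤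
      N K * σ + (S.card - σ) * (B * pzθ K * 2 ^ K.card) := by
    refine (Finset.sum_le_sum h2).trans (le_of_eq ?_)
    rw [Finset.sum_add_distrib, ← Finset.mul_sum, ← Finset.sum_mul, Finset.sum_sub_distrib]
    simp [hσ]
  have h5 : 0 < N (K ∪ S) := by
    have h6 : (1 - σ) * (pzθ K * k - B * pzθ K * (2 ^ K.card - 1)) ≤ (1 - σ) * N K :=
      mul_le_mul_of_nonneg_left h1 (by linarith)
    have h7 := mul_lt_mul_of_pos_left hcrit hθ
    nlinarith
  have h6 : (pzA F ψ (K ∪ S)).Nonempty := by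
    rw [← Finset.card_pos]; simp only [hN] at h5; exact_mod_cast h5
  obtain ⟨x, hx⟩ := h6
  simp only [pzA, mem_filter, mem_univ, true_and] at hx
  exact ⟨x, hx⟩

end SievePart

section PrimitivePart

open Finset

set_option linter.unusedSectionVars false

variable {F E : Type*} [Field F] [Fintype F] [Field E] [Fintype E] [Algebra F E]

lemma pz_mem_range (x : E) (hx : x ^ Fintype.card F = x) : ∃ c : F, algebraMap F E c = x := by
  classical
  by_contra! h
  set q := Fintype.card F with hq
  have hq1 : 1 < q := Fintype.one_lt_card
  have hne := FiniteField.X_pow_card_sub_X_ne_zero E hq1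
  have hsub : insert x (univ.image (algebraMap F E)) ⊆
      (Polynomial.X ^ q - Polynomial.X : Polynomial E).roots.toFinset := by
    intro y hy
    rw [Multiset.mem_toFinset, Polynomial.mem_roots hne]
    rw [mem_insert, mem_image] at hy
    rcases hy with rfl | ⟨c, _, rfl⟩
    · simp [hx]
    · simp [← map_pow, hq, FiniteField.pow_card]
  have h1 := Finset.card_le_card hsub
  have h2 := Multiset.toFinset_card_le (Polynomial.X ^ q - Polynomial.X : Polynomial E).roots
  have h3 := Polynomial.card_roots' (Polynomial.X ^ q - Polynomial.X : Polynomial E)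
  rw [FiniteField.X_pow_card_sub_X_natDegree_eq E hq1] at h3
  rw [Finset.card_insert_of_notMem (by simpa using h),
    Finset.card_image_of_injective _ (algebraMap F E).injective, Finset.card_univ] at h1
  omega

/-- scaling an element that is not a `p`-th power for `p ∣ v` to a primitive one -/
lemma pz_scale (v : ℕ) (hv : Fintype.card E - 1 = v * (Fintype.card F - 1)) (x : E) (hx : x ≠ 0)
    (hnp : ∀ p : ℕ, p.Prime → p ∣ v → ¬ ∃ y : E, y ^ p = x) :
    ∃ c : F, IsPrimitiveElem (algebraMap F E c * x) := by
  classical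
  have hE1 : 1 < Fintype.card E := Fintype.one_lt_card
  have hF1 : 1 < Fintype.card F := Fintype.one_lt_card
  set N := Fintype.card E - 1 with hN
  have hN0 : 0 < N := by omega
  have hNcard : Nat.card Eˣ = N := by
    rw [Nat.card_eq_fintype_card, Fintype.card_units]
  obtain ⟨g, hg⟩ := IsCyclic.exists_generator (α := Eˣ)
  have hgo : orderOf g = N := by rw [orderOf_eq_card_of_forall_mem_zpowers hg, hNcard]
  have hpow : ∀ u : Eˣ, ∃ k : ℕ, g ^ k = u := by
    intro u
    exact (mem_powers_iff_mem_zpowers.mpr (hg u))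
  obtain ⟨k, hk⟩ := hpow (Units.mk0 x hx)
  have hkv : Nat.Coprime k v := by
    rw [Nat.coprime_iff_gcd_eq_one]
    by_contra hgcd
    obtain ⟨p, hp, hpd⟩ := Nat.exists_prime_and_dvd hgcd
    obtain ⟨j, hj⟩ := hpd.trans (Nat.gcd_dvd_left k v)
    apply hnp p hp (hpd.trans (Nat.gcd_dvd_right k v))
    refine ⟨((g ^ j : Eˣ) : E), ?_⟩
    have := congrArg (Units.val) hk
    rw [Units.val_mk0] at this
    rw [← this, hj, ← Units.val_pow_eq_pow_val, ← pow_mul, mul_comm j p]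
  have hvN : v ∣ N := ⟨_, hv⟩
  have hNne : NeZero N := ⟨hN0.ne'⟩
  obtain ⟨w, hw⟩ := ZMod.unitsMap_surjective hvN (ZMod.unitOfCoprime k hkv)
  set k' := (w : ZMod N).val with hk'
  have hcop : Nat.Coprime k' N := ZMod.val_coe_unit_coprime w
  have hmod : ((k' : ℕ) : ZMod v) = (k : ZMod v) := by
    have h1 := congrArg Units.val hw
    rw [ZMod.unitsMap_val, ZMod.coe_unitOfCoprime] at h1
    rw [← h1, hk', ZMod.natCast_val]
  have hmod' : ((k' : ℕ) : ℤ) ≡ k [ZMOD v] := by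
    rw [← ZMod.intCast_eq_intCast_iff]; exact_mod_cast hmod
  obtain ⟨j, hj⟩ := hmod'.symm.dvd
  have hc : ∃ c : F, algebraMap F E c = ((g ^ ((v : ℤ) * j) : Eˣ) : E) := by
    apply pz_mem_range
    have h1 : (g ^ ((v : ℤ) * j)) ^ (Fintype.card F - 1) = 1 := by
      rw [← zpow_natCast, ← zpow_mul]
      have : (v : ℤ) * j * ((Fintype.card F - 1 : ℕ) : ℤ) = (N : ℤ) * j := by
        rw [hv]; push_cast; ring
      rw [this, zpow_mul, zpow_natCast, ← hgo, pow_orderOf_eq_one, one_zpow]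
    have h2 : Fintype.card F = (Fintype.card F - 1) + 1 := by omega
    rw [h2, pow_succ, ← Units.val_pow_eq_pow_val, h1]; simp
  obtain ⟨c, hc⟩ := hc
  refine ⟨c, ?_⟩
  have hval : algebraMap F E c * x = ((g ^ k' : Eˣ) : E) := by
    rw [hc, ← Units.val_mk0 hx, ← hk, ← Units.val_mul]
    congr 1
    rw [← hj, ← zpow_natCast g k, ← zpow_add, ← zpow_natCast g k']
    congr 1; ring
  intro y hy
  rw [hval]
  have hord : orderOf (g ^ k') = N := by
    rw [orderOf_pow, hgo, Nat.gcd_comm, hcop, Nat.div_one]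
  have hgen : ∀ u : Eˣ, u ∈ Subgroup.zpowers (g ^ k') := by
    have : Subgroup.zpowers (g ^ k') = ⊤ := by
      apply Subgroup.eq_top_of_card_eq
      rw [Nat.card_zpowers, hord, hNcard]
    intro u; rw [this]; trivial
  obtain ⟨m, hm⟩ := mem_powers_iff_mem_zpowers.mpr (hgen (Units.mk0 y hy))
  refine ⟨m, ?_⟩
  have := congrArg Units.val hm
  simpa using this

/-- from a non-power of trace zero to the conclusion -/
lemma pz_finish (n : ℕ) (hrank : Module.finrank F E = n) (v : ℕ)
    (hv : Fintype.card E - 1 = v * (Fintype.card F - 1)) (x : E) (hx : x ≠ 0)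
    (hnp : ∀ p : ℕ, p.Prime → p ∣ v → ¬ ∃ y : E, y ^ p = x)
    (htr : Algebra.trace F E x = 0) :
    ∃ α : E, IsPrimitiveElem α ∧ ∑ i ∈ Finset.range n, α ^ (Fintype.card F) ^ i = 0 := by
  obtain ⟨c, hc⟩ := pz_scale v hv x hx hnp
  refine ⟨_, hc, ?_⟩
  have := FiniteField.algebraMap_trace_eq_sum_pow F E (algebraMap F E c * x)
  rw [hrank, Nat.card_eq_fintype_card] at this
  rw [← this, ← Algebra.smul_def, map_smul, htr, smul_zero, map_zero]

/-- sieve criterion -/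
theorem pz_criterion (n : ℕ) (hn : 2 ≤ n) (hrank : Module.finrank F E = n) (v : ℕ)
    (hv : v * (Fintype.card F - 1) = Fintype.card F ^ n - 1)
    (k : ℕ) (hk : v = Fintype.card F * k + 1)
    (K S : Finset ℕ) (hKS : Disjoint K S) (hKSv : K ∪ S = v.primeFactors)
    (hδ : ∑ p ∈ S, 1 / (p : ℝ) ≤ 1)
    (hcrit : √((Fintype.card F : ℝ) ^ (n - 2)) * ((1 - ∑ p ∈ S, 1 / (p : ℝ)) * (2 ^ K.card - 1) +
      2 ^ K.card * (S.card - ∑ p ∈ S, 1 / (p : ℝ))) < (1 - ∑ p ∈ S, 1 / (p : ℝ)) * k) :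
    ∃ α : E, IsPrimitiveElem α ∧ ∑ i ∈ Finset.range n, α ^ (Fintype.card F) ^ i = 0 := by
  classical
  have hF1 : 1 < Fintype.card F := Fintype.one_lt_card
  have hcardE : Fintype.card E = Fintype.card F ^ n := by
    rw [← hrank]; exact Module.card_eq_pow_finrank
  have hcard2 : Fintype.card E = Fintype.card F ^ 2 * Fintype.card F ^ (n - 2) := by
    rw [hcardE, ← pow_add]; congr 1; omega
  have hv' : Fintype.card E - 1 = v * (Fintype.card F - 1) := by rw [hcardE, hv]
  have hex : ∀ p : ℕ, ∃ χ : MulChar E ℂ, p ∈ v.primeFactors → orderOf χ = p := by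
    intro p
    by_cases hp : p ∈ v.primeFactors
    · have hpp := Nat.prime_of_mem_primeFactors hp
      have hpd := Nat.dvd_of_mem_primeFactors hp
      obtain ⟨χ, hχ⟩ := MulChar.exists_mulChar_orderOf E (R := ℂ) (n := p)
        (hpd.trans ⟨_, hv'⟩) (Complex.isPrimitiveRoot_exp p hpp.ne_zero)
      exact ⟨χ, fun _ => hχ⟩
    · exact ⟨1, fun h => absurd h hp⟩
  choose ψ hψ using hex
  have hB := pz_charsum (F := F) (E := E) _ hcard2
  have h1 := pz_sum_one (F := F) (E := E) _ hcard2
  have hqk : Fintype.card F * Fintype.card F ^ (n - 2) = (Fintype.card F - 1) * k + 1 := by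
    obtain ⟨r, hr⟩ : ∃ r, Fintype.card F = r + 1 := ⟨_, (Nat.sub_add_cancel hF1.le).symm⟩
    have h2 : Fintype.card F ^ n = Fintype.card F * (Fintype.card F * Fintype.card F ^ (n - 2)) := by
      rw [← hcardE, hcard2]; ring
    have h3 : v * (Fintype.card F - 1) + 1 = Fintype.card F ^ n := by
      rw [hv]; exact Nat.sub_add_cancel (Nat.one_le_pow _ _ (by omega))
    rw [h2, hk] at h3
    apply Nat.eq_of_mul_eq_mul_left (show 0 < Fintype.card F by omega)
    rw [← h3, hr, Nat.add_sub_cancel]; ring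
  have h1' : ∑ x : E, pzH F x * (1 : MulChar E ℂ) x =
      ((((Fintype.card F : ℝ) - 1) * k : ℝ) : ℂ) := by
    rw [h1]
    have : ((Fintype.card F * Fintype.card F ^ (n - 2) : ℕ) : ℂ) =
      (((Fintype.card F - 1) * k + 1 : ℕ) : ℂ) := by rw [hqk]
    push_cast [Nat.cast_sub hF1.le] at this ⊢
    rw [this]; ring
  have hq1 : (0 : ℝ) < (Fintype.card F : ℝ) - 1 := by
    have : (1 : ℝ) < Fintype.card F := by exact_mod_cast hF1
    linarith
  obtain ⟨x, hx0, htr, hx⟩ := pz_sieve _ _ hB h1' ψ K S hKS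
    (fun p hp => Nat.prime_of_mem_primeFactors (hKSv ▸ hp))
    (fun p hp => hψ p (hKSv ▸ hp)) hδ (by
      have := mul_lt_mul_of_pos_left hcrit hq1
      push_cast
      calc _ = _ := by ring
        _ < _ := this
        _ = _ := by ring)
  refine pz_finish n hrank v hv' x hx0 ?_ htr
  rintro p hp hpv ⟨y, rfl⟩
  have hv0 : v ≠ 0 := by omega
  have hpm : p ∈ v.primeFactors := Nat.mem_primeFactors.mpr ⟨hp, hpv, hv0⟩
  apply hx p (hKSv ▸ hpm)
  have hy : y ≠ 0 := by
    rintro rfl; exact hx0 (zero_pow hp.ne_zero)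
  have := pow_orderOf_eq_one (ψ p)
  rw [hψ p hpm] at this
  obtain ⟨u, rfl⟩ := Ne.isUnit hy
  rw [map_pow, ← MulChar.pow_apply_coe, this, MulChar.one_apply_coe]

end PrimitivePart

section NumericPart

open Finset

/-- the sieve condition as a property of `q` and `n` -/
def PZCrit (q n : ℕ) : Prop :=
  ∃ K S : Finset ℕ, Disjoint K S ∧ K ∪ S = (∑ i ∈ range n, q ^ i).primeFactors ∧
    ∑ p ∈ S, 1 / (p : ℝ) ≤ 1 ∧
    √((q : ℝ) ^ (n - 2)) * ((1 - ∑ p ∈ S, 1 / (p : ℝ)) * (2 ^ K.card - 1) +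
      2 ^ K.card * (S.card - ∑ p ∈ S, 1 / (p : ℝ))) <
      (1 - ∑ p ∈ S, 1 / (p : ℝ)) * ((∑ i ∈ range (n - 1), q ^ i : ℕ) : ℝ)

lemma pz_sqrt_lt (a X Y : ℕ) (h : X ^ 2 * a < Y ^ 2) : √(a : ℝ) * X < Y := by
  have h1 : ((X : ℝ) ^ 2 * a) < (Y : ℝ) ^ 2 := by exact_mod_cast h
  have h2 : (√(a : ℝ) * X) ^ 2 < (Y : ℝ) ^ 2 := by
    rw [mul_pow, Real.sq_sqrt (Nat.cast_nonneg a)]; linarith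
  exact lt_of_pow_lt_pow_left₀ 2 (Nat.cast_nonneg Y) h2

lemma pz_full (q n : ℕ)
    (h : (2 ^ (∑ i ∈ range n, q ^ i).primeFactors.card - 1) ^ 2 * q ^ (n - 2) <
      (∑ i ∈ range (n - 1), q ^ i) ^ 2) : PZCrit q n := by
  refine ⟨(∑ i ∈ range n, q ^ i).primeFactors, ∅, disjoint_empty_right _, union_empty _,
    by simp, ?_⟩
  have := pz_sqrt_lt _ _ _ h
  rw [Nat.cast_sub Nat.one_le_two_pow] at this
  simp only [sum_empty, card_empty]
  push_cast at this ⊢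
  simpa using this

/-- trial division -/
def pzpf : ℕ → ℕ → ℕ → List ℕ
  | 0, _, _ => [0]
  | f + 1, m, d => if m ≤ 1 then [] else if m < d * d then [m] else
      if m % d = 0 then d :: pzpf f (m / d) d else pzpf f m (d + 1)

lemma pzpf_spec (f : ℕ) : ∀ m d : ℕ, 1 ≤ m → 2 ≤ d → (∀ p, p.Prime → p ∣ m → d ≤ p) →
    0 ∉ pzpf f m d → ∀ p, p ∈ pzpf f m d ↔ p.Prime ∧ p ∣ m := by
  induction f with
  | zero => intro m d _ _ _ h; simp [pzpf] at h
  | succ f ih =>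
    intro m d hm hd hinv h0 p
    rw [pzpf] at h0 ⊢
    split_ifs at h0 ⊢ with h1 h2 h3
    · have : m = 1 := by omega
      subst this
      simp only [List.not_mem_nil, Nat.dvd_one, false_iff, not_and]
      rintro hp rfl; exact Nat.not_prime_one hp
    · have hmp : m.Prime := by
        by_contra hnp
        have h4 := Nat.minFac_sq_le_self (by omega) hnp
        have h5 := hinv _ (Nat.minFac_prime (by omega)) (Nat.minFac_dvd m)
        nlinarith
      rw [List.mem_singleton]
      constructor
      · rintro rfl; exact ⟨hmp, dvd_rfl⟩
      · rintro ⟨hp, hpm⟩; exact (Nat.prime_dvd_prime_iff_eq hp hmp).mp hpm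
    · have hdm := Nat.dvd_of_mod_eq_zero h3
      obtain ⟨e, rfl⟩ := hdm
      have hd0 : 0 < d := by omega
      rw [Nat.mul_div_cancel_left e hd0] at h0 ⊢
      have he : 1 ≤ e := by
        rcases Nat.eq_zero_or_pos e with rfl | h
        · simp at hm
        · exact h
      have hdp : d.Prime := by
        have h5 := hinv _ (Nat.minFac_prime (by omega : d ≠ 1))
          ((Nat.minFac_dvd d).trans (dvd_mul_right d e))
        have h6 := Nat.minFac_le hd0
        have h7 : d.minFac = d := le_antisymm h6 h5
        exact h7 ▸ Nat.minFac_prime (by omega : d ≠ 1)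
      rw [List.mem_cons] at h0 ⊢
      push Not at h0
      rw [ih e d he hd (fun p hp hpe => hinv p hp (hpe.mul_left d)) h0.2 p]
      constructor
      · rintro (rfl | ⟨hp, hpe⟩)
        · exact ⟨hdp, dvd_mul_right _ _⟩
        · exact ⟨hp, hpe.mul_left d⟩
      · rintro ⟨hp, hpm⟩
        rcases (Nat.Prime.dvd_mul hp).mp hpm with h | h
        · left; exact (Nat.prime_dvd_prime_iff_eq hp hdp).mp h
        · right; exact ⟨hp, h⟩
    · refine ih m (d + 1) hm (by omega) ?_ h0 p
      intro r hr hrm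
      have := hinv r hr hrm
      rcases Nat.lt_or_ge d r with h | h
      · exact h
      · have : r = d := by omega
        subst this
        exact absurd (Nat.mod_eq_zero_of_dvd hrm) h3

/-- the distinct prime factors, by trial division -/
def pzP (m : ℕ) : List ℕ := (pzpf 5000 m 2).dedup

lemma pzP_spec (m : ℕ) (hm : 1 ≤ m) (h0 : 0 ∉ pzP m) : (pzP m).toFinset = m.primeFactors := by
  ext p
  unfold pzP at *
  rw [List.mem_dedup] at h0
  rw [List.mem_toFinset, List.mem_dedup, pzpf_spec 5000 m 2 hm le_rfl (fun p hp _ => hp.two_le) h0,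
    Nat.mem_primeFactors]
  have : m ≠ 0 := by omega
  tauto

/-- one test of the sieve condition -/
def pzTest (K S : List ℕ) (a k : ℕ) : Bool :=
  let D := S.prod
  let T := (S.map (fun p => D / p)).sum
  let r := 2 ^ K.length
  decide (T ≤ D) && decide (((D - T) * (r - 1) + r * (S.length * D - T)) ^ 2 * a < ((D - T) * k) ^ 2)

/-- the geometric sum -/
def pzgs (q : ℕ) : ℕ → ℕ
  | 0 => 0
  | n + 1 => q * pzgs q n + 1

lemma pzgs_eq (q n : ℕ) : pzgs q n = ∑ i ∈ range n, q ^ i := by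
  induction n with
  | zero => rfl
  | succ n ih => rw [pzgs, ih, geom_sum_succ]

/-- the checker -/
def pzchk (q n : ℕ) : Bool :=
  let P := pzP (pzgs q n)
  let k := pzgs q (n - 1)
  let a := q ^ (n - 2)
  !(P.contains 0) && (List.range 5).any (fun r => pzTest (P.take r) (P.drop r) a k)

lemma pzTest_sound (q n : ℕ) (P : List ℕ) (hP : P.Nodup)
    (hPv : P.toFinset = (∑ i ∈ range n, q ^ i).primeFactors) (r : ℕ)
    (h : pzTest (P.take r) (P.drop r) (q ^ (n - 2)) (pzgs q (n - 1)) = true) : PZCrit q n := by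
  have happ := List.take_append_drop r P
  set K := P.take r
  set S := P.drop r
  rw [← happ] at hP hPv
  rw [List.nodup_append'] at hP
  obtain ⟨hKn, hSn, hd⟩ := hP
  have hprime : ∀ p ∈ S, p.Prime := by
    intro p hp
    have : p ∈ (K ++ S).toFinset := by simp [hp]
    rw [hPv] at this
    exact Nat.prime_of_mem_primeFactors this
  have hKc : K.toFinset.card = K.length := List.toFinset_card_of_nodup hKn
  have hSc : S.toFinset.card = S.length := List.toFinset_card_of_nodup hSn
  simp only [pzTest, Bool.and_eq_true, decide_eq_true_eq] at h
  set D := S.prod with hD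
  set T := (S.map (fun p => D / p)).sum with hT
  obtain ⟨hTD, hlt⟩ := h
  have hD0 : 0 < D := by
    rw [hD]
    exact List.prod_pos (fun p hp => (hprime p hp).pos)
  have hDR : (0 : ℝ) < D := by exact_mod_cast hD0
  have hσ : ∑ p ∈ S.toFinset, 1 / (p : ℝ) = (T : ℝ) / D := by
    rw [List.sum_toFinset _ hSn, hT]
    have : ∀ L : List ℕ, (∀ p ∈ L, p ∣ D ∧ 0 < p) →
        (L.map (fun p : ℕ => 1 / (p : ℝ))).sum = (((L.map (fun p => D / p)).sum : ℕ) : ℝ) / D := by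
      intro L
      induction L with
      | nil => simp
      | cons x L ih =>
        intro hL
        have hx := hL x (by simp)
        rw [List.map_cons, List.map_cons, List.sum_cons, List.sum_cons,
          ih (fun p hp => hL p (by simp [hp])), Nat.cast_add, Nat.cast_div hx.1
            (by exact_mod_cast hx.2.ne')]
        have : (x : ℝ) ≠ 0 := by exact_mod_cast hx.2.ne'
        field_simp
    exact this S (fun p hp => ⟨List.dvd_prod hp, (hprime p hp).pos⟩)
  have hTs : T ≤ S.length * D := by
    rcases Nat.eq_zero_or_pos S.length with h | h
    · have : S = [] := List.length_eq_zero_iff.mp h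
      rw [hT, this]; simp
    · nlinarith
  refine ⟨K.toFinset, S.toFinset, ?_, ?_, ?_, ?_⟩
  · rw [List.disjoint_toFinset_iff_disjoint]; exact hd
  · rw [← List.toFinset_append]; exact hPv
  · rw [hσ, div_le_one hDR]; exact_mod_cast hTD
  · rw [hσ, hKc, hSc]
    have h1 := pz_sqrt_lt _ _ _ hlt
    rw [pzgs_eq] at h1
    push_cast [Nat.cast_sub hTD, Nat.cast_sub hTs,
      Nat.cast_sub (Nat.one_le_two_pow : 1 ≤ 2 ^ K.length)] at h1 ⊢
    have h2 := mul_lt_mul_of_pos_right h1 (inv_pos.mpr hDR)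
    calc _ = _ := ?_
      _ < _ := h2
      _ = _ := ?_
    · field_simp
    · field_simp

lemma pzchk_sound (q n : ℕ) (hn : 1 ≤ n) (h : pzchk q n = true) : PZCrit q n := by
  simp only [pzchk, Bool.and_eq_true, List.any_eq_true, Bool.not_eq_true'] at h
  obtain ⟨h0, r, _, hr⟩ := h
  have h0' : 0 ∉ pzP (pzgs q n) := by simpa using h0
  have hv1 : 1 ≤ pzgs q n := by
    obtain ⟨m, rfl⟩ : ∃ m, n = m + 1 := ⟨n - 1, by omega⟩
    rw [pzgs]; omega
  have := pzP_spec _ hv1 h0'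
  refine pzTest_sound q n (pzP (pzgs q n)) (List.nodup_dedup _) ?_ r hr
  rw [this, pzgs_eq]

/-- prime power test -/
def pzpp (q : ℕ) : Bool := (pzP q).contains 0 || ((pzP q).length == 1)

lemma pzpp_of (q : ℕ) (hq : IsPrimePow q) : pzpp q = true := by
  unfold pzpp
  rw [Bool.or_eq_true]
  by_cases h0 : 0 ∈ pzP q
  · left; simpa using h0
  · right
    have h1 := pzP_spec q hq.one_lt.le h0
    have h2 := isPrimePow_iff_card_primeFactors_eq_one.mp hq
    have hnd : (pzP q).Nodup := List.nodup_dedup _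
    rw [← h1, List.toFinset_card_of_nodup hnd] at h2
    simpa using h2

set_option maxRecDepth 100000 in
lemma pz_table3 : (List.range 720).all (fun q => decide (q < 2) || !(pzpp q) || q == 4 || q == 16 ||
    pzchk q 3) = true := by
  decide +kernel

set_option maxRecDepth 100000 in
lemma pz_table4 : (List.range 18).all (fun n => (List.range 256).all (fun q =>
    decide (n < 4) || decide (q < 2) || decide (65025 ≤ q ^ (n - 2)) || !(pzpp q) ||
    (n == 4 && q == 5) || pzchk q n)) = true := by
  decide +kernel

lemma pz_prod_bound (P A : Finset ℕ) (c : ℕ) (hP : ∀ p ∈ P, p < c → p ∈ A)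
    (hA : ∀ p ∈ A, p ≤ c) :
    c ^ P.card * ∏ p ∈ A, p ≤ c ^ A.card * ∏ p ∈ P, p := by
  classical
  have h1 : c ^ (P \ A).card ≤ ∏ p ∈ P \ A, p := by
    apply Finset.pow_card_le_prod
    intro p hp
    rw [mem_sdiff] at hp
    by_contra h
    exact hp.2 (hP p hp.1 (by omega))
  have h2 : ∏ p ∈ A \ P, p ≤ c ^ (A \ P).card := by
    apply Finset.prod_le_pow_card
    intro p hp
    exact hA p (mem_sdiff.mp hp).1
  rw [← Finset.prod_inter_mul_prod_sdiff A P, ← Finset.prod_inter_mul_prod_sdiff P A,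
    ← Finset.card_inter_add_card_sdiff P A, ← Finset.card_inter_add_card_sdiff A P,
    Finset.inter_comm A P, pow_add, pow_add]
  calc _ = (c ^ (P ∩ A).card * ∏ x ∈ P ∩ A, x) * (c ^ (P \ A).card * ∏ x ∈ A \ P, x) := by ring
    _ ≤ (c ^ (P ∩ A).card * ∏ x ∈ P ∩ A, x) * ((∏ p ∈ P \ A, p) * c ^ (A \ P).card) := by
        gcongr
    _ = _ := by ring

lemma pz_sum_bound (P A : Finset ℕ) (c : ℕ) (hc : 0 < c) (hP : ∀ p ∈ P, p < c → p ∈ A)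
    (hA : ∀ p ∈ A, 0 < p ∧ p ≤ c) :
    ∑ p ∈ P, 1 / (p : ℝ) ≤ ∑ p ∈ A, (1 / (p : ℝ) - 1 / c) + P.card / c := by
  classical
  have hcR : (0 : ℝ) < c := by exact_mod_cast hc
  have h1 : ∑ p ∈ P, (1 / (p : ℝ) - 1 / c) ≤ ∑ p ∈ A, (1 / (p : ℝ) - 1 / c) := by
    calc _ ≤ ∑ p ∈ P ∩ A, (1 / (p : ℝ) - 1 / c) := by
          rw [← Finset.sum_inter_add_sum_sdiff P A]
          have : ∑ p ∈ P \ A, (1 / (p : ℝ) - 1 / c) ≤ 0 := by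
            apply Finset.sum_nonpos
            intro p hp
            rw [mem_sdiff] at hp
            have h2 : c ≤ p := by
              by_contra h
              exact hp.2 (hP p hp.1 (by omega))
            have h3 : (c : ℝ) ≤ p := by exact_mod_cast h2
            have := one_div_le_one_div_of_le hcR h3
            linarith
          linarith
      _ ≤ _ := by
          apply Finset.sum_le_sum_of_subset_of_nonneg inter_subset_right
          intro p hp _
          obtain ⟨h2, h3⟩ := hA p hp
          have h2' : (0 : ℝ) < p := by exact_mod_cast h2
          have h3' : (p : ℝ) ≤ c := by exact_mod_cast h3
          have := one_div_le_one_div_of_le h2' h3'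
          linarith
  rw [Finset.sum_sub_distrib, Finset.sum_const, nsmul_eq_mul] at h1
  have : (P.card : ℝ) * (1 / c) = P.card / c := by ring
  linarith

lemma pz_small_primes (q p : ℕ) (hp : p.Prime) (hd : p ∣ q ^ 2 + q + 1) (hlt : p < 31) :
    p ∈ ({3, 7, 13, 19} : Finset ℕ) := by
  have key : ∀ p, p < 31 → ∀ r, r < p → (r ^ 2 + r + 1) % p = 0 → p ∈ ({3, 7, 13, 19} : Finset ℕ) ∨
      p ∈ ({1, 21} : Finset ℕ) := by decide +kernel
  have h1 : ((q % p) ^ 2 + q % p + 1) % p = 0 := by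
    have : ((q % p) ^ 2 + q % p + 1) ≡ q ^ 2 + q + 1 [MOD p] := by
      have h := Nat.mod_modEq q p
      exact ((h.pow 2).add h).add_right 1
    rw [this]
    exact Nat.mod_eq_zero_of_dvd hd
  rcases key p hlt (q % p) (Nat.mod_lt _ hp.pos) h1 with h | h
  · exact h
  · simp only [mem_insert, mem_singleton] at h
    rcases h with rfl | rfl <;> norm_num at hp

lemma pz_num3 (q : ℕ) (hq : IsPrimePow q) (h4 : q ≠ 4) (h16 : q ≠ 16) : PZCrit q 3 := by
  have hq2 : 2 ≤ q := hq.two_le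
  by_cases hsmall : q < 720
  · have := List.all_eq_true.mp pz_table3 q (List.mem_range.mpr hsmall)
    simp only [pzpp_of q hq, Bool.or_eq_true, decide_eq_true_eq, Bool.not_true, beq_iff_eq,
      Bool.false_eq_true, or_false] at this
    refine pzchk_sound q 3 (by norm_num) ?_
    rcases this with ((h | h) | h) | h
    · omega
    · exact absurd h h4
    · exact absurd h h16
    · exact h
  · push Not at hsmall
    have hv : ∑ i ∈ range 3, q ^ i = q ^ 2 + q + 1 := by
      simp [Finset.sum_range_succ]; ring
    have hk : ∑ i ∈ range (3 - 1), q ^ i = q + 1 := by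
      simp [Finset.sum_range_succ]; ring
    set P := (∑ i ∈ range 3, q ^ i).primeFactors with hP
    have hPd : ∀ p ∈ P, p.Prime ∧ p ∣ q ^ 2 + q + 1 := by
      intro p hp
      rw [hP, hv] at hp
      exact ⟨Nat.prime_of_mem_primeFactors hp, Nat.dvd_of_mem_primeFactors hp⟩
    have hPv : ∏ p ∈ P, p ≤ q ^ 2 + q + 1 := by
      rw [hP, hv]
      exact Nat.le_of_dvd (by omega) (Nat.prod_primeFactors_dvd _)
    by_cases hs : 8 ≤ P.card
    · apply pz_full
      rw [← hP, hk]
      have h1 := pz_prod_bound P {3, 7, 13, 19} 31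
        (fun p hp hlt => pz_small_primes q p (hPd p hp).1 (hPd p hp).2 hlt) (by decide)
      have h2 : ∏ p ∈ ({3, 7, 13, 19} : Finset ℕ), p = 5187 := by decide
      have h3 : ({3, 7, 13, 19} : Finset ℕ).card = 4 := by decide
      rw [h2, h3] at h1
      obtain ⟨j, hj⟩ := Nat.exists_eq_add_of_le hs
      have h5 : (16 : ℕ) ^ j ≤ 31 ^ j := Nat.pow_le_pow_left (by norm_num) j
      have h6 : 16 ^ P.card ≤ q ^ 2 + q + 1 := by
        rw [hj, pow_add] at h1 ⊢
        norm_num at h1 ⊢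
        omega
      have h7 : (2 ^ P.card) ^ 4 = 16 ^ P.card := by rw [← pow_mul, mul_comm, pow_mul]; norm_num
      set W := 2 ^ P.card
      have h8 : W ^ 2 ≤ q + 1 := by
        by_contra h
        push Not at h
        have : (q + 1) ^ 2 < (W ^ 2) ^ 2 := Nat.pow_lt_pow_left h (by norm_num)
        nlinarith
      have h9 : (W - 1) ^ 2 ≤ W ^ 2 := Nat.pow_le_pow_left (Nat.sub_le _ _) 2
      norm_num
      nlinarith
    · push Not at hs
      refine ⟨∅, P, disjoint_empty_left _, empty_union _, ?_⟩
      have h1 := pz_sum_bound P {3, 7, 13} 19 (by norm_num) (fun p hp hlt => by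
        have := pz_small_primes q p (hPd p hp).1 (hPd p hp).2 (by omega)
        simp only [mem_insert, mem_singleton] at this ⊢
        omega) (by decide)
      have h2 : ∑ p ∈ ({3, 7, 13} : Finset ℕ), (1 / (p : ℝ) - 1 / (19 : ℕ)) =
          1 / 3 + 1 / 7 + 1 / 13 - 3 / 19 := by
        rw [Finset.sum_insert (by decide), Finset.sum_insert (by decide), Finset.sum_singleton]
        norm_num
      rw [h2] at h1
      have hs' : (P.card : ℝ) ≤ 7 := by exact_mod_cast (by omega : P.card ≤ 7)
      set σ := ∑ p ∈ P, 1 / (p : ℝ)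
      have h3 : σ ≤ 0.7637 := by
        push_cast at h1
        have : (P.card : ℝ) / 19 ≤ 7 / 19 := by gcongr
        norm_num at h1 ⊢
        linarith
      refine ⟨by linarith, ?_⟩
      rw [hk]
      have hqR : (720 : ℝ) ≤ q := by exact_mod_cast hsmall
      norm_num
      set x := √(q : ℝ) with hx
      have hxx : x ^ 2 = q := Real.sq_sqrt (by linarith)
      have hx26 : 26.8 ≤ x := by
        apply Real.le_sqrt_of_sq_le; norm_num; linarith
      rw [← hxx]
      have h6 : x * (P.card - σ) ≤ x * (7 - σ) := by gcongr
      have h7 : 6.09 ≤ (1 - σ) * (x - 1) := by nlinarith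
      have h8 : x * 6 < x * ((1 - σ) * (x - 1)) := by
        apply mul_lt_mul_of_pos_left <;> linarith
      have h10 : (1 - σ) * (x ^ 2 + 1) = x * ((1 - σ) * (x - 1)) + x * (1 - σ) + (1 - σ) := by ring
      have h11 : x * (7 - σ) = x * 6 + x * (1 - σ) := by ring
      linarith

lemma pz_num4 (q n : ℕ) (hq : IsPrimePow q) (hn : 4 ≤ n) (h45 : ¬ (n = 4 ∧ q = 5)) :
    PZCrit q n := by
  have hq2 : 2 ≤ q := hq.two_le
  obtain ⟨m, rfl⟩ := Nat.exists_eq_add_of_le hn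
  set k := ∑ i ∈ range (4 + m - 1), q ^ i with hkdef
  have hv : ∑ i ∈ range (4 + m), q ^ i = q * k + 1 := by
    rw [hkdef, show 4 + m = (4 + m - 1) + 1 by omega, geom_sum_succ]; rfl
  have ha : q ^ (4 + m - 2) = q ^ (m + 1) * q := by
    rw [← pow_succ]; congr 1; omega
  have hk : q ^ (m + 1) * q + q ^ (m + 1) ≤ k := by
    rw [hkdef, show 4 + m - 1 = m + 1 + 1 + 1 by omega, Finset.sum_range_succ,
      Finset.sum_range_succ, pow_succ q (m + 1)]
    omega
  have hb : q ≤ q ^ (m + 1) := Nat.le_self_pow (by omega) q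
  set b := q ^ (m + 1) with hbdef
  set P := (∑ i ∈ range (4 + m), q ^ i).primeFactors with hP
  have hPv : ∏ p ∈ P, p ≤ q * k + 1 := by
    rw [hP, hv]
    exact Nat.le_of_dvd (by omega) (Nat.prod_primeFactors_dvd _)
  have hk1 : 1 ≤ k := by omega
  by_cases hs : 9 ≤ P.card
  · apply pz_full
    rw [← hP, ← hkdef, ha]
    have h1 := pz_prod_bound P {2, 3, 5, 7, 11, 13, 17, 19} 23
      (fun p hp hlt => by
        have hpp := Nat.prime_of_mem_primeFactors hp
        revert hpp
        interval_cases p <;> norm_num) (by decide)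
    have h2 : ∏ p ∈ ({2, 3, 5, 7, 11, 13, 17, 19} : Finset ℕ), p = 9699690 := by decide
    have h3 : ({2, 3, 5, 7, 11, 13, 17, 19} : Finset ℕ).card = 8 := by decide
    rw [h2, h3] at h1
    obtain ⟨j, hj⟩ := Nat.exists_eq_add_of_le hs
    have h5 : (8 : ℕ) ^ j ≤ 23 ^ j := Nat.pow_le_pow_left (by norm_num) j
    have h6 : 8 ^ P.card ≤ q * k + 1 := by
      rw [hj, pow_add] at h1 ⊢
      norm_num at h1 ⊢
      omega
    have h7 : (2 ^ P.card) ^ 3 = 8 ^ P.card := by rw [← pow_mul, mul_comm, pow_mul]; norm_num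
    set W := 2 ^ P.card
    have h8 : W ^ 3 ≤ (q + 1) * k := by rw [h7]; nlinarith
    have h9 : (W - 1) ^ 2 ≤ W ^ 2 := Nat.pow_le_pow_left (Nat.sub_le _ _) 2
    have h10 : W ^ 2 * (b * q) < k ^ 2 := by
      apply lt_of_pow_lt_pow_left₀ 3 (Nat.zero_le _)
      have e1 : (q + 1) ^ 2 * (b * q) ^ 3 < k ^ 4 := by
        calc (q + 1) ^ 2 * (b * q) ^ 3 = (q + 1) ^ 2 * b ^ 3 * q ^ 2 * q := by ring
          _ ≤ (q + 1) ^ 2 * b ^ 3 * q ^ 2 * b := by gcongr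
          _ < (q + 1) ^ 2 * b ^ 3 * (q + 1) ^ 2 * b := by gcongr <;> omega
          _ = (b * q + b) ^ 4 := by ring
          _ ≤ k ^ 4 := by gcongr
      calc (W ^ 2 * (b * q)) ^ 3 = (W ^ 3) ^ 2 * (b * q) ^ 3 := by ring
        _ ≤ ((q + 1) * k) ^ 2 * (b * q) ^ 3 := by gcongr
        _ = k ^ 2 * ((q + 1) ^ 2 * (b * q) ^ 3) := by ring
        _ < k ^ 2 * k ^ 4 := by gcongr
        _ = (k ^ 2) ^ 3 := by ring
    calc _ ≤ W ^ 2 * (b * q) := by gcongr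
      _ < _ := h10
  · push Not at hs
    by_cases hbig : 65025 * (b * q) < k ^ 2
    · apply pz_full
      rw [← hP, ← hkdef, ha]
      have h1 : 2 ^ P.card ≤ 2 ^ 8 := Nat.pow_le_pow_right (by norm_num) (by omega)
      have h2 : (2 ^ P.card - 1) ^ 2 ≤ 255 ^ 2 := Nat.pow_le_pow_left (by omega) 2
      calc _ ≤ 255 ^ 2 * (b * q) := by gcongr
        _ < _ := by simpa using hbig
    · push Not at hbig
      have hlt : b * q < 65025 := by
        by_contra h
        push Not at h
        nlinarith
      have hq255 : q < 256 := by
        by_contra h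
        push Not at h
        nlinarith
      have hm : 4 + m < 18 := by
        by_contra h
        have h1 : 2 ^ (m + 2) ≤ q ^ (m + 2) := Nat.pow_le_pow_left hq2 _
        have h2 : 2 ^ 16 ≤ 2 ^ (m + 2) := Nat.pow_le_pow_right (by norm_num) (by omega)
        have h3 : q ^ (m + 2) = b * q := by rw [hbdef, ← pow_succ]
        omega
      have := List.all_eq_true.mp pz_table4 (4 + m) (List.mem_range.mpr hm)
      have := List.all_eq_true.mp this q (List.mem_range.mpr hq255)
      simp only [pzpp_of q hq, Bool.or_eq_true, decide_eq_true_eq, Bool.not_true, beq_iff_eq,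
        Bool.false_eq_true, or_false, Bool.and_eq_true] at this
      refine pzchk_sound q (4 + m) (by omega) ?_
      rcases this with (((h | h) | h) | h) | h
      · omega
      · omega
      · rw [ha] at h; omega
      · exact absurd h h45
      · exact h

end NumericPart

section ExceptionalCases

open Finset

lemma pz_comp5 {K : Type*} [Field K] (hp : (5 : K) = 0) (b : K)
    (hf : b^4 + 4*b^2 + b + 2 = 0) :
    b ^ 625 = b ∧ b ^ 1 + b ^ 5 + b ^ 25 + b ^ 125 = 0 ∧ b ^ 312 ≠ 1 ∧ b ^ 208 ≠ 1 ∧ b ^ 48 ≠ 1 := by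
  have e1 : b ^ 1 = b := pow_one b
  have e2 : b ^ 2 = b^2 := by
    refine ((pow_add b 1 1).trans (congrArg₂ (· * ·) e1 e1)).trans ?_
    linear_combination (0) * hf + (0) * hp
  have e4 : b ^ 4 = b^2 + 4*b + 3 := by
    refine ((pow_add b 2 2).trans (congrArg₂ (· * ·) e2 e2)).trans ?_
    linear_combination (1) * hf + ((-1)*b^2 + (-1)*b + (-1)) * hp
  have e8 : b ^ 8 = 3*b^3 + 3*b^2 + 3*b + 2 := by
    refine ((pow_add b 4 4).trans (congrArg₂ (· * ·) e4 e4)).trans ?_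
    linear_combination (1) * hf + (b^3 + 3*b^2 + 4*b + 1) * hp
  have e16 : b ^ 16 = 4*b^3 + b^2 + 2 := by
    refine ((pow_add b 8 8).trans (congrArg₂ (· * ·) e8 e8)).trans ?_
    linear_combination (9*b^2 + 18*b + (-9)) * hf + ((-11)*b^3 + 4*b^2 + (-3)*b + 4) * hp
  have e32 : b ^ 32 = 3*b^3 + b^2 + 2*b := by
    refine ((pow_add b 16 16).trans (congrArg₂ (· * ·) e16 e16)).trans ?_
    linear_combination (16*b^2 + 8*b + (-63)) * hf + ((-7)*b^3 + 43*b^2 + 9*b + 26) * hp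
  have e64 : b ^ 64 = b^3 + 2*b^2 + b + 1 := by
    refine ((pow_add b 32 32).trans (congrArg₂ (· * ·) e32 e32)).trans ?_
    linear_combination (9*b^2 + 6*b + (-23)) * hf + ((-6)*b^3 + 14*b^2 + 2*b + 9) * hp
  have e128 : b ^ 128 = 4*b^3 + b^2 + 2*b + 2 := by
    refine ((pow_add b 64 64).trans (congrArg₂ (· * ·) e64 e64)).trans ?_
    linear_combination (b^2 + 4*b + 2) * hf + ((-3)*b^3 + (-2)*b^2 + (-2)*b + (-1)) * hp
  have e256 : b ^ 256 = 2*b^3 + b^2 + 4*b + 3 := by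
    refine ((pow_add b 128 128).trans (congrArg₂ (· * ·) e128 e128)).trans ?_
    linear_combination (16*b^2 + 8*b + (-47)) * hf + ((-6)*b^3 + 31*b^2 + 7*b + 19) * hp
  have e512 : b ^ 512 = b^2 + 2 := by
    refine ((pow_add b 256 256).trans (congrArg₂ (· * ·) e256 e256)).trans ?_
    linear_combination (4*b^2 + 4*b + 1) * hf + (b^2 + 3*b + 1) * hp
  have e17 : b ^ 17 = b^3 + 4*b^2 + 3*b + 2 := by
    refine ((pow_add b 16 1).trans (congrArg₂ (· * ·) e16 e1)).trans ?_
    linear_combination (4) * hf + ((-4)*b^2 + (-1)*b + (-2)) * hp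
  have e49 : b ^ 49 = 2*b^3 + 2*b^2 + 4 := by
    refine ((pow_add b 32 17).trans (congrArg₂ (· * ·) e32 e17)).trans ?_
    linear_combination (3*b^2 + 13*b + 3) * hf + ((-8)*b^3 + (-5)*b^2 + (-5)*b + (-2)) * hp
  have e113 : b ^ 113 = 2*b^3 + 3*b^2 + 4*b + 3 := by
    refine ((pow_add b 64 49).trans (congrArg₂ (· * ·) e64 e49)).trans ?_
    linear_combination (2*b^2 + 6*b + (-2)) * hf + ((-4)*b^3 + b^2 + (-2)*b + 1) * hp
  have e625 : b ^ 625 = b := by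
    refine ((pow_add b 512 113).trans (congrArg₂ (· * ·) e512 e113)).trans ?_
    linear_combination (2*b + 3) * hf + ((-1)*b^2) * hp
  have e5 : b ^ 5 = b^3 + 4*b^2 + 3*b := by
    refine ((pow_add b 4 1).trans (congrArg₂ (· * ·) e4 e1)).trans ?_
    linear_combination (0) * hf + (0) * hp
  have e9 : b ^ 9 = 3*b^3 + b^2 + 4*b + 4 := by
    refine ((pow_add b 8 1).trans (congrArg₂ (· * ·) e8 e1)).trans ?_
    linear_combination (3) * hf + ((-2)*b^2 + (-1)*b + (-2)) * hp
  have e25 : b ^ 25 = b^3 + 4*b^2 := by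
    refine ((pow_add b 16 9).trans (congrArg₂ (· * ·) e16 e9)).trans ?_
    linear_combination (12*b^2 + 7*b + (-31)) * hf + ((-3)*b^3 + 19*b^2 + 5*b + 14) * hp
  have e13 : b ^ 13 = 3*b^2 + 4*b + 1 := by
    refine ((pow_add b 8 5).trans (congrArg₂ (· * ·) e8 e5)).trans ?_
    linear_combination (3*b^2 + 15*b + 12) * hf + ((-8)*b^3 + (-11)*b^2 + (-8)*b + (-5)) * hp
  have e29 : b ^ 29 = 4*b^2 + 4 := by
    refine ((pow_add b 16 13).trans (congrArg₂ (· * ·) e16 e13)).trans ?_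
    linear_combination (12*b + 19) * hf + ((-8)*b^3 + (-17)*b^2 + (-7)*b + (-8)) * hp
  have e61 : b ^ 61 = 2*b^3 + b^2 + 2 := by
    refine ((pow_add b 32 29).trans (congrArg₂ (· * ·) e32 e29)).trans ?_
    linear_combination (12*b + 4) * hf + ((-6)*b^3 + (-5)*b^2 + (-4)*b + (-2)) * hp
  have e125 : b ^ 125 = 3*b^3 + 2*b^2 + b := by
    refine ((pow_add b 64 61).trans (congrArg₂ (· * ·) e64 e61)).trans ?_
    linear_combination (2*b^2 + 5*b + (-4)) * hf + ((-4)*b^3 + 2*b^2 + (-1)*b + 2) * hp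
  have es : b ^ 1 + b ^ 5 + b ^ 25 + b ^ 125 = 0 := by
    rw [e1, e5, e25, e125]
    linear_combination (b^3 + 2*b^2 + b) * hp
  have e3 : b ^ 3 = b^3 := by
    refine ((pow_add b 2 1).trans (congrArg₂ (· * ·) e2 e1)).trans ?_
    linear_combination (0) * hf + (0) * hp
  have e7 : b ^ 7 = 4*b^3 + 3*b^2 + 4*b + 2 := by
    refine ((pow_add b 4 3).trans (congrArg₂ (· * ·) e4 e3)).trans ?_
    linear_combination (b + 4) * hf + ((-1)*b^3 + (-4)*b^2 + (-2)*b + (-2)) * hp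
  have e39 : b ^ 39 = 2*b^3 + 3*b^2 + 3*b := by
    refine ((pow_add b 32 7).trans (congrArg₂ (· * ·) e32 e7)).trans ?_
    linear_combination (12*b^2 + 13*b + (-25)) * hf + ((-10)*b^3 + 14*b^2 + 10) * hp
  have e78 : b ^ 78 = b^3 + 4*b^2 + b := by
    refine ((pow_add b 39 39).trans (congrArg₂ (· * ·) e39 e39)).trans ?_
    linear_combination (4*b^2 + 12*b + 5) * hf + ((-7)*b^3 + (-7)*b^2 + (-6)*b + (-2)) * hp
  have e156 : b ^ 156 = 2 := by
    refine ((pow_add b 78 78).trans (congrArg₂ (· * ·) e78 e78)).trans ?_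
    linear_combination (b^2 + 8*b + 14) * hf + ((-5)*b^3 + (-13)*b^2 + (-6)*b + (-6)) * hp
  have e312 : b ^ 312 = 4 := by
    refine ((pow_add b 156 156).trans (congrArg₂ (· * ·) e156 e156)).trans ?_
    linear_combination (0) * hf + (0) * hp
  have n312 : b ^ 312 ≠ 1 := by
    intro h
    rw [e312] at h
    refine one_ne_zero (α := K) ?_
    linear_combination (2) * h - (0) * hf - (1) * hp
  have e26 : b ^ 26 = 4*b^3 + b^2 + 4*b + 3 := by
    refine ((pow_add b 13 13).trans (congrArg₂ (· * ·) e13 e13)).trans ?_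
    linear_combination (9) * hf + (4*b^3 + (-3)*b^2 + (-1)*b + (-4)) * hp
  have e52 : b ^ 52 = 4*b^3 + b^2 + 4*b + 1 := by
    refine ((pow_add b 26 26).trans (congrArg₂ (· * ·) e26 e26)).trans ?_
    linear_combination (16*b^2 + 8*b + (-31)) * hf + ((-4)*b^3 + 21*b^2 + 7*b + 14) * hp
  have e104 : b ^ 104 = 3*b^3 + 2*b^2 + 3*b + 3 := by
    refine ((pow_add b 52 52).trans (congrArg₂ (· * ·) e52 e52)).trans ?_
    linear_combination (16*b^2 + 8*b + (-31)) * hf + ((-7)*b^3 + 20*b^2 + 4*b + 12) * hp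
  have e208 : b ^ 208 = 3*b^3 + 2*b^2 + 3*b + 2 := by
    refine ((pow_add b 104 104).trans (congrArg₂ (· * ·) e104 e104)).trans ?_
    linear_combination (9*b^2 + 12*b + (-14)) * hf + ((-6)*b^3 + 9*b^2 + b + 7) * hp
  have n208 : b ^ 208 ≠ 1 := by
    intro h
    rw [e208] at h
    refine one_ne_zero (α := K) ?_
    linear_combination (4*b^3 + b^2 + 4*b + 2) * h - (12*b^2 + 11*b + (-22)) * hf - ((-7)*b^3 + 14*b^2 + 2*b + 9) * hp
  have e6 : b ^ 6 = 4*b^3 + 4*b^2 + 4*b + 3 := by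
    refine ((pow_add b 3 3).trans (congrArg₂ (· * ·) e3 e3)).trans ?_
    linear_combination (b^2 + (-4)) * hf + ((-1)*b^3 + 2*b^2 + 1) * hp
  have e12 : b ^ 12 = 2*b^3 + b + 1 := by
    refine ((pow_add b 6 6).trans (congrArg₂ (· * ·) e6 e6)).trans ?_
    linear_combination (16*b^2 + 32*b + (-16)) * hf + ((-18)*b^3 + 8*b^2 + (-5)*b + 8) * hp
  have e24 : b ^ 24 = b^2 + 4*b := by
    refine ((pow_add b 12 12).trans (congrArg₂ (· * ·) e12 e12)).trans ?_
    linear_combination (4*b^2 + (-12)) * hf + (8*b^2 + 2*b + 5) * hp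
  have e48 : b ^ 48 = 3*b^3 + 2*b^2 + 4*b + 3 := by
    refine ((pow_add b 24 24).trans (congrArg₂ (· * ·) e24 e24)).trans ?_
    linear_combination (1) * hf + (b^3 + 2*b^2 + (-1)*b + (-1)) * hp
  have n48 : b ^ 48 ≠ 1 := by
    intro h
    rw [e48] at h
    refine one_ne_zero (α := K) ?_
    linear_combination (b^2 + 3*b + 4) * h - (3*b + 11) * hf - (2*b^3 + (-5)*b^2 + b + (-3)) * hp
  exact ⟨e625, es, n312, n208, n48⟩

lemma pz_comp2 {K : Type*} [Field K] (hp : (2 : K) = 0) (b : K)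
    (hf : b^12 + b^7 + b^6 + b^4 + 1 = 0) :
    b ^ 4096 = b ∧ b ^ 1 + b ^ 16 + b ^ 256 = 0 ∧ b ^ 1365 ≠ 1 ∧ b ^ 585 ≠ 1 ∧ b ^ 315 ≠ 1 := by
  have e1 : b ^ 1 = b := pow_one b
  have e2 : b ^ 2 = b^2 := by
    refine ((pow_add b 1 1).trans (congrArg₂ (· * ·) e1 e1)).trans ?_
    linear_combination (0) * hf + (0) * hp
  have e4 : b ^ 4 = b^4 := by
    refine ((pow_add b 2 2).trans (congrArg₂ (· * ·) e2 e2)).trans ?_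
    linear_combination (0) * hf + (0) * hp
  have e8 : b ^ 8 = b^8 := by
    refine ((pow_add b 4 4).trans (congrArg₂ (· * ·) e4 e4)).trans ?_
    linear_combination (0) * hf + (0) * hp
  have e16 : b ^ 16 = b^11 + b^10 + b^8 + b^4 := by
    refine ((pow_add b 8 8).trans (congrArg₂ (· * ·) e8 e8)).trans ?_
    linear_combination (b^4) * hf + ((-1)*b^11 + (-1)*b^10 + (-1)*b^8 + (-1)*b^4) * hp
  have e32 : b ^ 32 = b^11 + b^7 + b^5 + b^3 := by
    refine ((pow_add b 16 16).trans (congrArg₂ (· * ·) e16 e16)).trans ?_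
    linear_combination (b^10 + 2*b^9 + b^8 + 2*b^7 + 2*b^6 + (-1)*b^5 + (-2)*b^4 + (-1)*b^3 + (-2)*b^2 + (-6)*b) * hf + (b^9 + 5*b^8 + 2*b^7 + 3*b^5 + b^4 + b^2 + 3*b) * hp
  have e64 : b ^ 64 = b^10 + b^9 + b^8 + b^7 + b^5 + 1 := by
    refine ((pow_add b 32 32).trans (congrArg₂ (· * ·) e32 e32)).trans ?_
    linear_combination (b^10 + 2*b^6 + (-1)*b^5 + b^4 + 2*b^2 + (-2)*b + 1) * hf + ((-1)*b^10 + (-1)*b^9 + (-2)*b^6 + b^5 + (-1)*b^4 + (-1)*b^2 + b + (-1)) * hp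
  have e128 : b ^ 128 = b^11 + b^9 + b^8 + b^6 + b^5 + b^4 + b^3 + b + 1 := by
    refine ((pow_add b 64 64).trans (congrArg₂ (· * ·) e64 e64)).trans ?_
    linear_combination (b^8 + 2*b^7 + 3*b^6 + 4*b^5 + 3*b^4 + 3*b^3 + (-3)*b + (-6)) * hf + ((-5)*b^11 + (-3)*b^10 + (-3)*b^9 + 3*b^7 + b^6 + b^4 + (-2)*b^3 + b + 3) * hp
  have e256 : b ^ 256 = b^11 + b^10 + b^8 + b^4 + b := by
    refine ((pow_add b 128 128).trans (congrArg₂ (· * ·) e128 e128)).trans ?_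
    linear_combination (b^10 + 2*b^8 + 2*b^7 + b^6 + 3*b^5 + 2*b^4 + 2*b^3 + b^2 + b + 1) * hf + ((-1)*b^11 + (-1)*b^10 + b^9 + (-1)*b^8 + (-1)*b^7 + b^6) * hp
  have e512 : b ^ 512 = b^11 + b^7 + b^5 + b^3 + b^2 := by
    refine ((pow_add b 256 256).trans (congrArg₂ (· * ·) e256 e256)).trans ?_
    linear_combination (b^10 + 2*b^9 + b^8 + 2*b^7 + 2*b^6 + (-1)*b^5 + (-2)*b^4 + (-1)*b^3 + (-2)*b^2 + (-6)*b + 2) * hf + (b^11 + 2*b^9 + 5*b^8 + b^7 + (-1)*b^6 + 4*b^5 + b^2 + 3*b + (-1)) * hp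
  have e1024 : b ^ 1024 = b^10 + b^9 + b^8 + b^7 + b^5 + b^4 + 1 := by
    refine ((pow_add b 512 512).trans (congrArg₂ (· * ·) e512 e512)).trans ?_
    linear_combination (b^10 + 2*b^6 + (-1)*b^5 + b^4 + 2*b^2 + 1) * hf + ((-1)*b^10 + (-1)*b^8 + (-2)*b^6 + b^5 + (-1)*b^4 + (-1)*b^2 + (-1)) * hp
  have e2048 : b ^ 2048 = b^11 + b^9 + b^6 + b^5 + b^4 + b^3 + b + 1 := by
    refine ((pow_add b 1024 1024).trans (congrArg₂ (· * ·) e1024 e1024)).trans ?_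
    linear_combination (b^8 + 2*b^7 + 3*b^6 + 4*b^5 + 3*b^4 + 3*b^3 + 2*b^2 + (-1)*b + (-4)) * hf + ((-4)*b^11 + (-3)*b^10 + (-3)*b^9 + (-1)*b^8 + b^7 + (-1)*b^6 + (-1)*b^5 + b^4 + (-2)*b^3 + (-1)*b^2 + 2) * hp
  have e4096 : b ^ 4096 = b := by
    refine ((pow_add b 2048 2048).trans (congrArg₂ (· * ·) e2048 e2048)).trans ?_
    linear_combination (b^10 + 2*b^8 + b^6 + b^5 + b^4 + 2*b^3 + b^2 + b + 1) * hf + (b^11 + b^9 + (-1)*b^8 + b^6 + b^5 + b^4) * hp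
  have es : b ^ 1 + b ^ 16 + b ^ 256 = 0 := by
    rw [e1, e16, e256]
    linear_combination (b^11 + b^10 + b^8 + b^4 + b) * hp
  have e5 : b ^ 5 = b^5 := by
    refine ((pow_add b 4 1).trans (congrArg₂ (· * ·) e4 e1)).trans ?_
    linear_combination (0) * hf + (0) * hp
  have e21 : b ^ 21 = b^11 + b^5 + b^4 + b^3 + b := by
    refine ((pow_add b 16 5).trans (congrArg₂ (· * ·) e16 e5)).trans ?_
    linear_combination (b^4 + b^3 + b) * hf + ((-1)*b^11 + (-1)*b^10 + (-1)*b^8 + (-1)*b^7 + (-1)*b^5 + (-1)*b^4 + (-1)*b^3 + (-1)*b) * hp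
  have e85 : b ^ 85 = b^11 + b^10 + b^8 + b^7 + b^6 + b^5 + b + 1 := by
    refine ((pow_add b 64 21).trans (congrArg₂ (· * ·) e64 e21)).trans ?_
    linear_combination (b^9 + b^8 + b^7 + b^6 + (-1)*b^3 + 1) * hf + (b^11 + b^10 + b^9 + (-1)*b^7 + (-1)*b^6 + b^3 + (-1)) * hp
  have e341 : b ^ 341 = b^11 + b^8 + b^7 + b^4 + b^2 + b := by
    refine ((pow_add b 256 85).trans (congrArg₂ (· * ·) e256 e85)).trans ?_
    linear_combination (b^10 + 2*b^9 + b^8 + 2*b^7 + 3*b^6 + b^5 + (-2)*b^2 + (-6)*b + (-2)) * hf + ((-1)*b^10 + b^9 + 4*b^8 + 3*b^7 + b^6 + 3*b^5 + b^4 + b^2 + 3*b + 1) * hp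
  have e1365 : b ^ 1365 = b^10 + b^9 + b^7 + b^6 + b^5 + b^3 + b^2 + b + 1 := by
    refine ((pow_add b 1024 341).trans (congrArg₂ (· * ·) e1024 e341)).trans ?_
    linear_combination (b^9 + b^8 + b^7 + 2*b^6 + 2*b^5 + 2*b^4 + b^3 + (-2)*b + (-1)) * hf + ((-2)*b^10 + (-1)*b^9 + b^8 + b^7 + (-1)*b^3 + b) * hp
  have n1365 : b ^ 1365 ≠ 1 := by
    intro h
    rw [e1365] at h
    refine one_ne_zero (α := K) ?_
    linear_combination (b^10 + b^9 + b^7 + b^6 + b^5 + b^3 + b^2 + b + 1) * h - (b^8 + 2*b^7 + b^6 + 2*b^5 + 4*b^4 + 3*b^3 + b + 3) * hf - ((-1)*b^11 + (-1)*b^10 + (-2)*b^7 + (-2)*b^4 + b^2 + (-2)) * hp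
  have e9 : b ^ 9 = b^9 := by
    refine ((pow_add b 8 1).trans (congrArg₂ (· * ·) e8 e1)).trans ?_
    linear_combination (0) * hf + (0) * hp
  have e73 : b ^ 73 = b^11 + b^8 + b^7 + b^6 + b^5 + b^4 := by
    refine ((pow_add b 64 9).trans (congrArg₂ (· * ·) e64 e9)).trans ?_
    linear_combination (b^7 + b^6 + b^5 + b^4 + (-2)*b + (-2)) * hf + ((-2)*b^11 + (-1)*b^10 + b^7 + b + 1) * hp
  have e585 : b ^ 585 = b^11 + b^10 + b^9 + b^8 + b^7 + b^6 + b^4 := by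
    refine ((pow_add b 512 73).trans (congrArg₂ (· * ·) e512 e73)).trans ?_
    linear_combination (b^10 + b^7 + 2*b^6 + b^4 + 2*b^3) * hf + ((-2)*b^10 + (-1)*b^7 + (-1)*b^6 + (-1)*b^4 + (-1)*b^3) * hp
  have n585 : b ^ 585 ≠ 1 := by
    intro h
    rw [e585] at h
    refine one_ne_zero (α := K) ?_
    linear_combination (b^11 + b^10 + b^9 + b^3 + b^2 + b) * h - (b^10 + 2*b^9 + 3*b^8 + 3*b^7 + 3*b^6 + 2*b^5 + (-1)*b^4 + (-3)*b^3 + (-5)*b^2 + (-5)*b + (-5)) * hf - ((-1)*b^11 + b^10 + 3*b^9 + 5*b^8 + 6*b^7 + 4*b^6 + 2*b^5 + 3*b^4 + b^3 + 2*b^2 + 2*b + 2) * hp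
  have e3 : b ^ 3 = b^3 := by
    refine ((pow_add b 2 1).trans (congrArg₂ (· * ·) e2 e1)).trans ?_
    linear_combination (0) * hf + (0) * hp
  have e11 : b ^ 11 = b^11 := by
    refine ((pow_add b 8 3).trans (congrArg₂ (· * ·) e8 e3)).trans ?_
    linear_combination (0) * hf + (0) * hp
  have e27 : b ^ 27 = b^10 + b^6 + b^5 + b^4 + 1 := by
    refine ((pow_add b 16 11).trans (congrArg₂ (· * ·) e16 e11)).trans ?_
    linear_combination (b^10 + b^9 + b^7 + (-1)*b^5 + (-2)*b^4 + (-2)*b^2 + (-2)*b + 1) * hf + (b^11 + b^9 + 3*b^8 + b^5 + b^2 + b + (-1)) * hp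
  have e59 : b ^ 59 = b^11 + b^7 + b^6 + b^4 + b + 1 := by
    refine ((pow_add b 32 27).trans (congrArg₂ (· * ·) e32 e27)).trans ?_
    linear_combination (b^9 + 2*b^5 + b^3 + b + (-1)) * hf + ((-1)*b^9 + (-1)*b^5 + (-1)*b) * hp
  have e315 : b ^ 315 = b^10 + b^9 + b^8 + b^4 + b^2 + 1 := by
    refine ((pow_add b 256 59).trans (congrArg₂ (· * ·) e256 e59)).trans ?_
    linear_combination (b^10 + b^9 + b^7 + b^6 + b^5 + (-1)*b^4 + 2*b^3 + (-3)*b + 1) * hf + (b^11 + (-1)*b^10 + (-2)*b^9 + 3*b^8 + (-1)*b^6 + 2*b^5 + (-1)*b^3 + 2*b + (-1)) * hp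
  have n315 : b ^ 315 ≠ 1 := by
    intro h
    rw [e315] at h
    refine one_ne_zero (α := K) ?_
    linear_combination (b^11 + b^7 + b^6 + b^5 + b^4 + b^3 + b^2 + 1) * h - (b^9 + b^8 + b^7 + b^5 + b^4 + 2*b^3 + b^2 + 2*b + 1) * hf - ((-1)*b^9 + (-1)*b^8 + (-2)*b^7 + (-1)*b^5 + (-1)*b^3 + (-1)*b + (-1)) * hp
  exact ⟨e4096, es, n1365, n585, n315⟩

lemma pz_mem_range2 {E L : Type*} [Field E] [Fintype E] [Field L] [Algebra E L]
    (x : L) (hx : x ^ Fintype.card E = x) : ∃ c : E, algebraMap E L c = x := by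
  classical
  by_contra! h
  set q := Fintype.card E with hq
  have hq1 : 1 < q := Fintype.one_lt_card
  have hne := FiniteField.X_pow_card_sub_X_ne_zero L hq1
  have hsub : insert x (univ.image (algebraMap E L)) ⊆
      (Polynomial.X ^ q - Polynomial.X : Polynomial L).roots.toFinset := by
    intro y hy
    rw [Multiset.mem_toFinset, Polynomial.mem_roots hne]
    rw [mem_insert, mem_image] at hy
    rcases hy with rfl | ⟨c, _, rfl⟩
    · simp [hx]
    · simp [← map_pow, hq, FiniteField.pow_card]
  have h1 := Finset.card_le_card hsub
  have h2 := Multiset.toFinset_card_le (Polynomial.X ^ q - Polynomial.X : Polynomial L).roots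
  have h3 := Polynomial.card_roots' (Polynomial.X ^ q - Polynomial.X : Polynomial L)
  rw [FiniteField.X_pow_card_sub_X_natDegree_eq L hq1] at h3
  rw [Finset.card_insert_of_notMem (by simpa using h),
    Finset.card_image_of_injective _ (algebraMap E L).injective, Finset.card_univ] at h1
  omega

/-- a polynomial all of whose roots satisfy `b ^ |E| = b` has a root in `E` -/
lemma pz_root_exists {E : Type*} [Field E] [Fintype E] (f : Polynomial E) (hdeg : f.degree ≠ 0)
    (h : ∀ b : AlgebraicClosure E, Polynomial.aeval b f = 0 → b ^ Fintype.card E = b) :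
    ∃ x : E, f.eval x = 0 := by
  obtain ⟨b, hb⟩ := IsAlgClosed.exists_aeval_eq_zero (AlgebraicClosure E) f hdeg
  obtain ⟨c, rfl⟩ := pz_mem_range2 b (h b hb)
  refine ⟨c, ?_⟩
  rw [Polynomial.aeval_algebraMap_apply] at hb
  simpa using hb

lemma pz_not_pow {E : Type*} [Field E] [Fintype E] (x : E) (hx : x ≠ 0) (p m : ℕ)
    (hpm : Fintype.card E - 1 = p * m) (h : x ^ m ≠ 1) : ¬ ∃ y : E, y ^ p = x := by
  rintro ⟨y, rfl⟩
  apply h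
  have hp : p ≠ 0 := by
    rintro rfl
    have : 1 < Fintype.card E := Fintype.one_lt_card
    omega
  have hy : y ≠ 0 := by
    rintro rfl
    exact hx (zero_pow hp)
  rw [← pow_mul, ← hpm]
  exact FiniteField.pow_card_sub_one_eq_one y hy

variable {F E : Type*} [Field F] [Fintype F] [Field E] [Fintype E] [Algebra F E]

lemma pz_case5 (hrank : Module.finrank F E = 4) (hF : Fintype.card F = 5) :
    ∃ α : E, IsPrimitiveElem α ∧ ∑ i ∈ Finset.range 4, α ^ (Fintype.card F) ^ i = 0 := by
  have hE : Fintype.card E = 625 := by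
    rw [Module.card_eq_pow_finrank (K := F) (V := E), hrank, hF]; norm_num
  have h5 : (5 : E) = 0 := by
    have h := FiniteField.cast_card_eq_zero E
    rw [hE] at h
    have h' : (5 : E) ^ 4 = 0 := by
      rw [← h]; norm_num
    exact eq_zero_of_pow_eq_zero h'
  obtain ⟨x, hx⟩ := pz_root_exists (E := E)
    (Polynomial.X ^ 4 + 4 * Polynomial.X ^ 2 + Polynomial.X + 2) (by
      have : (Polynomial.X ^ 4 + 4 * Polynomial.X ^ 2 + Polynomial.X + 2 : Polynomial E).degree
          = 4 := by compute_degree!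
      rw [this]; decide) (by
      intro b hb
      have h5' : (5 : AlgebraicClosure E) = 0 := by
        have := congrArg (algebraMap E (AlgebraicClosure E)) h5
        rwa [map_ofNat, map_zero] at this
      rw [hE]
      exact (pz_comp5 h5' b (by simpa [map_ofNat] using hb)).1)
  have hx' : x ^ 4 + 4 * x ^ 2 + x + 2 = 0 := by simpa using hx
  obtain ⟨-, hs, h1, h2, h3⟩ := pz_comp5 h5 x hx'
  have hx0 : x ≠ 0 := by
    rintro rfl
    norm_num at hx'
    apply one_ne_zero (α := E)
    linear_combination h5 - 2 * hx'
  refine pz_finish 4 hrank 156 (by rw [hE, hF]) x hx0 ?_ ?_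
  · intro p hp hd
    have hm : p ∈ Nat.primeFactors 156 := Nat.mem_primeFactors.mpr ⟨hp, hd, by norm_num⟩
    have hm' : p ∈ ({2, 3, 13} : Finset ℕ) := by
      have hle := Nat.le_of_dvd (by norm_num) hd
      have : (156 : ℕ) = 2 ^ 2 * 3 * 13 := by norm_num
      rw [this] at hd
      rcases (Nat.Prime.dvd_mul hp).mp hd with hd | hd
      · rcases (Nat.Prime.dvd_mul hp).mp hd with hd | hd
        · have := (Nat.prime_dvd_prime_iff_eq hp Nat.prime_two).mp (hp.dvd_of_dvd_pow hd)
          simp [this]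
        · have := (Nat.prime_dvd_prime_iff_eq hp Nat.prime_three).mp hd
          simp [this]
      · have := (Nat.prime_dvd_prime_iff_eq hp (by norm_num)).mp hd
        simp [this]
    simp only [mem_insert, mem_singleton] at hm'
    rcases hm' with rfl | rfl | rfl
    · exact pz_not_pow x hx0 2 312 (by rw [hE]) h1
    · exact pz_not_pow x hx0 3 208 (by rw [hE]) h2
    · exact pz_not_pow x hx0 13 48 (by rw [hE]) h3
  · apply (algebraMap F E).injective
    rw [FiniteField.algebraMap_trace_eq_sum_pow, map_zero, hrank]
    simp only [Finset.sum_range_succ, Finset.sum_range_zero, Nat.card_eq_fintype_card, hF]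
    norm_num
    simpa using hs

lemma pz_case16 (hrank : Module.finrank F E = 3) (hF : Fintype.card F = 16) :
    ∃ α : E, IsPrimitiveElem α ∧ ∑ i ∈ Finset.range 3, α ^ (Fintype.card F) ^ i = 0 := by
  have hE : Fintype.card E = 4096 := by
    rw [Module.card_eq_pow_finrank (K := F) (V := E), hrank, hF]; norm_num
  have h2 : (2 : E) = 0 := by
    have h := FiniteField.cast_card_eq_zero E
    rw [hE] at h
    have h' : (2 : E) ^ 12 = 0 := by
      rw [← h]; norm_num
    exact eq_zero_of_pow_eq_zero h'
  obtain ⟨x, hx⟩ := pz_root_exists (E := E)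
    (Polynomial.X ^ 12 + Polynomial.X ^ 7 + Polynomial.X ^ 6 + Polynomial.X ^ 4 + 1) (by
      have : (Polynomial.X ^ 12 + Polynomial.X ^ 7 + Polynomial.X ^ 6 + Polynomial.X ^ 4 + 1 :
          Polynomial E).degree = 12 := by compute_degree!
      rw [this]; decide) (by
      intro b hb
      have h2' : (2 : AlgebraicClosure E) = 0 := by
        have := congrArg (algebraMap E (AlgebraicClosure E)) h2
        rwa [map_ofNat, map_zero] at this
      rw [hE]
      exact (pz_comp2 h2' b (by simpa using hb)).1)
  have hx' : x ^ 12 + x ^ 7 + x ^ 6 + x ^ 4 + 1 = 0 := by simpa using hx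
  obtain ⟨-, hs, h3, h7, h13⟩ := pz_comp2 h2 x hx'
  have hx0 : x ≠ 0 := by
    rintro rfl
    norm_num at hx'
  refine pz_finish 3 hrank 273 (by rw [hE, hF]) x hx0 ?_ ?_
  · intro p hp hd
    have hm' : p ∈ ({3, 7, 13} : Finset ℕ) := by
      have : (273 : ℕ) = 3 * 7 * 13 := by norm_num
      rw [this] at hd
      rcases (Nat.Prime.dvd_mul hp).mp hd with hd | hd
      · rcases (Nat.Prime.dvd_mul hp).mp hd with hd | hd
        · have := (Nat.prime_dvd_prime_iff_eq hp Nat.prime_three).mp hd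
          simp [this]
        · have := (Nat.prime_dvd_prime_iff_eq hp (by norm_num)).mp hd
          simp [this]
      · have := (Nat.prime_dvd_prime_iff_eq hp (by norm_num)).mp hd
        simp [this]
    simp only [mem_insert, mem_singleton] at hm'
    rcases hm' with rfl | rfl | rfl
    · exact pz_not_pow x hx0 3 1365 (by rw [hE]) h3
    · exact pz_not_pow x hx0 7 585 (by rw [hE]) h7
    · exact pz_not_pow x hx0 13 315 (by rw [hE]) h13
  · apply (algebraMap F E).injective
    rw [FiniteField.algebraMap_trace_eq_sum_pow, map_zero, hrank]
    simp only [Finset.sum_range_succ, Finset.sum_range_zero, Nat.card_eq_fintype_card, hF]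
    norm_num
    simpa using hs

lemma pz_of_crit (n : ℕ) (hn : 3 ≤ n) (hrank : Module.finrank F E = n)
    (h : PZCrit (Fintype.card F) n) :
    ∃ α : E, IsPrimitiveElem α ∧ ∑ i ∈ Finset.range n, α ^ (Fintype.card F) ^ i = 0 := by
  obtain ⟨K, S, hKS, hKSv, hδ, hcrit⟩ := h
  have hq1 : 1 < Fintype.card F := Fintype.one_lt_card
  refine pz_criterion n (by omega) hrank _ ?_ (∑ i ∈ range (n - 1), Fintype.card F ^ i) ?_
    K S hKS hKSv hδ hcrit
  · have := Nat.geomSum_eq hq1 n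
    rw [this]
    apply Nat.div_mul_cancel
    simpa using Nat.sub_dvd_pow_sub_pow (Fintype.card F) 1 n
  · obtain ⟨m, rfl⟩ : ∃ m, n = m + 1 := ⟨n - 1, by omega⟩
    rw [geom_sum_succ]; rfl

end ExceptionalCases

/-- for `n ≥ 3` with not (`n = 3` and `q = 4`), there exists a primitive
element `α` of `F_{q^n}` with `Tr_{q^n|q}(α) = Σ_{i=0}^{n-1} α^{q^i} = 0`. -/
theorem primitive_zero_trace_exists
    (F E : Type*) [Field F] [Fintype F] [Field E] [Fintype E] [Algebra F E]
    (n : ℕ) (hn : 3 ≤ n) (hrank : Module.finrank F E = n)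
    (hexc : ¬(n = 3 ∧ Fintype.card F = 4)) :
    ∃ α : E, IsPrimitiveElem α ∧ ∑ i ∈ Finset.range n, α ^ (Fintype.card F) ^ i = 0 := by
  have hq : IsPrimePow (Fintype.card F) := FiniteField.isPrimePow_card F
  rcases Nat.lt_or_ge n 4 with h | h
  · obtain rfl : n = 3 := by omega
    by_cases h16 : Fintype.card F = 16
    · exact pz_case16 hrank h16
    · exact pz_of_crit 3 le_rfl hrank (pz_num3 _ hq (fun h4 => hexc ⟨rfl, h4⟩) h16)
  · by_cases h45 : n = 4 ∧ Fintype.card F = 5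
    · obtain ⟨rfl, h5⟩ := h45
      exact pz_case5 hrank h5
    · exact pz_of_crit n hn hrank (pz_num4 _ n hq h h45)
end

section
/- Let q = p^m be a prime power with p prime, let n be a prime different from p, and suppose q is a primitive root modulo n (the class of q generates the multiplicative group (Z/nZ)^*). Let α be a proper element of F_{q^n} over F_q (that is, α ∉ F_q). Then α is a 1-normal element of F_{q^n} over F_q if and only if Tr_{q^n|q}(α) = 0. -/
/-- The polynomial `Σ_{i=0}^{n-1} α^{q^i} x^{n-1-i}` appearing in the definition of
`k`-normal elements. -/
noncomputable def kNormalPoly {E : Type*} [Field E] (q n : ℕ) (α : E) : Polynomial E :=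
  ∑ i ∈ Finset.range n, Polynomial.C (α ^ q ^ i) * Polynomial.X ^ (n - 1 - i)

/-- `α` is a `k`-normal element of `F_{q^n}` over `F_q`:
`deg (gcd (x^n - 1, Σ_{i=0}^{n-1} α^{q^i} x^{n-1-i})) = k`, the gcd taken in `F_{q^n}[x]`. -/
def IsKNormal {E : Type*} [Field E] (q n k : ℕ) (α : E) : Prop :=
  letI := Classical.decEq E
  (EuclideanDomain.gcd ((Polynomial.X : Polynomial E) ^ n - 1) (kNormalPoly q n α)).natDegree = k

/-- Elements fixed by Frobenius are in the base field. -/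
theorem aux_mem_range (F E : Type*) [Field F] [Fintype F] [Field E] [Algebra F E] (α : E)
    (h : α ^ Fintype.card F = α) : α ∈ (algebraMap F E).range := by
  classical
  have hr := FiniteField.roots_X_pow_card_sub_X F
  have hs : (Polynomial.X ^ Fintype.card F - Polynomial.X : Polynomial F).Splits := by
    rw [Polynomial.splits_iff_card_roots, hr,
      FiniteField.X_pow_card_sub_X_natDegree_eq F Fintype.one_lt_card]
    simp
  have h2 := hs.eq_prod_roots
  rw [hr] at h2
  have h3 := congrArg (Polynomial.aeval α) h2
  simp only [map_sub, map_pow, Polynomial.aeval_X, h, sub_self, map_mul, Polynomial.aeval_C] at h3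
  have hl : (Polynomial.X ^ Fintype.card F - Polynomial.X : Polynomial F) ≠ 0 :=
    FiniteField.X_pow_card_sub_X_ne_zero F Fintype.one_lt_card
  have h4 := (mul_eq_zero.mp h3.symm).resolve_left (by simpa using hl)
  rw [map_multiset_prod, Multiset.prod_eq_zero_iff] at h4
  simp only [Multiset.mem_map] at h4
  obtain ⟨_, ⟨b, _, rfl⟩, h5⟩ := h4
  refine ⟨b, ?_⟩
  simp at h5
  exact (sub_eq_zero.mp h5).symm

theorem aux_irred (F E : Type*) [Field F] [Fintype F] [Field E] [Fintype E] [Algebra F E]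
    (n : ℕ) (hnprime : n.Prime) (hnp : n ≠ ringChar F)
    (hprimroot : orderOf ((Fintype.card F : ℕ) : ZMod n) = n - 1)
    (hrank : Module.finrank F E = n) : Irreducible (Polynomial.cyclotomic n E) := by
  obtain ⟨k, hp, hF⟩ := FiniteField.card F (ringChar F)
  have hE : Fintype.card E = ringChar F ^ (k * n : ℕ) := by
    rw [Module.card_eq_pow_finrank (K := F), hrank, hF, pow_mul]
  have : Fact (ringChar F).Prime := ⟨hp⟩
  have hco : (ringChar F).Coprime n := (Nat.coprime_primes hp hnprime).2 (Ne.symm hnp)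
  refine Polynomial.irreducible_of_dvd_cyclotomic_of_natDegree (K := E) hE hco dvd_rfl ?_
  rw [Polynomial.natDegree_cyclotomic, Nat.totient_prime hnprime, ← hprimroot, ← orderOf_units]
  congr 1
  rw [ZMod.coe_unitOfCoprime, pow_mul, ← hF, Nat.cast_pow]
  have : Fact n.Prime := ⟨hnprime⟩
  rw [ZMod.pow_card]

theorem aux_coeff {E : Type*} [Field E] (q n : ℕ) (α : E) (j : ℕ) (hj : j < n) :
    (kNormalPoly q n α).coeff (n - 1 - j) = α ^ q ^ j := by
  unfold kNormalPoly
  rw [Polynomial.finsetSum_coeff, Finset.sum_eq_single j]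
  · rw [Polynomial.coeff_C_mul_X_pow, if_pos rfl]
  · intro i hi hij
    rw [Finset.mem_range] at hi
    rw [Polynomial.coeff_C_mul_X_pow, if_neg (by omega)]
  · intro h
    exact absurd (Finset.mem_range.2 hj) h

theorem aux_natDegree {E : Type*} [Field E] (q n : ℕ) (α : E) :
    (kNormalPoly q n α).natDegree ≤ n - 1 := by
  unfold kNormalPoly
  refine Polynomial.natDegree_sum_le_of_forall_le _ _ fun i _ => ?_
  exact (Polynomial.natDegree_C_mul_X_pow_le _ _).trans (by omega)

theorem aux_not_dvd {E : Type*} [Field E] (q n : ℕ) (hn : n.Prime) (α : E)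
    (h : Polynomial.cyclotomic n E ∣ kNormalPoly q n α) : α ^ q = α := by
  have : Fact n.Prime := ⟨hn⟩
  have h2 := hn.two_le
  have h0 := aux_coeff q n α 0 (by omega)
  have h1 := aux_coeff q n α 1 (by omega)
  obtain ⟨c, hc⟩ := h
  have hd := aux_natDegree q n α
  by_cases hz : c = 0
  · rw [hc, hz] at h0 h1
    simp at h0 h1
    rw [← h1, ← h0]
  have hdc : c.natDegree = 0 := by
    rw [hc, Polynomial.natDegree_mul (Polynomial.cyclotomic_ne_zero n E) hz,
      Polynomial.natDegree_cyclotomic, Nat.totient_prime hn] at hd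
    omega
  obtain ⟨a, rfl⟩ := Polynomial.natDegree_eq_zero.1 hdc
  have key : ∀ j < n, (Polynomial.cyclotomic n E).coeff j = 1 := by
    intro j hj
    rw [Polynomial.cyclotomic_prime, Polynomial.finsetSum_coeff]
    simp [Polynomial.coeff_X_pow, hj]
  rw [hc, Polynomial.coeff_mul_C, key _ (by omega)] at h0 h1
  rw [pow_zero, pow_one] at h0
  rw [pow_one] at h1
  rw [← h1, ← h0]

/-- let `n` be a prime different from `p = char F_q`, `q` a primitive root
modulo `n`, and `α` a proper element of `F_{q^n}` over `F_q` (i.e. `α ∉ F_q`).  Then `α`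
is a `1`-normal element of `F_{q^n}` over `F_q` iff `Tr_{q^n|q}(α) = 0`. -/
theorem one_normal_iff_trace_zero_prime_deg
    (F E : Type*) [Field F] [Fintype F] [Field E] [Fintype E] [Algebra F E]
    (n : ℕ) (hnprime : n.Prime) (hnp : n ≠ ringChar F)
    (hprimroot : orderOf ((Fintype.card F : ℕ) : ZMod n) = n - 1)
    (hrank : Module.finrank F E = n)
    (α : E) (hproper : α ∉ (algebraMap F E).range) :
    IsKNormal (Fintype.card F) n 1 α ↔
      ∑ i ∈ Finset.range n, α ^ (Fintype.card F) ^ i = 0 := by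
  have hirr := aux_irred F E n hnprime hnp hprimroot hrank
  have hnd : ¬ Polynomial.cyclotomic n E ∣ kNormalPoly (Fintype.card F) n α :=
    fun h => hproper (aux_mem_range F E α (aux_not_dvd _ n hnprime α h))
  have htr : (∑ i ∈ Finset.range n, α ^ (Fintype.card F) ^ i = 0) ↔
      (Polynomial.X - Polynomial.C 1) ∣ kNormalPoly (Fintype.card F) n α := by
    rw [Polynomial.dvd_iff_isRoot, Polynomial.IsRoot.def, kNormalPoly, Polynomial.eval_finsetSum]
    simp
  rw [htr]
  unfold IsKNormal
  have : Fact n.Prime := ⟨hnprime⟩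
  have hfac : (Polynomial.X ^ n - 1 : Polynomial E) =
      Polynomial.cyclotomic n E * (Polynomial.X - Polynomial.C 1) := by
    rw [Polynomial.C_1, Polynomial.cyclotomic_prime_mul_X_sub_one]
  generalize kNormalPoly (Fintype.card F) n α = P at *
  letI := Classical.decEq E
  set g := EuclideanDomain.gcd ((Polynomial.X : Polynomial E) ^ n - 1) P with hg
  have hgl : g ∣ Polynomial.X ^ n - 1 := EuclideanDomain.gcd_dvd_left _ _
  have hgr : g ∣ P := EuclideanDomain.gcd_dvd_right _ _
  have hcop : IsCoprime g (Polynomial.cyclotomic n E) :=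
    ((hirr.coprime_iff_not_dvd).2 fun h => hnd (h.trans hgr)).symm
  have hgx : g ∣ Polynomial.X - Polynomial.C 1 := by
    rw [hfac] at hgl
    exact hcop.dvd_of_dvd_mul_left hgl
  constructor
  · intro h1
    refine dvd_trans ?_ hgr
    have hx : (Polynomial.X - Polynomial.C (1:E)) ≠ 0 := Polynomial.X_sub_C_ne_zero 1
    obtain ⟨c, hc⟩ := hgx
    have hg0 : g ≠ 0 := by rintro h; rw [h] at h1; simp at h1
    have hc0 : c ≠ 0 := by rintro h; rw [h, mul_zero] at hc; exact hx hc
    have hdeg := congrArg Polynomial.natDegree hc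
    rw [Polynomial.natDegree_mul hg0 hc0, Polynomial.natDegree_X_sub_C] at hdeg
    have hu : IsUnit c := by
      rw [Polynomial.isUnit_iff_degree_eq_zero, Polynomial.degree_eq_natDegree hc0]
      have : c.natDegree = 0 := by omega
      simp [this]
    rw [hc]
    exact hu.mul_right_dvd.2 dvd_rfl
  · intro h
    have hxg : (Polynomial.X - Polynomial.C 1) ∣ g :=
      EuclideanDomain.dvd_gcd (hfac ▸ dvd_mul_left _ _) h
    have ha : Associated g (Polynomial.X - Polynomial.C 1) := associated_of_dvd_dvd hgx hxg
    rw [Polynomial.natDegree_eq_of_degree_eq (Polynomial.degree_eq_degree_of_associated ha),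
      Polynomial.natDegree_X_sub_C]
end

section
/- Let q = p^m be a prime power with p prime, let n be a prime different from p, and suppose q is a primitive root modulo n. If there exists a primitive 1-normal element of F_{q^n} over F_q, then n ≥ 3, or n = 2 and q = 3. -/
/-- let `n` be a prime different from `p = char F_q` and `q` a primitive
root modulo `n`.  If there exists a primitive `1`-normal element of `F_{q^n}` over
`F_q`, then `n ≥ 3`, or `n = 2` and `q = 3`. -/
theorem primitive_one_normal_necessary
    (F E : Type*) [Field F] [Fintype F] [Field E] [Fintype E] [Algebra F E]
    (n : ℕ) (hnprime : n.Prime) (hnp : n ≠ ringChar F)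
    (hprimroot : orderOf ((Fintype.card F : ℕ) : ZMod n) = n - 1)
    (hrank : Module.finrank F E = n)
    (h : ∃ α : E, IsPrimitiveElem α ∧ IsKNormal (Fintype.card F) n 1 α) :
    3 ≤ n ∨ (n = 2 ∧ Fintype.card F = 3) := by
  rcases Nat.lt_or_ge n 3 with hlt | hge
  swap
  · exact Or.inl hge
  exfalso
  have hn2 : n = 2 := by
    have := hnprime.two_le
    omega
  subst hn2
  obtain ⟨α, hprim, hnorm⟩ := h
  set q := Fintype.card F with hq
  have hodd : q ≠ 2 := by
    intro h2
    rw [h2] at hprimroot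
    have h1 : ((2 : ℕ) : ZMod 2) = 1 := orderOf_eq_one_iff.mp hprimroot
    revert h1
    decide
  have hq1 : 1 < q := Fintype.one_lt_card
  have hcard : Fintype.card E = q ^ 2 := by
    rw [Module.card_eq_pow_finrank (K := F) (V := E), hrank]
  -- the gcd has a root `r`, whence `α ^ q = ± α`
  have hα : α ^ (2 * q) = α ^ 2 := by
    classical
    unfold IsKNormal at hnorm
    have hd1 := @EuclideanDomain.gcd_dvd_left (Polynomial E) _ (Classical.decEq _)
      ((Polynomial.X : Polynomial E) ^ 2 - 1) (kNormalPoly q 2 α)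
    have hd2 := @EuclideanDomain.gcd_dvd_right (Polynomial E) _ (Classical.decEq _)
      ((Polynomial.X : Polynomial E) ^ 2 - 1) (kNormalPoly q 2 α)
    have hdeg : (@EuclideanDomain.gcd (Polynomial E) _ (Classical.decEq _)
      ((Polynomial.X : Polynomial E) ^ 2 - 1) (kNormalPoly q 2 α)).natDegree = 1 := by
      convert hnorm
    obtain ⟨r, hr⟩ := Polynomial.exists_root_of_degree_eq_one
      ((Polynomial.degree_eq_iff_natDegree_eq_of_pos one_pos).mpr hdeg)
    have e1 := hr.dvd hd1
    have e2 := hr.dvd hd2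
    simp [Polynomial.IsRoot, kNormalPoly, Finset.sum_range_succ] at e1 e2
    have hpow : α ^ (2 * q) = (α ^ q) ^ 2 := by rw [← pow_mul, mul_comm]
    rw [hpow]
    linear_combination (α ^ q - α * r) * e2 + α ^ 2 * e1
  have hall : ∀ x : E, x ^ (2 * q) = x ^ 2 := by
    intro x
    by_cases hx : x = 0
    · subst hx
      rw [zero_pow (by omega), zero_pow (by omega)]
    · obtain ⟨k, rfl⟩ := hprim x hx
      rw [pow_right_comm, hα, pow_right_comm]
  have hle : Fintype.card E ≤ 2 * q := by
    classical
    have hdeg : ((Polynomial.X : Polynomial E) ^ (2 * q) - Polynomial.X ^ 2).natDegree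
        = 2 * q := by
      rw [Polynomial.natDegree_sub_eq_left_of_natDegree_lt] <;> simp
      omega
    have hne : ((Polynomial.X : Polynomial E) ^ (2 * q) - Polynomial.X ^ 2) ≠ 0 := by
      intro h0
      rw [h0] at hdeg
      simp at hdeg
      omega
    rw [← Finset.card_univ, ← hdeg]
    apply Polynomial.card_le_degree_of_subset_roots
    intro x _
    rw [Polynomial.mem_roots hne]
    simp [Polynomial.IsRoot, hall x]
  rw [hcard] at hle
  have : 3 ≤ q := by omega
  nlinarith
end

section
/- Let q = p^m be a prime power with p prime, let n ≥ 3 be a prime different from p with not (n = 3 and q = 4), and suppose q is a primitive root modulo n. Then there exists a primitive 1-normal element of F_{q^n} over F_q. -/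
lemma prod_lower_aux (f : ℕ → ℕ) (hf : Monotone f) (n : ℕ) (hn : 3 ≤ n) (J : Finset ℕ)
    (hJ : ∀ j ∈ J, 1 ≤ j) :
    ∏ i ∈ Finset.range J.card, f (6 * i + 7) ≤ ∏ j ∈ J, f (2 * n * j + 1) := by
  induction J using Finset.induction_on_max with
  | empty => simp
  | insert a s hlt ih =>
    have ha : a ∉ s := fun h => lt_irrefl _ (hlt a h)
    rw [Finset.card_insert_of_notMem ha, Finset.prod_range_succ, Finset.prod_insert ha, mul_comm]
    have hc : s.card + 1 ≤ a := by
      have h1 : insert a s ⊆ Finset.Icc 1 a := by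
        intro x hx
        rw [Finset.mem_Icc]
        refine ⟨hJ x hx, ?_⟩
        rcases Finset.mem_insert.1 hx with h | h
        · exact h.le
        · exact (hlt x h).le
      have := Finset.card_le_card h1
      rw [Finset.card_insert_of_notMem ha] at this
      simpa using this
    refine Nat.mul_le_mul (hf ?_) (ih fun j hj => hJ j (Finset.mem_insert_of_mem hj))
    nlinarith

lemma prod_lower (f : ℕ → ℕ) (hf : Monotone f) (n : ℕ) (hn : 3 ≤ n) (P : Finset ℕ)
    (hP : ∀ r ∈ P, ∃ j, 1 ≤ j ∧ r = 2 * n * j + 1) :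
    ∏ i ∈ Finset.range P.card, f (6 * i + 7) ≤ ∏ r ∈ P, f r := by
  have hinv : ∀ r ∈ P, 1 ≤ (r - 1) / (2 * n) ∧ 2 * n * ((r - 1) / (2 * n)) + 1 = r := by
    intro r hr
    obtain ⟨j, hj, rfl⟩ := hP r hr
    have : (2 * n * j + 1 - 1) / (2 * n) = j := by
      rw [Nat.add_sub_cancel]; exact Nat.mul_div_cancel_left _ (by omega)
    rw [this]; exact ⟨hj, rfl⟩
  have hinj : Set.InjOn (fun r => (r - 1) / (2 * n)) (P : Set ℕ) := by
    intro a ha b hb hab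
    rw [← (hinv a ha).2, ← (hinv b hb).2]
    simp only at hab
    rw [hab]
  have := prod_lower_aux f hf n hn (P.image fun r => (r - 1) / (2 * n)) (by
    intro j hj
    obtain ⟨r, hr, rfl⟩ := Finset.mem_image.1 hj
    exact (hinv r hr).1)
  rw [Finset.card_image_of_injOn hinj, Finset.prod_image hinj] at this
  refine this.trans (le_of_eq (Finset.prod_congr rfl fun r hr => ?_))
  rw [(hinv r hr).2]

lemma sixteen_aux (w : ℕ) : 16 ^ (w + 7) < ∏ i ∈ Finset.range (w + 7), (6 * i + 7 - 4) := by
  induction w with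
  | zero => norm_num [Finset.prod_range_succ]
  | succ w ih =>
    rw [show w + 1 + 7 = (w + 7) + 1 by ring, Finset.prod_range_succ, pow_succ]
    have : 16 ≤ 6 * (w + 7) + 7 - 4 := by omega
    exact Nat.mul_lt_mul_of_lt_of_le ih this (by positivity)

lemma numA (Q T ρ τ : ℝ) (R : ℝ) (hR : R ≤ Q) (hT : 0 < T) (hQ : 0 < Q) (hQT : T ^ 4 ≤ Q ^ 3)
    (hTQ : Q ≤ T ^ 2) (hρR : ρ ^ 4 ≤ R) (hτR : τ ^ 2 ≤ R) :
    ρ * T ≤ Q ∧ τ ≤ T := by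
  constructor
  · apply le_of_pow_le_pow_left₀ (n := 4) (by norm_num) hQ.le
    calc (ρ * T) ^ 4 = ρ ^ 4 * T ^ 4 := by ring
      _ ≤ Q * Q ^ 3 := by gcongr; linarith
      _ = Q ^ 4 := by ring
  · exact le_of_pow_le_pow_left₀ (n := 2) (by norm_num) hT.le (by linarith)

lemma numeric (n : ℕ) (hn : 3 ≤ n) (P : Finset ℕ) (hne : P.Nonempty)
    (hP : ∀ r ∈ P, ∃ j, 1 ≤ j ∧ r = 2 * n * j + 1) (Q T : ℝ) (hT : 0 < T)
    (hPQ : ((∏ r ∈ P, r : ℕ) : ℝ) ≤ Q) (hQT : T ^ 4 ≤ Q ^ 3) (hTQ : Q ≤ T ^ 2) :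
    (∑ r ∈ P, (Q / r + T) < Q - 1) ∨ (2 ^ P.card * T < Q * ∏ r ∈ P, (1 - 1 / (r : ℝ))) := by
  have h7 : ∀ r ∈ P, 7 ≤ r := by
    intro r hr
    obtain ⟨j, hj, rfl⟩ := hP r hr
    nlinarith
  have hprodpos : 1 ≤ ∏ r ∈ P, r := by
    apply Finset.one_le_prod'
    intro r hr
    have := h7 r hr
    omega
  have hQ : 0 < Q := by
    have : (1 : ℝ) ≤ ((∏ r ∈ P, r : ℕ) : ℝ) := by exact_mod_cast hprodpos
    linarith
  rcases lt_or_ge P.card 7 with hc | hc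
  · left
    have hsum : ∑ r ∈ P, (Q / r + T) ≤ P.card * (Q / 7 + T) := by
      rw [← nsmul_eq_mul]
      apply Finset.sum_le_card_nsmul
      intro r hr
      have : (7 : ℝ) ≤ r := by exact_mod_cast h7 r hr
      gcongr
    refine lt_of_le_of_lt hsum ?_
    have hpl := prod_lower id monotone_id n hn P hP
    have hpos := hne.card_pos
    have key : ((∏ i ∈ Finset.range P.card, id (6 * i + 7) : ℕ) : ℝ) ≤ Q :=
      le_trans (by exact_mod_cast hpl) hPQ
    generalize P.card = w at *
    have fin : ∀ ρ τ R : ℝ, R ≤ Q → ρ ^ 4 ≤ R → τ ^ 2 ≤ R → ρ * T ≤ Q ∧ τ ≤ T :=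
      fun ρ τ R h1 h3 h4 => numA Q T ρ τ R h1 hT hQ hQT hTQ h3 h4
    interval_cases w <;> simp only [Finset.prod_range_succ, Finset.prod_range_zero, id] at key <;>
      norm_num at key ⊢
    · obtain ⟨h1, h2⟩ := fin 1.62 2.64 7 key (by norm_num) (by norm_num)
      linarith
    · obtain ⟨h1, h2⟩ := fin 3.08 9 91 key (by norm_num) (by norm_num)
      linarith
    · obtain ⟨h1, h2⟩ := fin 6.4 9 1729 key (by norm_num) (by norm_num)
      linarith
    · obtain ⟨h1, h2⟩ := fin 14 9 _ key (by norm_num) (by norm_num)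
      linarith
    · obtain ⟨h1, h2⟩ := fin 30 9 _ key (by norm_num) (by norm_num)
      linarith
    · obtain ⟨h1, h2⟩ := fin 50 9 _ key (by norm_num) (by norm_num)
      linarith
  · right
    have hpl := prod_lower (fun r => r - 4) (fun a b h => Nat.sub_le_sub_right h 4) n hn P hP
    obtain ⟨w, hw⟩ := Nat.exists_eq_add_of_le' hc
    have h16 : 16 ^ P.card < ∏ r ∈ P, (r - 4) := by
      refine lt_of_lt_of_le ?_ hpl
      rw [hw]
      exact sixteen_aux w
    have hnn : ∀ r ∈ P, (0 : ℝ) ≤ 1 - 1 / (r : ℝ) := by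
      intro r hr
      have : (7 : ℝ) ≤ r := by exact_mod_cast h7 r hr
      rw [sub_nonneg, div_le_one (by linarith)]
      linarith
    apply lt_of_pow_lt_pow_left₀ 4
    · exact mul_nonneg hQ.le (Finset.prod_nonneg hnn)
    · have h1 : ((∏ r ∈ P, (r - 4) : ℕ) : ℝ) ≤ ∏ r ∈ P, ((r : ℝ) * (1 - 1 / (r : ℝ)) ^ 4) := by
        rw [Nat.cast_prod]
        apply Finset.prod_le_prod
        · intros; positivity
        · intro r hr
          have h7r := h7 r hr
          have : (7 : ℝ) ≤ r := by exact_mod_cast h7r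
          rw [Nat.cast_sub (by omega)]
          have hb := one_add_mul_le_pow (a := -(1 / (r : ℝ))) (by
            have : 1 / (r : ℝ) ≤ 1 := by rw [div_le_one (by linarith)]; linarith
            linarith) 4
          have h2 : (r : ℝ) * (1 + ((4 : ℕ) : ℝ) * -(1 / (r : ℝ))) = r - 4 := by
            field_simp
            push_cast
            ring
          push_cast
          calc (r : ℝ) - 4 = (r : ℝ) * (1 + ((4 : ℕ) : ℝ) * -(1 / (r : ℝ))) := h2.symm
            _ ≤ r * (1 + -(1 / (r : ℝ))) ^ 4 := by gcongr
            _ = _ := by ring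
      rw [Finset.prod_mul_distrib, Finset.prod_pow] at h1
      have h16' : (16 : ℝ) ^ P.card < ((∏ r ∈ P, (r - 4) : ℕ) : ℝ) := by exact_mod_cast h16
      rw [Nat.cast_prod] at hPQ
      set Z := ∏ r ∈ P, (1 - 1 / (r : ℝ)) with hZ
      have hZ0 : 0 ≤ Z := Finset.prod_nonneg hnn
      calc (2 ^ P.card * T) ^ 4 = 16 ^ P.card * T ^ 4 := by
            rw [mul_pow, ← pow_mul, mul_comm P.card 4, pow_mul]; norm_num
        _ < ((∏ r ∈ P, (r : ℝ)) * Z ^ 4) * T ^ 4 := by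
            gcongr
            linarith
        _ ≤ (Q * Z ^ 4) * Q ^ 3 := by gcongr
        _ = (Q * Z) ^ 4 := by ring

open Finset in
lemma incl_excl {α : Type*} [DecidableEq α] (H : Finset α) (P : Finset ℕ) (p : α → ℕ → Prop)
    [∀ x r, Decidable (p x r)] (h : ∀ x ∈ H, ∃ r ∈ P, p x r) :
    ∑ t ∈ P.powerset, (-1 : ℝ) ^ t.card * ((H.filter fun x => ∀ r ∈ t, p x r).card : ℝ) = 0 := by
  have h1 : ∀ x ∈ H, ∑ t ∈ P.powerset, (-1 : ℝ) ^ t.card * (if ∀ r ∈ t, p x r then 1 else 0) = 0 := by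
    intro x hx
    obtain ⟨r, hr, hpr⟩ := h x hx
    have : ∏ r ∈ P, (1 + (-1 : ℝ) * (if p x r then 1 else 0)) = 0 :=
      Finset.prod_eq_zero hr (by simp [hpr])
    rw [Finset.prod_one_add] at this
    refine Eq.trans ?_ this
    refine Finset.sum_congr rfl fun t _ => ?_
    rw [Finset.prod_mul_distrib, Finset.prod_const, Finset.prod_boole]
  calc _ = ∑ t ∈ P.powerset, ∑ x ∈ H, (-1 : ℝ) ^ t.card * (if ∀ r ∈ t, p x r then 1 else 0) := by
        refine Finset.sum_congr rfl fun t _ => ?_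
        rw [← Finset.mul_sum, Finset.sum_boole]
    _ = 0 := by
        rw [Finset.sum_comm]
        exact Finset.sum_eq_zero h1

open Finset in
lemma sieve {α : Type*} [DecidableEq α] (H : Finset α) (P : Finset ℕ) (p : α → ℕ → Prop)
    [∀ x r, Decidable (p x r)] (q Q T : ℝ) (hq : 1 < q)
    (hH : q * H.card = (q - 1) * (Q - 1))
    (hA : ∀ t ⊆ P, |q * ((H.filter fun x => ∀ r ∈ t, p x r).card : ℝ)
      - (q - 1) * (Q * ∏ r ∈ t, (1 / (r : ℝ)))| ≤ (q - 1) * T)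
    (hnum : (∑ r ∈ P, (Q / r + T) < Q - 1) ∨ (2 ^ P.card * T < Q * ∏ r ∈ P, (1 - 1 / (r : ℝ)))) :
    ∃ x ∈ H, ∀ r ∈ P, ¬ p x r := by
  by_contra! hcon
  have hq1 : 0 < q - 1 := by linarith
  rcases hnum with hnum | hnum
  · have hsub : H ⊆ P.biUnion fun r => H.filter fun x => p x r := by
      intro x hx
      obtain ⟨r, hr, hp⟩ := hcon x hx
      exact mem_biUnion.2 ⟨r, hr, mem_filter.2 ⟨hx, hp⟩⟩
    have hc := (card_le_card hsub).trans card_biUnion_le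
    have hc' : (H.card : ℝ) ≤ ∑ r ∈ P, ((H.filter fun x => p x r).card : ℝ) := by exact_mod_cast hc
    have h2 : ∀ r ∈ P, q * ((H.filter fun x => p x r).card : ℝ) ≤ (q - 1) * (Q / r + T) := by
      intro r hr
      have := hA {r} (by simpa using hr)
      simp only [mem_singleton, forall_eq, prod_singleton] at this
      have := (abs_le.1 this).2
      have e : Q / (r : ℝ) = Q * (1 / r) := by ring
      rw [e]; linarith
    have h3 : q * (H.card : ℝ) ≤ (q - 1) * ∑ r ∈ P, (Q / r + T) := by
      calc _ ≤ q * ∑ r ∈ P, ((H.filter fun x => p x r).card : ℝ) := by gcongr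
        _ = ∑ r ∈ P, q * ((H.filter fun x => p x r).card : ℝ) := by rw [mul_sum]
        _ ≤ ∑ r ∈ P, (q - 1) * (Q / r + T) := sum_le_sum h2
        _ = _ := by rw [mul_sum]
    rw [hH] at h3
    have := le_of_mul_le_mul_left h3 hq1
    linarith
  · have hie := incl_excl H P p hcon
    have hprod : ∏ r ∈ P, (1 - 1 / (r : ℝ)) =
        ∑ t ∈ P.powerset, (-1 : ℝ) ^ t.card * ∏ r ∈ t, (1 / (r : ℝ)) := by
      have : ∏ r ∈ P, (1 - 1 / (r : ℝ)) = ∏ r ∈ P, (1 + (-1) * (1 / (r : ℝ))) :=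
        prod_congr rfl fun r _ => by ring
      rw [this, prod_one_add]
      refine sum_congr rfl fun t _ => ?_
      rw [prod_mul_distrib, prod_const]
    have hdiff : (q - 1) * (Q * ∏ r ∈ P, (1 - 1 / (r : ℝ))) = - ∑ t ∈ P.powerset, (-1 : ℝ) ^ t.card *
        (q * ((H.filter fun x => ∀ r ∈ t, p x r).card : ℝ)
          - (q - 1) * (Q * ∏ r ∈ t, (1 / (r : ℝ)))) := by
      have e : ∑ t ∈ P.powerset, (-1 : ℝ) ^ t.card *
        (q * ((H.filter fun x => ∀ r ∈ t, p x r).card : ℝ)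
          - (q - 1) * (Q * ∏ r ∈ t, (1 / (r : ℝ)))) =
          q * (∑ t ∈ P.powerset, (-1 : ℝ) ^ t.card * ((H.filter fun x => ∀ r ∈ t, p x r).card : ℝ))
          - (q - 1) * (Q * ∑ t ∈ P.powerset, (-1 : ℝ) ^ t.card * ∏ r ∈ t, (1 / (r : ℝ))) := by
        simp only [mul_sum, ← sum_sub_distrib]
        exact sum_congr rfl fun t _ => by ring
      rw [e, hie, ← hprod]; ring
    have hle : (q - 1) * (Q * ∏ r ∈ P, (1 - 1 / (r : ℝ))) ≤ 2 ^ P.card * ((q - 1) * T) := by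
      rw [hdiff]
      refine (neg_le_abs _).trans ((abs_sum_le_sum_abs _ _).trans ?_)
      have e2 : (2 : ℝ) ^ P.card * ((q - 1) * T) = P.powerset.card • ((q - 1) * T) := by
        rw [card_powerset, nsmul_eq_mul]; push_cast; rfl
      rw [e2]
      apply sum_le_card_nsmul
      intro t ht
      rw [abs_mul, abs_pow, abs_neg, abs_one, one_pow, one_mul]
      exact hA t (mem_powerset.1 ht)
    nlinarith
open Finset in
lemma exists_char (F E : Type*) [Field F] [Fintype F] [Field E] [Fintype E] [Algebra F E]
    [DecidableEq F] :
    ∃ ψ : AddChar E ℂ, ψ.IsPrimitive ∧ ∀ z : E, ∑ c : F, ψ (algebraMap F E c * z) =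
      if Algebra.trace F E z = 0 then (Fintype.card F : ℂ) else 0 := by
  obtain ⟨φ, hφ⟩ := (AddChar.exists_apply_ne_zero (a := (1 : F))).2 one_ne_zero
  have hφ1 : φ ≠ 1 := by rintro rfl; simp at hφ
  have hφp := AddChar.IsPrimitive.of_ne_one hφ1
  refine ⟨φ.compAddMonoidHom (Algebra.trace F E).toAddMonoidHom, ?_, ?_⟩
  · apply AddChar.IsPrimitive.of_ne_one
    intro h
    obtain ⟨z, hz⟩ := Algebra.trace_surjective F E 1
    have := DFunLike.congr_fun h z
    simp [hz] at this
    exact hφ this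
  · intro z
    have := AddChar.sum_mulShift (Algebra.trace F E z) hφp
    push_cast at this
    rw [← this]
    refine sum_congr rfl fun c _ => ?_
    rw [← Algebra.smul_def]
    simp

open Finset in
lemma gauss_bound {E : Type*} [Field E] [Fintype E] [DecidableEq E] (ψ : AddChar E ℂ)
    (hψ : ψ.IsPrimitive) (S : Subgroup Eˣ) [DecidablePred (· ∈ S)] :
    ‖∑ s ∈ univ.filter (fun s : Eˣ => s ∈ S), ψ (s : E)‖ ^ 2 ≤ Fintype.card E := by
  set SF := univ.filter (fun s : Eˣ => s ∈ S) with hSF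
  set G : E → ℂ := fun y => ∑ s ∈ SF, ψ (y * (s : E)) with hG
  have hG1 : ∑ s ∈ SF, ψ (s : E) = G 1 := by simp [hG]
  have hinv : ∀ y ∈ SF, G (y : E) = G 1 := by
    intro y hy
    have hyS : y ∈ S := by simpa [hSF] using hy
    simp only [hG]
    refine sum_bij' (fun s _ => y * s) (fun s _ => y⁻¹ * s) ?_ ?_ ?_ ?_ ?_
    · intro s hs
      simp only [hSF, mem_filter, mem_univ, true_and] at hs ⊢
      exact S.mul_mem hyS hs
    · intro s hs
      simp only [hSF, mem_filter, mem_univ, true_and] at hs ⊢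
      exact S.mul_mem (S.inv_mem hyS) hs
    · intro s _; simp
    · intro s _; simp
    · intro s _; simp
  have htot : ∑ y : E, ‖G y‖ ^ 2 = (Fintype.card E : ℝ) * SF.card := by
    have : ((∑ y : E, ‖G y‖ ^ 2 : ℝ) : ℂ) = (Fintype.card E : ℂ) * SF.card := by
      push_cast
      calc ∑ y : E, ((‖G y‖ : ℂ)) ^ 2 = ∑ y : E, ∑ s ∈ SF, ∑ t ∈ SF, ψ (y * ((s : E) - t)) := by
            refine sum_congr rfl fun y _ => ?_
            rw [← Complex.mul_conj']
            simp only [hG, map_sum, sum_mul_sum]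
            refine sum_congr rfl fun s _ => sum_congr rfl fun t _ => ?_
            rw [← AddChar.map_neg_eq_conj, ← AddChar.map_add_eq_mul]
            congr 1; ring
        _ = ∑ s ∈ SF, ∑ t ∈ SF, ∑ y : E, ψ (y * ((s : E) - t)) := by
            rw [sum_comm]
            refine sum_congr rfl fun s _ => ?_
            rw [sum_comm]
        _ = ∑ s ∈ SF, ∑ t ∈ SF, if s = t then (Fintype.card E : ℂ) else 0 := by
            refine sum_congr rfl fun s _ => sum_congr rfl fun t _ => ?_
            rw [AddChar.sum_mulShift _ hψ]
            simp only [sub_eq_zero, Units.val_inj]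
            push_cast
            rfl
        _ = _ := by
            simp only [sum_ite_eq]
            rw [sum_ite_mem, inter_self, sum_const, nsmul_eq_mul, mul_comm]
    exact_mod_cast this
  have hle : (SF.card : ℝ) * ‖G 1‖ ^ 2 ≤ ∑ y : E, ‖G y‖ ^ 2 := by
    calc (SF.card : ℝ) * ‖G 1‖ ^ 2 = ∑ y ∈ SF, ‖G (y : E)‖ ^ 2 := by
          rw [← nsmul_eq_mul, ← sum_const]
          exact sum_congr rfl fun y hy => by rw [hinv y hy]
      _ = ∑ y ∈ SF.image (fun u : Eˣ => (u : E)), ‖G y‖ ^ 2 := by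
          rw [sum_image (fun a _ b _ h => Units.ext h)]
      _ ≤ _ := sum_le_sum_of_subset_of_nonneg (subset_univ _) fun _ _ _ => by positivity
  rw [htot] at hle
  have hpos : (0 : ℝ) < SF.card := by
    have : SF.Nonempty := ⟨1, by simp [hSF, S.one_mem]⟩
    exact_mod_cast this.card_pos
  rw [hG1]
  nlinarith

open Finset in
lemma trace_zero_count (F E : Type*) [Field F] [Fintype F] [Field E] [Fintype E] [Algebra F E]
    [DecidableEq F] [DecidableEq E] (ψ : AddChar E ℂ) 
    (h : ∀ z : E, ∑ c : F, ψ (algebraMap F E c * z) =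
      if Algebra.trace F E z = 0 then (Fintype.card F : ℂ) else 0)
    (S : Subgroup Eˣ) [DecidablePred (· ∈ S)]
    (hS : ∀ c : Fˣ, Units.map (algebraMap F E).toMonoidHom c ∈ S) :
    (Fintype.card F : ℂ) * ((univ.filter (fun s : Eˣ => s ∈ S ∧ Algebra.trace F E (s : E) = 0)).card : ℂ)
      - ((univ.filter (fun s : Eˣ => s ∈ S)).card : ℂ) =
     ((Fintype.card F : ℂ) - 1) * ∑ s ∈ univ.filter (fun s : Eˣ => s ∈ S), ψ (s : E) := by
  set SF := univ.filter (fun s : Eˣ => s ∈ S) with hSF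
  have h1 : ∀ c : Fˣ, ∑ s ∈ SF, ψ (algebraMap F E c * (s : E)) = ∑ s ∈ SF, ψ (s : E) := by
    intro c
    refine sum_bij' (fun s _ => Units.map (algebraMap F E).toMonoidHom c * s)
      (fun s _ => (Units.map (algebraMap F E).toMonoidHom c)⁻¹ * s) ?_ ?_ ?_ ?_ ?_
    · intro s hs
      simp only [hSF, mem_filter, mem_univ, true_and] at hs ⊢
      exact S.mul_mem (hS c) hs
    · intro s hs
      simp only [hSF, mem_filter, mem_univ, true_and] at hs ⊢
      exact S.mul_mem (S.inv_mem (hS c)) hs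
    · intro s _; simp
    · intro s _; simp
    · intro s _; simp
  have h2 : ∑ s ∈ SF, ∑ c : F, ψ (algebraMap F E c * (s : E)) =
      (Fintype.card F : ℂ) * ((univ.filter (fun s : Eˣ => s ∈ S ∧ Algebra.trace F E (s : E) = 0)).card : ℂ) := by
    simp only [h]
    rw [← sum_filter, sum_const, nsmul_eq_mul, mul_comm, hSF, filter_filter]
  rw [← h2, sum_comm, ← Fintype.sum_subtype_add_sum_subtype (fun c : F => c ≠ 0)]
  have h3 : ∑ c : {c : F // c ≠ 0}, ∑ s ∈ SF, ψ (algebraMap F E c * (s : E)) =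
      ((Fintype.card F : ℂ) - 1) * ∑ s ∈ SF, ψ (s : E) := by
    rw [sum_congr rfl (g := fun _ => ∑ s ∈ SF, ψ (s : E))
      (fun c _ => h1 (Units.mk0 c.1 c.2)), sum_const, nsmul_eq_mul]
    congr 1
    rw [card_univ, Fintype.card_subtype_compl, Fintype.card_subtype_eq,
      Nat.cast_sub Fintype.card_pos]
    simp
  have h4 : ∑ c : {c : F // ¬ c ≠ 0}, ∑ s ∈ SF, ψ (algebraMap F E c * (s : E)) = (SF.card : ℂ) := by
    have : ∀ c : {c : F // ¬ c ≠ 0}, ∑ s ∈ SF, ψ (algebraMap F E c * (s : E)) = (SF.card : ℂ) := by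
      rintro ⟨c, hc⟩
      have : c = 0 := not_not.1 hc
      subst this
      simp
    rw [sum_congr rfl (fun c _ => this c), sum_const, card_univ]
    simp
  rw [h3, h4]; ring

open Polynomial in
lemma one_normal_of_trace_zero {F E : Type*} [Field F] [Fintype F] [Field E] [Fintype E]
    [Algebra F E] (n : ℕ) (hnprime : n.Prime) (hn3 : 3 ≤ n)
    (hprimroot : orderOf ((Fintype.card F : ℕ) : ZMod n) = n - 1)
    (hrank : Module.finrank F E = n) (α : E) (hα : α ≠ 0) (htr : Algebra.trace F E α = 0) :
    IsKNormal (Fintype.card F) n 1 α := by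
  letI := Classical.decEq E
  have hfact : Fact n.Prime := ⟨hnprime⟩
  have hcardE : Fintype.card E = Fintype.card F ^ n := by
    rw [Module.card_eq_pow_finrank (K := F) (V := E), hrank]
  -- irreducibility
  have hirr : Irreducible (cyclotomic n E) := by
    obtain ⟨p, hp⟩ := CharP.exists E
    obtain ⟨f, hpp, hf⟩ := FiniteField.card E p
    have : Fact p.Prime := ⟨hpp⟩
    have hunit : ((Fintype.card F : ℕ) : ZMod n) ≠ 0 := by
      intro h0
      rw [h0, orderOf_zero] at hprimroot
      omega
    have hcast : ((p ^ (f : ℕ) : ℕ) : ZMod n) = ((Fintype.card F : ℕ) : ZMod n) := by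
      rw [← hf, hcardE]; push_cast; exact ZMod.pow_card _
    have hcop : p.Coprime n := by
      rw [Nat.Prime.coprime_iff_not_dvd hpp]
      intro hd
      have hpn : p = n := (Nat.prime_dvd_prime_iff_eq hpp hnprime).1 hd
      apply hunit
      rw [← hcast, hpn]
      push_cast
      rw [ZMod.natCast_self, zero_pow f.pos.ne']
    apply Polynomial.irreducible_of_dvd_cyclotomic_of_natDegree (p := p) (f := f) (n := n)
      hf hcop dvd_rfl
    rw [natDegree_cyclotomic, Nat.totient_prime hnprime, ← orderOf_units, ZMod.coe_unitOfCoprime,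
      hcast, hprimroot]
  have hfac : (X : E[X]) ^ n - 1 = (X - C 1) * cyclotomic n E := by
    rw [← cyclotomic_prime_mul_X_sub_one E n, mul_comm]; simp
  unfold IsKNormal
  set K := kNormalPoly (Fintype.card F) n α with hK
  have hcoeff : K.coeff (n - 1) = α := by
    rw [hK, kNormalPoly, finsetSum_coeff]
    rw [Finset.sum_eq_single 0]
    · simp
    · intro i hi h0
      have := Finset.mem_range.1 hi
      rw [coeff_C_mul_X_pow, if_neg (by omega)]
    · intro h; exact absurd (Finset.mem_range.2 (by omega)) h
  have hK0 : K ≠ 0 := by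
    intro h; rw [h] at hcoeff; simp at hcoeff; exact hα hcoeff.symm
  have hKdeg : K.natDegree ≤ n - 1 := by
    rw [hK, kNormalPoly]
    apply natDegree_sum_le_of_forall_le
    intro i _
    exact (natDegree_C_mul_X_pow_le _ _).trans (by omega)
  have hroot : (X - C 1) ∣ K := by
    rw [dvd_iff_isRoot, IsRoot, hK, kNormalPoly, eval_finsetSum]
    have := FiniteField.algebraMap_trace_eq_sum_pow F E α
    rw [htr, map_zero, hrank, Nat.card_eq_fintype_card] at this
    simp only [eval_mul, eval_C, eval_pow, eval_X, one_pow, mul_one]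
    exact this.symm
  obtain ⟨h, hh⟩ : (X - C 1) ∣ EuclideanDomain.gcd ((X : E[X]) ^ n - 1) K :=
    EuclideanDomain.dvd_gcd (hfac ▸ dvd_mul_right _ _) hroot
  have hX : (X - C (1 : E)) ≠ 0 := X_sub_C_ne_zero 1
  have hdvd : h ∣ cyclotomic n E := by
    have := EuclideanDomain.gcd_dvd_left ((X : E[X]) ^ n - 1) K
    rw [hh, hfac] at this
    exact (mul_dvd_mul_iff_left hX).1 this
  rcases (hirr.dvd_iff).1 hdvd with hu | ha
  · rw [hh, natDegree_mul hX hu.ne_zero, natDegree_X_sub_C, natDegree_eq_zero_of_isUnit hu]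
  · exfalso
    have h1 : (X : E[X]) ^ n - 1 ∣ K := by
      refine dvd_trans ?_ (EuclideanDomain.gcd_dvd_right ((X : E[X]) ^ n - 1) K)
      rw [hh, hfac]
      exact mul_dvd_mul_left _ ha.dvd
    have h2 := natDegree_le_of_dvd h1 hK0
    have h3 : ((X : E[X]) ^ n - 1).natDegree = n := by
      rw [← C_1]; exact natDegree_X_pow_sub_C
    omega

lemma q_sub_one_coprime (q n : ℕ) (hnprime : n.Prime) (hn3 : 3 ≤ n) (hq : 2 ≤ q)
    (hprimroot : orderOf ((q : ℕ) : ZMod n) = n - 1) (r : ℕ) (hr : r.Prime)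
    (hrQ : r ∣ ∑ i ∈ Finset.range n, q ^ i) : ¬ (r ∣ q - 1) := by
  intro h
  have h1 : ((q - 1 : ℕ) : ZMod r) = 0 := (ZMod.natCast_eq_zero_iff _ _).2 h
  rw [Nat.cast_sub (by omega), sub_eq_zero] at h1
  have h2 : ((∑ i ∈ Finset.range n, q ^ i : ℕ) : ZMod r) = 0 := (ZMod.natCast_eq_zero_iff _ _).2 hrQ
  push_cast at h2
  rw [h1] at h2
  simp at h2
  rw [ZMod.natCast_eq_zero_iff] at h2
  have hrn := (Nat.prime_dvd_prime_iff_eq hr hnprime).1 h2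
  subst hrn
  rw [h1] at hprimroot
  simp at hprimroot
  omega

lemma geom_id (q n : ℕ) (hq : 2 ≤ q) :
    (q - 1) * (∑ i ∈ Finset.range n, q ^ i) + 1 = q ^ n := by
  have := mul_geom_sum (q : ℤ) n
  zify [show 1 ≤ q by omega]
  linarith

lemma prime_factor_form (q n : ℕ) (hnprime : n.Prime) (hn3 : 3 ≤ n) (hq : 2 ≤ q)
    (hprimroot : orderOf ((q : ℕ) : ZMod n) = n - 1) (r : ℕ) (hr : r.Prime)
    (hrQ : r ∣ ∑ i ∈ Finset.range n, q ^ i) : ∃ j, 1 ≤ j ∧ r = 2 * n * j + 1 := by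
  have hnd := q_sub_one_coprime q n hnprime hn3 hq hprimroot r hr hrQ
  have : Fact r.Prime := ⟨hr⟩
  have : Fact n.Prime := ⟨hnprime⟩
  have hpow : ((q : ℕ) : ZMod r) ^ n = 1 := by
    have := geom_id q n hq
    have h2 : (((q - 1) * (∑ i ∈ Finset.range n, q ^ i) : ℕ) : ZMod r) = 0 :=
      (ZMod.natCast_eq_zero_iff _ _).2 (hrQ.mul_left _)
    rw [← Nat.cast_pow, ← this, Nat.cast_add, h2]; simp
  have hne : ((q : ℕ) : ZMod r) ≠ 1 := by
    intro h
    apply hnd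
    rw [← ZMod.natCast_eq_zero_iff, Nat.cast_sub (by omega), h]; simp
  have hord : orderOf ((q : ℕ) : ZMod r) = n := orderOf_eq_prime hpow hne
  have hq0 : ((q : ℕ) : ZMod r) ≠ 0 := by
    intro h; rw [h, zero_pow hnprime.ne_zero] at hpow; exact zero_ne_one hpow
  have hdvd := ZMod.orderOf_dvd_card_sub_one hq0
  rw [hord] at hdvd
  have hr2 : r ≠ 2 := by
    rintro rfl
    have := Nat.le_of_dvd (by norm_num) hdvd
    omega
  have hrodd := hr.eq_two_or_odd'.resolve_left hr2
  have h2 : 2 ∣ r - 1 := by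
    obtain ⟨k, rfl⟩ := hrodd
    exact ⟨k, by omega⟩
  have hn2 : Nat.Coprime 2 n := by
    rw [Nat.coprime_primes Nat.prime_two hnprime]; omega
  obtain ⟨j, hj⟩ := hn2.mul_dvd_of_dvd_of_dvd h2 hdvd
  have := hr.two_le
  refine ⟨j, ?_, by omega⟩
  rcases Nat.eq_zero_or_pos j with h | h
  · subst h; omega
  · exact h

open Finset in
lemma exists_trace_zero (F E : Type*) [Field F] [Fintype F] [Field E] [Fintype E] [Algebra F E]
    (n : ℕ) (hnprime : n.Prime) (hn3 : 3 ≤ n)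
    (hprimroot : orderOf ((Fintype.card F : ℕ) : ZMod n) = n - 1)
    (hrank : Module.finrank F E = n) :
    ∃ α : E, IsPrimitiveElem α ∧ α ≠ 0 ∧ Algebra.trace F E α = 0 := by
  classical
  set q := Fintype.card F with hqdef
  have hq : 2 ≤ q := Fintype.one_lt_card
  set Q := ∑ i ∈ Finset.range n, q ^ i with hQdef
  have hgeom : (q - 1) * Q + 1 = q ^ n := geom_id q n hq
  have hcardE : Fintype.card E = q ^ n := by
    rw [Module.card_eq_pow_finrank (K := F) (V := E), hrank]
  have hcardU : Fintype.card Eˣ = (q - 1) * Q := by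
    rw [Fintype.card_units, hcardE]; omega
  have hQlow : q ^ (n - 1) ≤ Q := by
    rw [hQdef]
    exact Finset.single_le_sum (f := fun i => q ^ i) (fun _ _ => Nat.zero_le _)
      (Finset.mem_range.2 (by omega))
  have hQ2 : 2 ≤ Q := by
    have : q ^ 1 ≤ q ^ (n - 1) := Nat.pow_le_pow_right (by omega) (by omega)
    rw [pow_one] at this
    exact hq.trans (this.trans hQlow)
  obtain ⟨γ, hγ⟩ := IsCyclic.exists_generator (α := Eˣ)
  have hord : orderOf γ = (q - 1) * Q := by
    rw [orderOf_eq_card_of_forall_mem_zpowers hγ, Nat.card_eq_fintype_card, hcardU]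
  have hrep : ∀ x : Eˣ, ∃ j : ℕ, γ ^ j = x := fun x => by
    have := hγ x
    rwa [← mem_powers_iff_mem_zpowers, Submonoid.mem_powers_iff] at this
  have hmem : ∀ d, d ∣ Q → ∀ j : ℕ, (γ ^ j ∈ Subgroup.zpowers (γ ^ d) ↔ d ∣ j) := by
    intro d hd j
    rw [← mem_powers_iff_mem_zpowers, Submonoid.mem_powers_iff]
    constructor
    · rintro ⟨k, hk⟩
      rw [← pow_mul, pow_eq_pow_iff_modEq, hord] at hk
      have := hk.of_dvd (hd.mul_left _)
      exact (this.dvd_iff dvd_rfl).1 (dvd_mul_right _ _)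
    · rintro ⟨m, rfl⟩
      exact ⟨m, by rw [pow_mul]⟩
  have hcardS : ∀ d, d ∣ Q → (univ.filter (fun s : Eˣ => s ∈ Subgroup.zpowers (γ ^ d))).card * d
      = (q - 1) * Q := by
    intro d hd
    have hd0 : d ≠ 0 := by rintro rfl; rw [zero_dvd_iff] at hd; omega
    have h1 : (univ.filter (fun s : Eˣ => s ∈ Subgroup.zpowers (γ ^ d))).card
        = Nat.card (Subgroup.zpowers (γ ^ d)) := by
      rw [Nat.card_eq_fintype_card, Fintype.card_subtype]
    rw [h1, Nat.card_zpowers, orderOf_pow_of_dvd hd0 (hord ▸ hd.mul_left _), hord,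
      Nat.div_mul_cancel (hd.mul_left _)]
  have hcont : ∀ d, d ∣ Q → ∀ c : Fˣ,
      Units.map (algebraMap F E).toMonoidHom c ∈ Subgroup.zpowers (γ ^ d) := by
    intro d hd c
    obtain ⟨j, hj⟩ := hrep (Units.map (algebraMap F E).toMonoidHom c)
    rw [← hj, hmem d hd]
    have h1 : γ ^ (j * (q - 1)) = 1 := by
      rw [pow_mul, hj, ← map_pow, hqdef, ← Fintype.card_units, pow_card_eq_one, map_one]
    rw [← orderOf_dvd_iff_pow_eq_one, hord, mul_comm j] at h1
    exact hd.trans (Nat.dvd_of_mul_dvd_mul_left (by omega) h1)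
  obtain ⟨ψ, hψ, hψtr⟩ := exists_char F E
  set T : ℝ := Real.sqrt (q ^ n) with hT
  have hT2 : T ^ 2 = (q : ℝ) ^ n := Real.sq_sqrt (by positivity)
  have hTpos : 0 < T := Real.sqrt_pos.2 (by have : (0 : ℝ) < q := by exact_mod_cast (by omega : 0 < q)
                                            positivity)
  have hqR : (1 : ℝ) < q := by exact_mod_cast (by omega : 1 < q)
  set H : Finset Eˣ := univ.filter (fun s : Eˣ => Algebra.trace F E (s : E) = 0) with hHdef
  -- estimate
  have hA : ∀ d, d ∣ Q → |(q : ℝ) * ((H.filter fun s => s ∈ Subgroup.zpowers (γ ^ d)).card : ℝ)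
      - (q - 1) * (Q * (1 / (d : ℝ)))| ≤ (q - 1) * T := by
    intro d hd
    have hd0 : (d : ℝ) ≠ 0 := by
      have : d ≠ 0 := by rintro rfl; rw [zero_dvd_iff] at hd; omega
      exact_mod_cast this
    have h1 := trace_zero_count F E ψ hψtr (Subgroup.zpowers (γ ^ d)) (hcont d hd)
    have h2 := gauss_bound ψ hψ (Subgroup.zpowers (γ ^ d))
    have h3 := hcardS d hd
    have e1 : (univ.filter (fun s : Eˣ => s ∈ Subgroup.zpowers (γ ^ d) ∧ Algebra.trace F E (s : E) = 0))
        = H.filter fun s => s ∈ Subgroup.zpowers (γ ^ d) := by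
      rw [hHdef, filter_filter]
      exact filter_congr fun s _ => and_comm
    rw [e1] at h1
    set a := (H.filter fun s => s ∈ Subgroup.zpowers (γ ^ d)).card
    set b := (univ.filter (fun s : Eˣ => s ∈ Subgroup.zpowers (γ ^ d))).card
    have e2 : ((q : ℝ) - 1) * (Q * (1 / (d : ℝ))) = b := by
      have : (b : ℝ) * d = (q - 1) * Q := by
        have := congrArg (Nat.cast : ℕ → ℝ) h3
        push_cast [Nat.cast_sub (show 1 ≤ q by omega)] at this
        exact this
      field_simp
      linarith
    rw [e2]
    have e3 : |(q : ℝ) * a - b| = ‖((q : ℂ) * a - b)‖ := by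
      rw [← Real.norm_eq_abs, ← Complex.norm_real]; push_cast; rfl
    rw [e3, h1, norm_mul]
    have e4 : ‖(q : ℂ) - 1‖ = q - 1 := by
      rw [show (q : ℂ) - 1 = (((q : ℝ) - 1 : ℝ) : ℂ) by push_cast; rfl, Complex.norm_real,
        Real.norm_of_nonneg (by linarith)]
    rw [e4]
    apply mul_le_mul_of_nonneg_left _ (by linarith)
    apply Real.le_sqrt_of_sq_le
    rw [hcardE] at h2
    exact_mod_cast h2
  have hH : (q : ℝ) * H.card = (q - 1) * (Q - 1) := by
    have h1 := trace_zero_count F E ψ hψtr ⊤ (fun _ => Subgroup.mem_top _)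
    simp only [Subgroup.mem_top, true_and, filter_true] at h1
    have h0 : ∑ s : Eˣ, ψ (s : E) = -1 := by
      have h := AddChar.sum_mulShift (1 : E) hψ
      simp only [mul_one, one_ne_zero, if_false] at h
      rw [← Fintype.sum_subtype_add_sum_subtype (fun c : E => c ≠ 0)] at h
      have e5 : ∑ c : {c : E // ¬ c ≠ 0}, ψ (c : E) = 1 := by
        have : ∀ c : {c : E // ¬ c ≠ 0}, ψ (c : E) = 1 := by
          rintro ⟨c, hc⟩
          have : c = 0 := not_not.1 hc
          subst this
          simp
        rw [sum_congr rfl (fun c _ => this c)]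
        simp
      have e6 : ∑ c : {c : E // c ≠ 0}, ψ (c : E) = ∑ s : Eˣ, ψ (s : E) :=
        (Fintype.sum_equiv unitsEquivNeZero _ _ (fun _ => rfl)).symm
      rw [e5, e6] at h
      push_cast at h
      linear_combination h
    rw [h0, card_univ, hcardU] at h1
    push_cast [Nat.cast_sub (show 1 ≤ q by omega)] at h1
    have h2 : (q : ℂ) * H.card = (q - 1) * (Q - 1) := by linear_combination h1
    exact_mod_cast h2
  have hPprime : ∀ r ∈ Q.primeFactors, r.Prime := fun r hr => Nat.prime_of_mem_primeFactors hr
  have hPdvd : ∀ r ∈ Q.primeFactors, r ∣ Q := fun r hr => Nat.dvd_of_mem_primeFactors hr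
  have hprodQ : ∏ r ∈ Q.primeFactors, r ∣ Q := Nat.prod_primeFactors_dvd Q
  have hne : Q.primeFactors.Nonempty := Nat.nonempty_primeFactors.2 (by omega)
  have hnum := numeric n hn3 Q.primeFactors hne
    (fun r hr => prime_factor_form q n hnprime hn3 hq hprimroot r (hPprime r hr) (hPdvd r hr))
    (Q : ℝ) T hTpos (by exact_mod_cast Nat.le_of_dvd (by omega) hprodQ)
    (by
      have h1 : T ^ 4 = ((q ^ (2 * n) : ℕ) : ℝ) := by
        rw [show T ^ 4 = (T ^ 2) ^ 2 by ring, hT2]; push_cast; ring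
      rw [h1]
      have h2 : q ^ (2 * n) ≤ Q ^ 3 := by
        calc q ^ (2 * n) ≤ q ^ ((n - 1) * 3) := Nat.pow_le_pow_right (by omega) (by omega)
          _ = (q ^ (n - 1)) ^ 3 := by rw [pow_mul]
          _ ≤ Q ^ 3 := Nat.pow_le_pow_left hQlow 3
      exact_mod_cast h2)
    (by
      rw [hT2]
      have : Q ≤ q ^ n := by
        rw [← hgeom]
        have : 1 * Q ≤ (q - 1) * Q := Nat.mul_le_mul_right _ (by omega)
        omega
      exact_mod_cast this)
  obtain ⟨x, hxH, hx⟩ := sieve H Q.primeFactors (fun s r => s ∈ Subgroup.zpowers (γ ^ r))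
    (q : ℝ) Q T hqR hH (by
      intro t ht
      have htd : ∏ r ∈ t, r ∣ Q := (prod_dvd_prod_of_subset _ _ _ ht).trans hprodQ
      have := hA _ htd
      have e1 : (H.filter fun s => s ∈ Subgroup.zpowers (γ ^ (∏ r ∈ t, r))) =
          H.filter fun s => ∀ r ∈ t, s ∈ Subgroup.zpowers (γ ^ r) := by
        refine filter_congr fun s _ => ?_
        obtain ⟨j, rfl⟩ := hrep s
        rw [hmem _ htd]
        have e2 : (∀ r ∈ t, γ ^ j ∈ Subgroup.zpowers (γ ^ r)) ↔ ∀ r ∈ t, r ∣ j :=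
          forall₂_congr fun r hr => hmem r (hPdvd r (ht hr)) j
        rw [e2]
        constructor
        · intro h r hr
          exact (dvd_prod_of_mem _ hr).trans h
        · intro h
          exact Finset.prod_primes_dvd j (fun r hr => (hPprime r (ht hr)).prime) h
      rw [e1] at this
      have e3 : ∏ r ∈ t, (1 / (r : ℝ)) = 1 / ((∏ r ∈ t, r : ℕ) : ℝ) := by
        push_cast
        simp
      rw [e3]
      exact this) hnum
  obtain ⟨j, rfl⟩ := hrep x
  have hjQ : Nat.Coprime j Q := by
    rw [Nat.coprime_comm]
    apply Nat.coprime_of_dvd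
    intro r hr hrQ hrj
    have hrm : r ∈ Q.primeFactors := Nat.mem_primeFactors.2 ⟨hr, hrQ, by omega⟩
    exact hx r hrm ((hmem r hrQ j).2 hrj)
  have hcop : Nat.Coprime Q (q - 1) := by
    apply Nat.coprime_of_dvd
    intro r hr hrQ hrq
    exact q_sub_one_coprime q n hnprime hn3 hq hprimroot r hr hrQ hrq
  obtain ⟨m, hm1, hm2⟩ := Nat.chineseRemainder hcop j 1
  -- choose exponent `m + Q * (q - 1) * j`, at least `j`
  set m' := m + Q * ((q - 1) * j) with hm'
  have hmj : j ≤ m' := by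
    have : 1 * j ≤ (Q * (q - 1)) * j := Nat.mul_le_mul_right _ (Nat.mul_pos (by omega) (by omega))
    rw [hm']; nlinarith
  have hm1' : m' ≡ j [MOD Q] := by
    have : m' ≡ m [MOD Q] := by simp [hm', Nat.ModEq]
    exact this.trans hm1
  have hm2' : m' ≡ 1 [MOD (q - 1)] := by
    have : m' ≡ m [MOD (q - 1)] := by
      rw [hm', show Q * ((q - 1) * j) = (q - 1) * (Q * j) by ring]; simp [Nat.ModEq]
    exact this.trans hm2
  have hcopm : Nat.Coprime m' ((q - 1) * Q) := by
    apply Nat.Coprime.mul_right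
    · rw [Nat.Coprime, hm2'.gcd_eq]; simp
    · rw [Nat.Coprime, hm1'.gcd_eq]; exact hjQ
  obtain ⟨k, hk⟩ : Q ∣ m' - j := (Nat.modEq_iff_dvd' hmj).1 hm1'.symm
  refine ⟨((γ ^ m' : Eˣ) : E), ?_, Units.ne_zero _, ?_⟩
  · intro y hy
    have hgen : orderOf (γ ^ m') = (q - 1) * Q := by
      rw [← hord]; apply Nat.Coprime.orderOf_pow; rw [hord]; exact hcopm.symm
    have htop : Units.mk0 y hy ∈ Subgroup.zpowers (γ ^ m') := by
      have : Subgroup.zpowers (γ ^ m') = ⊤ := by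
        apply Subgroup.eq_top_of_card_eq
        rw [Nat.card_zpowers, hgen, Nat.card_eq_fintype_card, hcardU]
      rw [this]; exact Subgroup.mem_top _
    rw [← mem_powers_iff_mem_zpowers, Submonoid.mem_powers_iff] at htop
    obtain ⟨i, hi⟩ := htop
    refine ⟨i, ?_⟩
    have := congrArg (Units.val) hi
    simpa using this
  · -- `γ ^ (Q * k)` lies in `F`
    obtain ⟨c, hc⟩ : ∃ c : F, algebraMap F E c = ((γ ^ (Q * k) : Eˣ) : E) := by
      have hsub : univ.image (Units.map (algebraMap F E).toMonoidHom) ⊆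
          univ.filter (fun s : Eˣ => s ∈ Subgroup.zpowers (γ ^ Q)) := by
        intro s hs
        obtain ⟨c, _, rfl⟩ := mem_image.1 hs
        exact mem_filter.2 ⟨mem_univ _, hcont Q dvd_rfl c⟩
      have heq := eq_of_subset_of_card_le hsub (by
        rw [card_image_of_injective _ (Units.map_injective (algebraMap F E).injective),
          card_univ, Fintype.card_units]
        exact (Nat.eq_of_mul_eq_mul_right (by omega) (hcardS Q dvd_rfl)).le)
      have hin : γ ^ (Q * k) ∈ univ.filter (fun s : Eˣ => s ∈ Subgroup.zpowers (γ ^ Q)) :=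
        mem_filter.2 ⟨mem_univ _, (hmem Q dvd_rfl _).2 (dvd_mul_right _ _)⟩
      rw [← heq] at hin
      obtain ⟨c, _, hc⟩ := mem_image.1 hin
      exact ⟨c, congrArg Units.val hc⟩
    have hsplit : m' = Q * k + j := by omega
    rw [hsplit, pow_add, Units.val_mul, ← hc, ← Algebra.smul_def, map_smul]
    have : Algebra.trace F E ((γ ^ j : Eˣ) : E) = 0 := by
      simpa [hHdef] using hxH
    rw [this, smul_zero]

/-- let `n ≥ 3` be a prime different from `p = char F_q` with not
(`n = 3` and `q = 4`), and let `q` be a primitive root modulo `n`.  Then there exists a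
primitive `1`-normal element of `F_{q^n}` over `F_q`. -/
theorem primitive_one_normal_exists
    (F E : Type*) [Field F] [Fintype F] [Field E] [Fintype E] [Algebra F E]
    (n : ℕ) (hnprime : n.Prime) (hn3 : 3 ≤ n) (hnp : n ≠ ringChar F)
    (hexc : ¬(n = 3 ∧ Fintype.card F = 4))
    (hprimroot : orderOf ((Fintype.card F : ℕ) : ZMod n) = n - 1)
    (hrank : Module.finrank F E = n) :
    ∃ α : E, IsPrimitiveElem α ∧ IsKNormal (Fintype.card F) n 1 α := by
  obtain ⟨α, h1, h2, h3⟩ := exists_trace_zero F E n hnprime hn3 hprimroot hrank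
  exact ⟨α, h1, one_normal_of_trace_zero n hnprime hn3 hprimroot hrank α h2 h3⟩
end

section
/- Let q be an odd prime power with q ≠ 3. Then there exists no primitive 1-normal element of F_{q^2} over F_q. -/
/-- let `q` be an odd prime power with `q ≠ 3`.  Then there is no
primitive `1`-normal element of `F_{q²}` over `F_q`. -/
theorem no_primitive_one_normal_deg_two
    (F E : Type*) [Field F] [Fintype F] [Field E] [Fintype E] [Algebra F E]
    (hodd : Odd (Fintype.card F)) (hq3 : Fintype.card F ≠ 3)
    (hrank : Module.finrank F E = 2) :
    ¬ ∃ α : E, IsPrimitiveElem α ∧ IsKNormal (Fintype.card F) 2 1 α := by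
  rintro ⟨α, hprim, hnorm⟩
  classical
  set q := Fintype.card F with hq
  have hq1 : 1 < q := Fintype.one_lt_card
  have hcard : Fintype.card E = q ^ 2 := by
    rw [Module.card_eq_pow_finrank (K := F) (V := E), hrank]
  -- a common root
  have hroot : ∃ r : E, r ^ 2 = 1 ∧ α * r + α ^ q = 0 := by
    unfold IsKNormal at hnorm
    obtain ⟨r, hr⟩ := Polynomial.exists_root_of_degree_eq_one
      ((Polynomial.degree_eq_iff_natDegree_eq_of_pos one_pos).2 hnorm)
    refine ⟨r, ?_, ?_⟩
    · have h := hr.dvd (EuclideanDomain.gcd_dvd_left _ _)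
      simp only [Polynomial.IsRoot, Polynomial.eval_sub, Polynomial.eval_pow,
        Polynomial.eval_X, Polynomial.eval_one] at h
      exact sub_eq_zero.1 h
    · have h := hr.dvd (EuclideanDomain.gcd_dvd_right _ _)
      simp [Polynomial.IsRoot, kNormalPoly, Finset.sum_range_succ] at h
      exact h
  obtain ⟨r, hr, h⟩ := hroot
  have hα : α ^ (2 * q) = α ^ 2 := by
    have e2 : α ^ 2 = (α ^ q) ^ 2 := by
      linear_combination (α * r - α ^ q) * h - α ^ 2 * hr
    rw [e2, ← pow_mul, mul_comm]
  have hall : ∀ x : E, x ^ (2 * q) = x ^ 2 := by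
    intro x
    by_cases hx : x = 0
    · subst hx
      rw [zero_pow (by omega), zero_pow (by omega)]
    · obtain ⟨k, rfl⟩ := hprim x hx
      rw [← pow_mul, mul_comm, pow_mul, hα, ← pow_mul, mul_comm, pow_mul]
  -- count roots
  let p : Polynomial E := Polynomial.X ^ (2 * q) - Polynomial.X ^ 2
  have hdeg : p.natDegree ≤ 2 * q := by
    refine (Polynomial.natDegree_sub_le _ _).trans ?_
    simp only [Polynomial.natDegree_X_pow]
    omega
  have hp0 : p ≠ 0 := by
    intro h0
    have hc : p.coeff (2 * q) = 1 := by
      have : 2 * q ≠ 2 := by omega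
      simp only [p, Polynomial.coeff_sub, Polynomial.coeff_X_pow, if_true, if_neg this, sub_zero]
    rw [h0] at hc
    simp at hc
  have hle : Fintype.card E ≤ p.natDegree := by
    refine Polynomial.card_le_degree_of_subset_roots (Z := Finset.univ) ?_
    intro x _
    rw [Polynomial.mem_roots hp0]
    simp [p, Polynomial.IsRoot, hall x]
  obtain ⟨m, hm⟩ := hodd
  have : q ^ 2 ≤ 2 * q := hcard ▸ hle.trans hdeg
  have : 3 ≤ q := by omega
  nlinarith
end

section
/- Let δ ∈ F_{2^m}^*, let n be an even positive integer, and let F_1(x) = Σ_{i=0}^{n} c_i x^i be a 1-normal polynomial (N₁-polynomial) of degree n over F_{2^m} such that Tr_{2^m|2}(c_1 δ / c_0) = 1 and Tr_{2^m|2}(c_{n-1} / δ) = 1. Define the sequence (F_u(x))_{u ≥ 1} by F_{u+1}(x) = x^{n·2^{u-1}} F_u(x + δ² x^{-1}) for u ≥ 1, i.e., F_{u+1}(X) = Σ_{i=0}^{n·2^{u-1}} c_i^{(u)} X^{n·2^{u-1} − i} (X² + δ²)^i where F_u(X) = Σ_i c_i^{(u)} X^i. Then for every u ≥ 1, F_u(x)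 is a 1-normal polynomial of degree 2^{u-1} n over F_{2^m}. -/
/-- `P` is a `1`-normal polynomial (`N₁`-polynomial) of degree `N` over the finite field
`K` with `q` elements: `P` is monic, irreducible, of degree `N`, and each of its roots
`α` (in an algebraic closure, where the field `F_{q^N}` generated by a root lives) is a
`1`-normal element, i.e. `deg (gcd (x^N - 1, Σ_{i=0}^{N-1} α^{q^i} x^{N-1-i})) = 1`. -/
def IsN1Poly (K : Type*) [Field K] [Fintype K] (N : ℕ) (P : Polynomial K) : Prop :=
  P.Monic ∧ Irreducible P ∧ P.natDegree = N ∧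
    ∀ α : AlgebraicClosure K, Polynomial.aeval α P = 0 →
      (letI := Classical.decEq (AlgebraicClosure K)
      (EuclideanDomain.gcd ((Polynomial.X : Polynomial (AlgebraicClosure K)) ^ N - 1)
        (∑ i ∈ Finset.range N,
          Polynomial.C (α ^ (Fintype.card K) ^ i) * Polynomial.X ^ (N - 1 - i))).natDegree = 1)

/-- For `P(x) = Σ_i c_i x^i` of degree `N` over a field `K` of characteristic 2 and `δ ∈ K*`,
the polynomial `x^N P(x + δ² x⁻¹)`, i.e. `Σ_{i=0}^{N} c_i X^{N-i} (X² + δ²)^i`. -/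
noncomputable def stepPoly {K : Type*} [Field K] (δ : K) (N : ℕ) (P : Polynomial K) :
    Polynomial K :=
  ∑ i ∈ Finset.range (N + 1),
    Polynomial.C (P.coeff i) * Polynomial.X ^ (N - i) *
      ((Polynomial.X : Polynomial K) ^ 2 + Polynomial.C (δ ^ 2)) ^ i

/-- The gcd argument. -/
lemma gcd_step {L : Type*} [Field L] [DecidableEq L] (A B g h : Polynomial L) (hA : A = B ^ 2)
    (hA0 : A ≠ 0) (hd : (EuclideanDomain.gcd A g).natDegree = 1) :
    (EuclideanDomain.gcd (A ^ 2) (A * h + g)).natDegree = 1 := by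
  set d := EuclideanDomain.gcd A g with hdd
  have hdA : d ∣ A := EuclideanDomain.gcd_dvd_left _ _
  have hdg : d ∣ g := EuclideanDomain.gcd_dvd_right _ _
  set D := EuclideanDomain.gcd (A ^ 2) (A * h + g) with hDD
  have hDA : D ∣ A ^ 2 := EuclideanDomain.gcd_dvd_left _ _
  have hDg : D ∣ A * h + g := EuclideanDomain.gcd_dvd_right _ _
  have hdD : d ∣ D := EuclideanDomain.dvd_gcd (hdA.trans (dvd_pow_self A two_ne_zero))
    (dvd_add (hdA.mul_right h) hdg)
  have hd0 : d ≠ 0 := by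
    intro h0; rw [h0] at hd; simp at hd
  have hirr : Irreducible d := by
    apply Polynomial.irreducible_of_degree_eq_one
    rw [Polynomial.degree_eq_natDegree hd0, hd]; rfl
  have hdp : Prime d := hirr.prime
  have hD0 : D ≠ 0 := by
    intro h0; rw [h0, zero_dvd_iff] at hDA; exact hA0 (pow_eq_zero_iff two_ne_zero |>.1 hDA)
  obtain ⟨E, hE⟩ := hdD
  have hE0 : E ≠ 0 := by rintro rfl; exact hD0 (by simpa using hE)
  have hEu : IsUnit E := by
    by_contra hnu
    obtain ⟨p, hp, hpE⟩ := WfDvdMonoid.exists_irreducible_factor hnu hE0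
    have hpD : p ∣ D := hE ▸ hpE.mul_left d
    have hpA : p ∣ A := hp.prime.dvd_of_dvd_pow (hpD.trans hDA)
    have hpg : p ∣ g := (dvd_add_right (hpA.mul_right h)).1 (hpD.trans hDg)
    have hpd : p ∣ d := EuclideanDomain.dvd_gcd hpA hpg
    have hdp' : d ∣ p := (hp.associated_of_dvd hirr hpd).dvd'
    have hddD : d * d ∣ D := by rw [hE]; exact mul_dvd_mul_left d (hdp'.trans hpE)
    have hdB : d ∣ B := hdp.dvd_of_dvd_pow (hA ▸ hdA)
    have hddA : d * d ∣ A := by rw [hA, sq]; exact mul_dvd_mul hdB hdB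
    have hddg : d * d ∣ g := (dvd_add_right (hddA.mul_right h)).1 (hddD.trans hDg)
    have hddd : d * d ∣ d := EuclideanDomain.dvd_gcd hddA hddg
    have := Polynomial.natDegree_le_of_dvd hddd hd0
    rw [Polynomial.natDegree_mul hd0 hd0] at this
    omega
  rw [hE, Polynomial.natDegree_mul hd0 hE0, hd, Polynomial.natDegree_eq_zero_of_isUnit hEu]

open Polynomial in
lemma stepPoly_split {K : Type*} [Field K] (δ : K) (N : ℕ) (hN : 0 < N) (P : K[X])
    (hP : P.Monic) (hdeg : P.natDegree = N) :
    (stepPoly δ N P).natDegree = 2 * N ∧ (stepPoly δ N P).Monic ∧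
    (stepPoly δ N P).coeff 0 = δ ^ (2 * N) ∧
    (stepPoly δ N P).coeff 1 = P.coeff (N - 1) * δ ^ (2 * (N - 1)) ∧
    (stepPoly δ N P).coeff (2 * N - 1) = P.coeff (N - 1) := by
  have hc : P.coeff N = 1 := by rw [← hdeg]; exact hP
  have key : ∀ i : ℕ, ((X : K[X]) ^ 2 + C (δ ^ 2)) ^ i = expand K 2 ((X + C (δ ^ 2)) ^ i) := by
    intro i; simp
  have hq : ∀ i : ℕ, (((X : K[X]) ^ 2 + C (δ ^ 2)) ^ i).natDegree = 2 * i := by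
    intro i; rw [natDegree_pow, natDegree_X_pow_add_C]; ring
  have hm : ∀ i : ℕ, (((X : K[X]) ^ 2 + C (δ ^ 2)) ^ i).Monic := by
    intro i; exact (monic_X_pow_add_C _ two_ne_zero).pow i
  have htd : ∀ i, i ≤ N → (C (P.coeff i) * X ^ (N - i) *
      ((X : K[X]) ^ 2 + C (δ ^ 2)) ^ i).natDegree ≤ N + i := by
    intro i hi
    refine natDegree_mul_le.trans ?_
    rw [hq]
    have := natDegree_C_mul_X_pow_le (P.coeff i) (N - i)
    omega
  have odd : ∀ i j : ℕ, ¬ 2 ∣ j → (((X : K[X]) ^ 2 + C (δ ^ 2)) ^ i).coeff j = 0 := by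
    intro i j hj
    rw [key, coeff_expand two_pos, if_neg hj]
  have c2N : (stepPoly δ N P).coeff (2 * N) = 1 := by
    rw [stepPoly, finsetSum_coeff, Finset.sum_range_succ, Finset.sum_eq_zero]
    · have := (hm N).coeff_natDegree
      rw [hq] at this
      rw [hc, Nat.sub_self, pow_zero, mul_one, C_1, one_mul, this, zero_add]
    · intro i hi
      rw [Finset.mem_range] at hi
      exact coeff_eq_zero_of_natDegree_lt (by have := htd i hi.le; omega)
  have hle : (stepPoly δ N P).natDegree ≤ 2 * N := by
    rw [stepPoly]
    refine natDegree_sum_le_of_forall_le _ _ ?_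
    intro i hi
    rw [Finset.mem_range] at hi
    have := htd i (by omega); omega
  have hnd : (stepPoly δ N P).natDegree = 2 * N :=
    natDegree_eq_of_le_of_coeff_ne_zero hle (by rw [c2N]; exact one_ne_zero)
  refine ⟨hnd, ?_, ?_, ?_, ?_⟩
  · rw [Monic, leadingCoeff, hnd, c2N]
  · rw [coeff_zero_eq_eval_zero, stepPoly, eval_finsetSum, Finset.sum_range_succ,
      Finset.sum_eq_zero]
    · simp [hc, pow_mul]
    · intro i hi
      rw [Finset.mem_range] at hi
      have : N - i ≠ 0 := by omega
      simp [this]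
  · obtain ⟨k, rfl⟩ : ∃ k, N = k + 1 := ⟨N - 1, by omega⟩
    rw [stepPoly, finsetSum_coeff, Finset.sum_range_succ, Finset.sum_range_succ,
      Finset.sum_eq_zero]
    · have h1 := odd (k + 1) 1 (by norm_num)
      have h2 : (((X : K[X]) ^ 2 + C (δ ^ 2)) ^ k).coeff 0 = δ ^ (2 * k) := by
        rw [coeff_zero_eq_eval_zero]; simp [pow_mul]
      have h3 : k + 1 - k = 1 := by omega
      rw [h3, mul_assoc, mul_assoc, coeff_C_mul, coeff_C_mul, pow_one, coeff_X_mul, h2]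
      simp only [Nat.sub_self, pow_zero, one_mul]
      rw [h1]; simp
    · intro i hi
      rw [Finset.mem_range] at hi
      rw [mul_assoc, coeff_C_mul, coeff_X_pow_mul', if_neg (by omega), mul_zero]
  · obtain ⟨k, rfl⟩ : ∃ k, N = k + 1 := ⟨N - 1, by omega⟩
    rw [stepPoly, finsetSum_coeff, Finset.sum_range_succ, Finset.sum_range_succ,
      Finset.sum_eq_zero]
    · have h1 := odd (k + 1) (2 * (k + 1) - 1) (by omega)
      have h2 : (((X : K[X]) ^ 2 + C (δ ^ 2)) ^ k).coeff (2 * k) = 1 := by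
        have := (hm k).coeff_natDegree
        rwa [hq] at this
      have h3 : k + 1 - k = 1 := by omega
      rw [mul_assoc, mul_assoc, coeff_C_mul, coeff_C_mul, h3, pow_one]
      simp only [Nat.sub_self, pow_zero, one_mul]
      rw [h1, show 2 * (k + 1) - 1 = 2 * k + 1 by omega, coeff_X_mul, h2]; simp
    · intro i hi
      rw [Finset.mem_range] at hi
      exact coeff_eq_zero_of_natDegree_lt (by have := htd i (by omega); omega)

open Polynomial in
lemma aeval_stepPoly {K L : Type*} [Field K] [Field L] [Algebra K L] (δ : K) (N : ℕ) (P : K[X])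
    (hdeg : P.natDegree = N) (γ : L) (hγ : γ ≠ 0) :
    aeval γ (stepPoly δ N P) = γ ^ N * aeval (γ + (algebraMap K L δ) ^ 2 / γ) P := by
  rw [aeval_eq_sum_range (p := P), hdeg, stepPoly, map_sum, Finset.mul_sum]
  refine Finset.sum_congr rfl fun i hi => ?_
  have hi : i ≤ N := by rw [Finset.mem_range] at hi; omega
  have h1 : γ ^ N = γ ^ (N - i) * γ ^ i := by rw [← pow_add]; congr 1; omega
  have h2 : γ ^ 2 + (algebraMap K L δ) ^ 2 = γ * (γ + (algebraMap K L δ) ^ 2 / γ) := by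
    field_simp
  simp only [map_mul, map_pow, map_add, aeval_C, aeval_X]
  rw [h1, h2, mul_pow, Algebra.smul_def]
  ring

open IntermediateField in
lemma pow_card_pow_deg {K L : Type*} [Field K] [Fintype K] [Field L] [Algebra K L] (α : L)
    (hα : IsIntegral K α) : α ^ (Fintype.card K) ^ (minpoly K α).natDegree = α := by
  have : FiniteDimensional K K⟮α⟯ := adjoin.finiteDimensional hα
  have : Finite K⟮α⟯ := Module.finite_of_finite K
  let _ := Fintype.ofFinite K⟮α⟯
  have h := FiniteField.pow_card (AdjoinSimple.gen K α)
  rw [Module.card_eq_pow_finrank (K := K), adjoin.finrank hα] at h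
  have := congrArg (algebraMap K⟮α⟯ L) h
  simpa using this

open IntermediateField Polynomial in
lemma trace_inv {K L : Type*} [Field K] [Fintype K] [Field L] [Algebra K L] (P : K[X])
    (hP : P.Monic) (hirr : Irreducible P) (N : ℕ) (hdeg : P.natDegree = N) (h0 : P.coeff 0 ≠ 0)
    (α : L) (hα : aeval α P = 0) :
    ∑ i ∈ Finset.range N, (α⁻¹) ^ (Fintype.card K) ^ i
      = - algebraMap K L (P.coeff 1 / P.coeff 0) := by
  have hint : IsIntegral K α := ⟨P, hP, hα⟩
  have hmin : minpoly K α = P := (minpoly.eq_of_irreducible_of_monic hirr hα hP).symm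
  have hα0 : α ≠ 0 := by
    rintro rfl
    apply h0
    have : algebraMap K L (P.coeff 0) = 0 := by
      rw [coeff_zero_eq_aeval_zero' (A := L) P]; exact hα
    simpa using this
  have hintb : IsIntegral K α⁻¹ := hint.inv
  have hadj : K⟮α⁻¹⟯ = K⟮α⟯ := by
    apply le_antisymm
    · rw [adjoin_simple_le_iff]; exact inv_mem (mem_adjoin_simple_self K α)
    · rw [adjoin_simple_le_iff]
      have := inv_mem (mem_adjoin_simple_self K α⁻¹)
      rwa [inv_inv] at this
  have hdb : (minpoly K α⁻¹).natDegree = N := by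
    rw [← adjoin.finrank hintb, hadj, adjoin.finrank hint, hmin, hdeg]
  have hNpos : 0 < N := hdeg ▸ hirr.natDegree_pos
  have hrd : P.reverse.natDegree = N := by
    rw [reverse_natDegree, natTrailingDegree_eq_zero.2 (Or.inr h0), hdeg]; rfl
  have hrl : P.reverse.leadingCoeff = P.coeff 0 := by
    rw [reverse_leadingCoeff, trailingCoeff, natTrailingDegree_eq_zero.2 (Or.inr h0)]
  have hRm : (C (P.coeff 0)⁻¹ * P.reverse).Monic := by
    rw [Monic, leadingCoeff_mul, hrl, leadingCoeff_C, inv_mul_cancel₀ h0]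
  have hRd : (C (P.coeff 0)⁻¹ * P.reverse).natDegree = N := by
    rw [natDegree_C_mul (inv_ne_zero h0), hrd]
  have hRz : aeval α⁻¹ (C (P.coeff 0)⁻¹ * P.reverse) = 0 := by
    rw [map_mul]
    let _ := invertibleOfNonzero hα0
    have := (eval₂_reverse_eq_zero_iff (algebraMap K L) α P).2 (by rwa [aeval_def] at hα)
    rw [invOf_eq_inv] at this
    rw [aeval_def α⁻¹ P.reverse, this, mul_zero]
  have hR : minpoly K α⁻¹ = C (P.coeff 0)⁻¹ * P.reverse :=
    (eq_of_monic_of_dvd_of_natDegree_le (minpoly.monic hintb) hRm (minpoly.dvd K _ hRz)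
      (by rw [hRd, hdb])).symm
  have hnext : (minpoly K α⁻¹).nextCoeff = P.coeff 1 / P.coeff 0 := by
    rw [nextCoeff_of_natDegree_pos (by omega), hdb, hR, coeff_C_mul, coeff_reverse, hdeg,
      revAt_le (by omega), show N - (N - 1) = 1 by omega]
    field_simp
  have : FiniteDimensional K K⟮α⁻¹⟯ := adjoin.finiteDimensional hintb
  have : Finite K⟮α⁻¹⟯ := Module.finite_of_finite K
  have h := FiniteField.algebraMap_trace_eq_sum_pow K K⟮α⁻¹⟯ (AdjoinSimple.gen K α⁻¹)
  rw [trace_adjoinSimpleGen hintb, adjoin.finrank hintb, hdb, hnext, Nat.card_eq_fintype_card] at h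
  have h' := congrArg (algebraMap K⟮α⁻¹⟯ L) h
  rw [map_sum] at h'
  simp only [map_pow, AdjoinSimple.algebraMap_gen, ← IsScalarTower.algebraMap_apply] at h'
  rw [← h', map_neg]

lemma sum_telescope {L : Type*} [Field L] [CharP L 2] (t : L) (k : ℕ) :
    ∑ i ∈ Finset.range k, (t ^ 2 + t) ^ 2 ^ i = t ^ 2 ^ k + t := by
  induction k with
  | zero => simp [CharTwo.add_self_eq_zero]
  | succ k ih =>
    rw [Finset.sum_range_succ, ih, add_pow_char_pow, ← pow_mul, pow_succ' 2 k]
    linear_combination CharTwo.add_self_eq_zero (t ^ 2 ^ k)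

lemma sum_tower {L : Type*} [Field L] [CharP L 2] (s : L) (m N : ℕ) :
    ∑ i ∈ Finset.range (m * N), s ^ 2 ^ i =
      ∑ j ∈ Finset.range m, (∑ i ∈ Finset.range N, s ^ (2 ^ m) ^ i) ^ 2 ^ j := by
  induction N with
  | zero => simp
  | succ N ih =>
    rw [Nat.mul_succ, Finset.sum_range_add, ih, ← Finset.sum_add_distrib]
    refine Finset.sum_congr rfl fun j _ => ?_
    rw [Finset.sum_range_succ, add_pow_char_pow, ← pow_mul, pow_add, pow_mul 2 m N]

open Polynomial in
lemma not_fixed {K L : Type*} [Field K] [Fintype K] [Field L] [Algebra K L] [CharP L 2]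
    (m : ℕ) (hcard : Fintype.card K = 2 ^ m) (δ : K) (P : K[X])
    (hP : P.Monic) (hirr : Irreducible P) (N : ℕ) (hdeg : P.natDegree = N)
    (htr : ∑ i ∈ Finset.range m, (P.coeff 1 * δ / P.coeff 0) ^ 2 ^ i = 1)
    (h0 : P.coeff 0 ≠ 0)
    (γ : L) (hγ : γ ≠ 0) (hα : aeval (γ + (algebraMap K L δ) ^ 2 / γ) P = 0) :
    γ ^ (Fintype.card K) ^ N ≠ γ := by
  intro hfix
  set d := algebraMap K L δ with hd
  set α := γ + d ^ 2 / γ with hαdef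
  have hint : IsIntegral K α := ⟨P, hP, hα⟩
  have hmin : minpoly K α = P := (minpoly.eq_of_irreducible_of_monic hirr hα hP).symm
  have hα0 : α ≠ 0 := by
    intro hz
    rw [hz] at hα
    apply h0
    have : algebraMap K L (P.coeff 0) = 0 := by
      rw [coeff_zero_eq_aeval_zero' (A := L) P]; exact hα
    simpa using this
  have hαfix : α ^ (Fintype.card K) ^ N = α := by
    have := pow_card_pow_deg α hint
    rwa [hmin, hdeg] at this
  have hαγ : α * γ = γ ^ 2 + d ^ 2 := by rw [hαdef]; field_simp
  have ht : (γ / α) ^ 2 + γ / α = (d / α) ^ 2 := by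
    field_simp
    linear_combination hαγ + CharTwo.add_self_eq_zero (γ ^ 2)
  have h1 := sum_telescope (γ / α) (m * N)
  have h2 : (γ / α) ^ 2 ^ (m * N) = γ / α := by
    rw [pow_mul, ← hcard, div_pow, hfix, hαfix]
  rw [h2, CharTwo.add_self_eq_zero, ht] at h1
  have h3 : ∑ i ∈ Finset.range N, (d / α) ^ (2 ^ m) ^ i
      = algebraMap K L (P.coeff 1 * δ / P.coeff 0) := by
    have := trace_inv P hP hirr N hdeg h0 α hα
    rw [CharTwo.neg_eq] at this
    rw [mul_div_right_comm, map_mul, ← this, Finset.sum_mul]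
    refine Finset.sum_congr rfl fun i _ => ?_
    rw [← hcard, div_eq_mul_inv, mul_pow, mul_comm, ← hd]
    congr 1
    rw [hd, ← map_pow, FiniteField.pow_card_pow]
  have h4 := sum_tower (d / α) m N
  rw [h3] at h4
  simp only [← map_pow] at h4
  rw [← map_sum, htr, map_one] at h4
  have h5 : ∑ i ∈ Finset.range (m * N), ((d / α) ^ 2) ^ 2 ^ i
      = (∑ i ∈ Finset.range (m * N), (d / α) ^ 2 ^ i) ^ 2 := by
    rw [sum_pow_char 2]
    refine Finset.sum_congr rfl fun i _ => ?_
    rw [← pow_mul, ← pow_mul, mul_comm]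
  rw [h5, h4] at h1
  simp at h1

open Polynomial IntermediateField in
lemma step_main (K : Type*) [Field K] [Fintype K] (m : ℕ) (hm : 0 < m)
    (hcard : Fintype.card K = 2 ^ m) (δ : K) (hδ : δ ≠ 0) (N : ℕ) (hN : 0 < N)
    (heven : Even N) (P : K[X]) (h : IsN1Poly K N P)
    (htr : ∑ i ∈ Finset.range m, (P.coeff 1 * δ / P.coeff 0) ^ 2 ^ i = 1) :
    IsN1Poly K (2 * N) (stepPoly δ N P) := by
  obtain ⟨hP, hirr, hdeg, hn1⟩ := h
  obtain ⟨sdeg, smon, s0, -, -⟩ := stepPoly_split δ N hN P hP hdeg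
  have hK2 : CharP K 2 := by
    have : Fact (Nat.Prime 2) := ⟨Nat.prime_two⟩
    exact charP_of_card_eq_prime_pow hcard
  have hL2 : CharP (AlgebraicClosure K) 2 := charP_of_injective_algebraMap
    (algebraMap K (AlgebraicClosure K)).injective 2
  have h0 : P.coeff 0 ≠ 0 := by
    intro hz
    rw [hz] at htr
    simp at htr
  -- basic facts on roots
  have hroot0 : ∀ γ : AlgebraicClosure K, aeval γ (stepPoly δ N P) = 0 → γ ≠ 0 := by
    rintro γ hγ rfl
    rw [← coeff_zero_eq_aeval_zero' (A := AlgebraicClosure K), s0] at hγ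
    simp [hδ] at hγ
  have hrootα : ∀ γ : AlgebraicClosure K, aeval γ (stepPoly δ N P) = 0 →
      aeval (γ + (algebraMap K (AlgebraicClosure K) δ) ^ 2 / γ) P = 0 := by
    intro γ hγ
    have hz := hroot0 γ hγ
    rw [aeval_stepPoly δ N P hdeg γ hz] at hγ
    exact (mul_eq_zero.1 hγ).resolve_left (pow_ne_zero _ hz)
  have hnf : ∀ γ : AlgebraicClosure K, aeval γ (stepPoly δ N P) = 0 →
      γ ^ (Fintype.card K) ^ N ≠ γ := fun γ hγ =>
    not_fixed m hcard δ P hP hirr N hdeg htr h0 γ (hroot0 γ hγ) (hrootα γ hγ)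
  refine ⟨smon, ?_, sdeg, ?_⟩
  · obtain ⟨γ, hγ⟩ := IsAlgClosed.exists_aeval_eq_zero (AlgebraicClosure K) (stepPoly δ N P)
      (by rw [degree_eq_natDegree smon.ne_zero, sdeg]; norm_cast; omega)
    have hγi : IsIntegral K γ := ⟨_, smon, hγ⟩
    set α := γ + (algebraMap K (AlgebraicClosure K) δ) ^ 2 / γ with hαdef
    have hα : aeval α P = 0 := hrootα γ hγ
    have hint : IsIntegral K α := ⟨P, hP, hα⟩
    have hmin : minpoly K α = P := (minpoly.eq_of_irreducible_of_monic hirr hα hP).symm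
    have hdvd : minpoly K γ ∣ stepPoly δ N P := minpoly.dvd K _ hγ
    have hle : (minpoly K γ).natDegree ≤ 2 * N := by
      rw [← sdeg]; exact natDegree_le_of_dvd hdvd smon.ne_zero
    have hpos : 0 < (minpoly K γ).natDegree := minpoly.natDegree_pos hγi
    have hαmem : α ∈ K⟮γ⟯ := by
      have hg := mem_adjoin_simple_self K γ
      exact add_mem hg (div_mem (pow_mem (IntermediateField.algebraMap_mem _ δ) 2) hg)
    have hND : N ∣ (minpoly K γ).natDegree := by
      have := finrank_dvd_of_le_right (adjoin_simple_le_iff.2 hαmem)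
      rwa [adjoin.finrank hint, adjoin.finrank hγi, hmin, hdeg] at this
    have hne : (minpoly K γ).natDegree ≠ N := by
      intro he
      apply hnf γ hγ
      have := pow_card_pow_deg γ hγi
      rwa [he] at this
    have heq : (minpoly K γ).natDegree = 2 * N := by
      obtain ⟨c, hc⟩ := hND
      rw [hc] at hle hpos hne ⊢
      have hc2 : c ≤ 2 := by
        by_contra hcc
        push Not at hcc
        nlinarith
      interval_cases c <;> omega
    have : stepPoly δ N P = minpoly K γ :=
      eq_of_monic_of_dvd_of_natDegree_le (minpoly.monic hγi) smon hdvd (by rw [sdeg, heq])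
    rw [this]
    exact minpoly.irreducible hγi
  · intro γ hγ
    have hγ0 := hroot0 γ hγ
    set d := algebraMap K (AlgebraicClosure K) δ with hd
    set α := γ + d ^ 2 / γ with hαdef
    have hα : aeval α P = 0 := hrootα γ hγ
    have hint : IsIntegral K α := ⟨P, hP, hα⟩
    have hmin : minpoly K α = P := (minpoly.eq_of_irreducible_of_monic hirr hα hP).symm
    have hαfix : α ^ (Fintype.card K) ^ N = α := by
      have := pow_card_pow_deg α hint
      rwa [hmin, hdeg] at this
    have hαγ : γ ^ 2 + α * γ + d ^ 2 = 0 := by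
      have : α * γ = γ ^ 2 + d ^ 2 := by rw [hαdef]; field_simp
      linear_combination this + CharTwo.add_self_eq_zero (γ ^ 2 + d ^ 2)
    have hQ : (Fintype.card K) ^ N = 2 ^ (m * N) := by rw [hcard, pow_mul]
    have hconj : (γ ^ (Fintype.card K) ^ N) ^ 2 + α * γ ^ (Fintype.card K) ^ N + d ^ 2 = 0 := by
      have h1 : (γ ^ 2 + α * γ + d ^ 2) ^ (Fintype.card K) ^ N = 0 := by
        rw [hαγ, zero_pow]; rw [hQ]; positivity
      have hdfix : d ^ (Fintype.card K) ^ N = d := by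
        rw [hd, ← map_pow, FiniteField.pow_card_pow]
      rw [hQ, add_pow_char_pow, add_pow_char_pow, ← hQ, mul_pow, hαfix, ← pow_mul, mul_comm 2,
        pow_mul, ← pow_mul d, mul_comm 2, pow_mul d, hdfix] at h1
      exact h1
    have hsum : γ ^ (Fintype.card K) ^ N = α + γ := by
      have h1 : (γ ^ (Fintype.card K) ^ N - γ) * (γ ^ (Fintype.card K) ^ N + γ + α) = 0 := by
        linear_combination hconj - hαγ
      have h2 := (mul_eq_zero.1 h1).resolve_left (sub_ne_zero.2 (hnf γ hγ))
      rw [← sub_eq_zero, CharTwo.sub_eq_add]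
      linear_combination h2
    have hg := hn1 α hα
    obtain ⟨k, hk⟩ := heven
    let _ := Classical.decEq (AlgebraicClosure K)
    have hX2 : CharP (AlgebraicClosure K)[X] 2 := inferInstance
    have hsq : ∀ j : ℕ, (X : (AlgebraicClosure K)[X]) ^ (2 * j) - 1 = (X ^ j - 1) ^ 2 := by
      intro j
      rw [sub_pow_char, one_pow, ← pow_mul, mul_comm]
    have hA0 : (X : (AlgebraicClosure K)[X]) ^ N - 1 ≠ 0 := by
      have := (monic_X_pow_sub_C (1 : AlgebraicClosure K) hN.ne').ne_zero
      simpa using this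
    have key := gcd_step _ (X ^ k - 1) _
      (∑ i ∈ Finset.range N, C (γ ^ (Fintype.card K) ^ i) * X ^ (N - 1 - i))
      (by rw [← hsq k, hk, two_mul]) hA0 hg
    convert key using 3
    · exact hsq N
    · rw [two_mul, Finset.sum_range_add, Finset.mul_sum, ← Finset.sum_add_distrib,
        ← Finset.sum_add_distrib]
      refine Finset.sum_congr rfl fun i hi => ?_
      rw [Finset.mem_range] at hi
      have e1 : N + N - 1 - i = N + (N - 1 - i) := by omega
      have e2 : N + N - 1 - (N + i) = N - 1 - i := by omega
      have e3 : γ ^ (Fintype.card K) ^ (N + i)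
          = α ^ (Fintype.card K) ^ i + γ ^ (Fintype.card K) ^ i := by
        rw [pow_add, pow_mul, hsum, hcard, ← pow_mul, add_pow_char_pow]
      rw [e1, e2, e3, C_add, pow_add]
      linear_combination CharTwo.add_self_eq_zero
        (C (γ ^ (Fintype.card K) ^ i) * (X : (AlgebraicClosure K)[X]) ^ (N - 1 - i))

/-- let `δ ∈ F_{2^m}*`, `n` an even positive integer, and
`F₁(x) = Σ_{i=0}^n c_i x^i` an `N₁`-polynomial of degree `n` over `F_{2^m}` with
`Tr_{2^m|2}(c₁δ/c₀) = 1` and `Tr_{2^m|2}(c_{n-1}/δ) = 1`.  Define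
`F_{u+1}(x) = x^{n·2^{u-1}} F_u(x + δ² x⁻¹)` for `u ≥ 1`.  Then for every `u ≥ 1`,
`F_u` is an `N₁`-polynomial of degree `2^{u-1} n` over `F_{2^m}`. -/
theorem one_normal_polynomial_sequence
    (K : Type*) [Field K] [Fintype K] (m : ℕ) (hm : 0 < m)
    (hcard : Fintype.card K = 2 ^ m)
    (δ : K) (hδ : δ ≠ 0) (n : ℕ) (hn : 0 < n) (hneven : Even n)
    (Fseq : ℕ → Polynomial K)
    (hF1 : IsN1Poly K n (Fseq 1))
    (htr1 : ∑ i ∈ Finset.range m, ((Fseq 1).coeff 1 * δ / (Fseq 1).coeff 0) ^ 2 ^ i = 1)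
    (htr2 : ∑ i ∈ Finset.range m, ((Fseq 1).coeff (n - 1) / δ) ^ 2 ^ i = 1)
    (hrec : ∀ u : ℕ, 1 ≤ u → Fseq (u + 1) = stepPoly δ (n * 2 ^ (u - 1)) (Fseq u)) :
    ∀ u : ℕ, 1 ≤ u → IsN1Poly K (2 ^ (u - 1) * n) (Fseq u) := by
  have main : ∀ v : ℕ, IsN1Poly K (n * 2 ^ v) (Fseq (v + 1)) ∧
      ∑ i ∈ Finset.range m,
        ((Fseq (v + 1)).coeff 1 * δ / (Fseq (v + 1)).coeff 0) ^ 2 ^ i = 1 ∧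
      ∑ i ∈ Finset.range m, ((Fseq (v + 1)).coeff (n * 2 ^ v - 1) / δ) ^ 2 ^ i = 1 := by
    intro v
    induction v with
    | zero => simpa using ⟨hF1, htr1, htr2⟩
    | succ v ih =>
      obtain ⟨h1, h2, h3⟩ := ih
      have hN : 0 < n * 2 ^ v := by positivity
      have hr := hrec (v + 1) (by omega)
      rw [Nat.add_sub_cancel] at hr
      have e : n * 2 ^ (v + 1) = 2 * (n * 2 ^ v) := by ring
      rw [e, hr]
      obtain ⟨-, -, s0, s1, s2⟩ := stepPoly_split δ (n * 2 ^ v) hN _ h1.1 h1.2.2.1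
      refine ⟨step_main K m hm hcard δ hδ _ hN (hneven.mul_right _) _ h1 h2, ?_, ?_⟩
      · rw [s0, s1]
        convert h3 using 3
        obtain ⟨k, hk⟩ : ∃ k, n * 2 ^ v = k + 1 := ⟨n * 2 ^ v - 1, by omega⟩
        rw [hk, Nat.add_sub_cancel]
        field_simp
        ring
      · rw [s2]; exact h3
  intro u hu
  obtain ⟨v, rfl⟩ : ∃ v, u = v + 1 := ⟨u - 1, by omega⟩
  have := (main v).1
  rwa [Nat.add_sub_cancel, mul_comm]
end
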